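/- arXiv:2108.13569 — 3 statements merged into one kernel-verified Lean document; each statement's English description precedes it below -/
import Mathlib

section
/- Let P ⊆ ℝ^d be a polytope with nonempty interior, d ≥ 2, whose facets are colored with colors {1,…,m} where 2 ≤ m ≤ d. Suppose that for every nonempty proper subset I ⊊ {1,…,m} of colors, the set of facets whose color lies in I is either visible or covisible. Then the set of rainbow points of the boundary of P is homeomorphic to the sphere S^{d−m}. -/
open scoped InnerProductSpace

/-- `F` is a facet of the polytope `P ⊆ ℝ^d`: a nonempty intersection of `P` with a
supporting hyperplane whose affine span has dimension `d - 1`. -/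
def IsFacet {d : ℕ} (P F : Set (EuclideanSpace ℝ (Fin d))) : Prop :=
  F.Nonempty ∧ ∃ (u : EuclideanSpace ℝ (Fin d)) (α : ℝ), u ≠ 0 ∧
    (∀ x ∈ P, ⟪u, x⟫_ℝ ≤ α) ∧ F = P ∩ {x | ⟪u, x⟫_ℝ = α} ∧
    Module.finrank ℝ (vectorSpan ℝ F) = d - 1

/-- `q ∈ P` is visible from `p` if the segment from `q` to `p` meets `P` only at `q`. -/
def VisiblePoint {d : ℕ} (P : Set (EuclideanSpace ℝ (Fin d)))
    (q p : EuclideanSpace ℝ (Fin d)) : Prop :=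
  P ∩ segment ℝ q p = {q}

/-- A facet `F` is visible from `p` if every point of its relative interior is visible. -/
def FacetVisibleFrom {d : ℕ} (P F : Set (EuclideanSpace ℝ (Fin d)))
    (p : EuclideanSpace ℝ (Fin d)) : Prop :=
  ∀ q ∈ intrinsicInterior ℝ F, VisiblePoint P q p

/-- A nonempty set `𝔉` of facets of `P` is visible if some point `p ∉ P` sees exactly the
facets belonging to `𝔉`. -/
def VisibleFacetSet {d : ℕ} (P : Set (EuclideanSpace ℝ (Fin d)))
    (𝔉 : Set (Set (EuclideanSpace ℝ (Fin d)))) : Prop :=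
  𝔉.Nonempty ∧ ∃ p, p ∉ P ∧ ∀ F, IsFacet P F → (FacetVisibleFrom P F p ↔ F ∈ 𝔉)

/-- A set of facets is covisible if the complementary set of facets is visible. -/
def CovisibleFacetSet {d : ℕ} (P : Set (EuclideanSpace ℝ (Fin d)))
    (𝔉 : Set (Set (EuclideanSpace ℝ (Fin d)))) : Prop :=
  VisibleFacetSet P {F | IsFacet P F ∧ F ∉ 𝔉}


open scoped InnerProductSpace

namespace RainbowAux

section basic
variable {E : Type} [NormedAddCommGroup E] [NormedSpace ℝ E]

/-- support function of a finite set of functionals -/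
noncomputable def hf (A : Finset (E →L[ℝ] ℝ)) (x : E) : ℝ :=
  sSup ((fun u : E →L[ℝ] ℝ => u x) '' (A : Set (E →L[ℝ] ℝ)))

theorem hf_le {A : Finset (E →L[ℝ] ℝ)} {u : E →L[ℝ] ℝ} (hu : u ∈ A) (x : E) : u x ≤ hf A x :=
  le_csSup ((A.finite_toSet.image _).bddAbove) ⟨u, hu, rfl⟩

theorem hf_exists {A : Finset (E →L[ℝ] ℝ)} (hA : A.Nonempty) (x : E) :
    ∃ u ∈ A, hf A x = u x := by
  have := Set.Nonempty.csSup_mem (s := (fun u : E →L[ℝ] ℝ => u x) '' (A : Set (E →L[ℝ] ℝ)))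
    (hA.to_set.image _) (A.finite_toSet.image _)
  obtain ⟨u, hu, h⟩ := this
  exact ⟨u, hu, h.symm⟩

theorem hf_eq_of {A : Finset (E →L[ℝ] ℝ)} {u : E →L[ℝ] ℝ} (hu : u ∈ A) (x : E)
    (h : ∀ v ∈ A, v x ≤ u x) : hf A x = u x := by
  obtain ⟨v, hv, e⟩ := hf_exists ⟨u, hu⟩ x
  exact le_antisymm (e ▸ h v hv) (hf_le hu x)

theorem hf_smul {A : Finset (E →L[ℝ] ℝ)} (hA : A.Nonempty) {r : ℝ} (hr : 0 < r) (x : E) :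
    hf A (r • x) = r * hf A x := by
  obtain ⟨u, hu, e⟩ := hf_exists hA x
  rw [e, hf_eq_of hu]
  · simp
  · intro v hv
    have := hf_le hv x
    rw [e] at this
    simpa using mul_le_mul_of_nonneg_left this hr.le

theorem hf_lip {A : Finset (E →L[ℝ] ℝ)} (hA : A.Nonempty) :
    ∃ K : ℝ, 0 ≤ K ∧ ∀ x y, |hf A x - hf A y| ≤ K * ‖x - y‖ := by
  refine ⟨∑ u ∈ A, ‖u‖, Finset.sum_nonneg (fun _ _ => norm_nonneg _), ?_⟩
  have key : ∀ x y, hf A x - hf A y ≤ (∑ u ∈ A, ‖u‖) * ‖x - y‖ := by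
    intro x y
    obtain ⟨u, hu, e⟩ := hf_exists hA x
    have h1 := hf_le hu y
    have h2 : u x - u y ≤ ‖u‖ * ‖x - y‖ := by
      rw [← map_sub]
      exact (le_abs_self _).trans (u.le_opNorm _)
    have h3 : ‖u‖ ≤ ∑ u ∈ A, ‖u‖ := Finset.single_le_sum (f := fun u : E →L[ℝ] ℝ => ‖u‖)
      (fun _ _ => norm_nonneg _) hu
    have h4 := mul_le_mul_of_nonneg_right h3 (norm_nonneg (x - y))
    linarith
  intro x y
  rw [abs_le]
  have h1 := key x y
  have h2 := key y x
  rw [norm_sub_rev] at h2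
  constructor <;> linarith

theorem hf_continuous {A : Finset (E →L[ℝ] ℝ)} (hA : A.Nonempty) : Continuous (hf A) := by
  obtain ⟨K, hK, h⟩ := hf_lip hA
  have : LipschitzWith ⟨K, hK⟩ (hf A) := by
    apply LipschitzWith.of_dist_le_mul
    intro x y
    rw [Real.dist_eq, dist_eq_norm]
    exact h x y
  exact this.continuous

theorem hf_singleton (a : E →L[ℝ] ℝ) : hf {a} = a := by
  funext x
  simp [hf]

open Classical in
/-- active functionals at `x0` -/
noncomputable def act (A : Finset (E →L[ℝ] ℝ)) (x0 : E) : Finset (E →L[ℝ] ℝ) :=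
  A.filter (fun u => u x0 = hf A x0)

theorem mem_act {A : Finset (E →L[ℝ] ℝ)} {x0 : E} {u : E →L[ℝ] ℝ} :
    u ∈ act A x0 ↔ u ∈ A ∧ u x0 = hf A x0 := by
  classical
  simp [act]

theorem act_nonempty {A : Finset (E →L[ℝ] ℝ)} (hA : A.Nonempty) (x0 : E) :
    (act A x0).Nonempty := by
  obtain ⟨u, hu, e⟩ := hf_exists hA x0
  exact ⟨u, mem_act.2 ⟨hu, e.symm⟩⟩

theorem hf_local {A : Finset (E →L[ℝ] ℝ)} (hA : A.Nonempty) (x0 : E) :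
    ∃ r > 0, ∀ x, ‖x - x0‖ < r → hf A x = hf (act A x0) x := by
  have h1 : ∀ᶠ x in nhds x0, ∀ u ∈ A, u ∉ act A x0 → u x < hf A x := by
    rw [Filter.eventually_all_finset]
    intro u hu
    by_cases hua : u ∈ act A x0
    · simp [hua]
    · have : u x0 < hf A x0 := lt_of_le_of_ne (hf_le hu x0) (fun h => hua (mem_act.2 ⟨hu, h⟩))
      filter_upwards [(u.continuous.continuousAt).eventually_lt
        (hf_continuous hA).continuousAt this] with x hx _ using hx
  obtain ⟨r, hr, h⟩ := Metric.eventually_nhds_iff.1 h1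
  refine ⟨r, hr, fun x hx => ?_⟩
  have h2 := h (y := x) (by rwa [dist_eq_norm])
  obtain ⟨u, hu, e⟩ := hf_exists hA x
  have hua : u ∈ act A x0 := by
    by_contra hc
    have := h2 u hu hc
    linarith
  rw [e, hf_eq_of hua]
  intro v hv
  rw [← e]
  exact hf_le (mem_act.1 hv).1 x

/-- common zero set -/
def Zs {k : ℕ} (A : Fin k → Finset (E →L[ℝ] ℝ)) : Set E := {x | ∀ j, hf (A j) x = 0}

theorem Zs_smul {k : ℕ} {A : Fin k → Finset (E →L[ℝ] ℝ)} (hA : ∀ j, (A j).Nonempty)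
    {r : ℝ} (hr : 0 < r) {x : E} (hx : x ∈ Zs A) : r • x ∈ Zs A := by
  intro j
  rw [hf_smul (hA j) hr, hx j, mul_zero]

/-- independence of all selections, restricted to `V` -/
def Ind {n : ℕ} (V : Submodule ℝ E) (B : Fin n → Finset (E →L[ℝ] ℝ)) : Prop :=
  ∀ u : Fin n → (E →L[ℝ] ℝ), (∀ j, u j ∈ convexHull ℝ (B j : Set (E →L[ℝ] ℝ))) →
    ∀ c : Fin n → ℝ, (∀ v ∈ V, ∑ j, c j * u j v = 0) → ∀ j, c j = 0

theorem Ind.mono {n : ℕ} {V : Submodule ℝ E} {B B' : Fin n → Finset (E →L[ℝ] ℝ)}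
    (h : Ind V B) (hB : ∀ j, (B' j : Set (E →L[ℝ] ℝ)) ⊆ convexHull ℝ (B j : Set (E →L[ℝ] ℝ))) :
    Ind V B' := fun u hu c hc =>
  h u (fun j => convexHull_min (hB j) (convex_convexHull ℝ _) (hu j)) c hc

theorem Ind.remove {n : ℕ} {V : Submodule ℝ E} {B : Fin (n + 1) → Finset (E →L[ℝ] ℝ)}
    (h : Ind V B) (p : Fin (n + 1)) {a : E →L[ℝ] ℝ} (ha : a ∈ B p)
    {H : Submodule ℝ E} (hH : ∀ x, x ∈ H ↔ a x = 0) :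
    Ind (V ⊓ H) (fun j => B (p.succAbove j)) := by
  intro u hu c hc
  -- the combination is a multiple of `a` on `V`
  have hex : ∃ t : ℝ, ∀ v ∈ V, ∑ j, c j * u j v = t * a v := by
    by_cases hV : ∃ w ∈ V, a w ≠ 0
    · obtain ⟨w, hw, haw⟩ := hV
      refine ⟨(∑ j, c j * u j w) / a w, fun v hv => ?_⟩
      have h1 := hc (v - (a v / a w) • w) ⟨V.sub_mem hv (V.smul_mem _ hw), by
        refine (hH _).2 ?_
        simp; field_simp; simp⟩
      simp only [map_sub, map_smul, smul_eq_mul, mul_sub, Finset.sum_sub_distrib] at h1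
      have h2 : ∑ j, c j * (a v / a w * u j w) = (a v / a w) * ∑ j, c j * u j w := by
        rw [Finset.mul_sum]
        exact Finset.sum_congr rfl (fun j _ => by ring)
      rw [h2] at h1
      rw [sub_eq_zero.1 h1]
      field_simp
    · push Not at hV
      exact ⟨0, fun v hv => by rw [hc v ⟨hv, (hH v).2 (hV v hv)⟩, zero_mul]⟩
  obtain ⟨t, ht⟩ := hex
  have := h (p.insertNth a u) (by
    intro j
    refine Fin.succAboveCases p ?_ ?_ j
    · simpa using subset_convexHull ℝ _ ha
    · intro i
      simpa using hu i) (p.insertNth (-t) c) (by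
    intro v hv
    rw [Fin.sum_univ_succAbove _ p]
    simp [ht v hv])
  intro j
  simpa using this (p.succAbove j)

open Classical in
/-- restriction of functionals to a subspace -/
noncomputable def restr (H : Submodule ℝ E) (A : Finset (E →L[ℝ] ℝ)) : Finset (H →L[ℝ] ℝ) :=
  A.image (fun u => u.comp H.subtypeL)

theorem restr_nonempty {H : Submodule ℝ E} {A : Finset (E →L[ℝ] ℝ)} (hA : A.Nonempty) :
    (restr H A).Nonempty := by
  classical
  exact hA.image _

theorem hf_restr (H : Submodule ℝ E) (A : Finset (E →L[ℝ] ℝ)) (y : H) :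
    hf (restr H A) y = hf A (y : E) := by
  classical
  simp [hf, restr, Set.image_image]

theorem restr_singleton (H : Submodule ℝ E) (a : E →L[ℝ] ℝ) :
    restr H {a} = {a.comp H.subtypeL} := by
  classical
  simp [restr]

theorem Ind.restr {n : ℕ} {V H : Submodule ℝ E} {B : Fin n → Finset (E →L[ℝ] ℝ)}
    (h : Ind (V ⊓ H) B) : Ind (V.comap H.subtype) (fun j => restr H (B j)) := by
  classical
  intro u hu c hc
  have hex : ∀ j, ∃ w ∈ convexHull ℝ (B j : Set (E →L[ℝ] ℝ)), ∀ y : H, w (y : E) = u j y := by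
    intro j
    have h1 : convexHull ℝ ((RainbowAux.restr H (B j) : Finset (H →L[ℝ] ℝ)) : Set (H →L[ℝ] ℝ)) ⊆
        {w' | ∃ w ∈ convexHull ℝ (B j : Set (E →L[ℝ] ℝ)), ∀ y : H, w (y : E) = w' y} := by
      apply convexHull_min
      · intro w' hw'
        simp only [RainbowAux.restr, Finset.coe_image, Set.mem_image] at hw'
        obtain ⟨w, hw, rfl⟩ := hw'
        exact ⟨w, subset_convexHull ℝ _ hw, fun y => rfl⟩
      · rintro w1 ⟨v1, hv1, e1⟩ w2 ⟨v2, hv2, e2⟩ s t hs ht hst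
        refine ⟨s • v1 + t • v2, convex_convexHull ℝ _ hv1 hv2 hs ht hst, fun y => ?_⟩
        simp [e1, e2]
    exact h1 (hu j)
  choose w hw e using hex
  refine h w hw c ?_
  rintro v ⟨hv, hvH⟩
  have := hc ⟨v, hvH⟩ hv
  simpa [e, ← this] using Finset.sum_congr rfl (fun j _ => by rw [← e j ⟨v, hvH⟩])

end basic
end RainbowAux


open scoped InnerProductSpace

namespace RainbowAux

section flows
variable {E : Type} [NormedAddCommGroup E] [NormedSpace ℝ E]
variable {F : Type} [NormedAddCommGroup F] [NormedSpace ℝ F]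
variable {G : Type} [NormedAddCommGroup G] [NormedSpace ℝ G]

/-- homogeneous bi-Lipschitz bijection between `M` and `N` -/
structure LIso (M : Set E) (N : Set F) (χ : E → F) (ψ : F → E) (L : ℝ) : Prop where
  pos : 0 < L
  map : ∀ x ∈ M, χ x ∈ N
  inv : ∀ y ∈ N, ψ y ∈ M
  left : ∀ x ∈ M, ψ (χ x) = x
  right : ∀ y ∈ N, χ (ψ y) = y
  lip : ∀ x ∈ M, ∀ y ∈ M, ‖χ x - χ y‖ ≤ L * ‖x - y‖
  lip' : ∀ x ∈ N, ∀ y ∈ N, ‖ψ x - ψ y‖ ≤ L * ‖x - y‖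
  hom : ∀ r : ℝ, 0 < r → ∀ x ∈ M, χ (r • x) = r • χ x
  hom' : ∀ r : ℝ, 0 < r → ∀ x ∈ N, ψ (r • x) = r • ψ x

theorem LIso.symm {M : Set E} {N : Set F} {χ : E → F} {ψ : F → E} {L : ℝ}
    (h : LIso M N χ ψ L) : LIso N M ψ χ L :=
  ⟨h.pos, h.inv, h.map, h.right, h.left, h.lip', h.lip, h.hom', h.hom⟩

theorem LIso.trans {M : Set E} {N : Set F} {Q : Set G} {χ : E → F} {ψ : F → E} {L : ℝ}
    {χ' : F → G} {ψ' : G → F} {L' : ℝ}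
    (h : LIso M N χ ψ L) (h' : LIso N Q χ' ψ' L') : LIso M Q (χ' ∘ χ) (ψ ∘ ψ') (L' * L) where
  pos := mul_pos h'.pos h.pos
  map x hx := h'.map _ (h.map x hx)
  inv x hx := h.inv _ (h'.inv x hx)
  left x hx := by simp [h'.left _ (h.map x hx), h.left x hx]
  right x hx := by simp [h.right _ (h'.inv x hx), h'.right x hx]
  lip x hx y hy := by
    have h1 := h'.lip _ (h.map x hx) _ (h.map y hy)
    have h2 := mul_le_mul_of_nonneg_left (h.lip x hx y hy) h'.pos.le
    simp only [Function.comp]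
    linarith
  lip' x hx y hy := by
    have h1 := h.lip' _ (h'.inv x hx) _ (h'.inv y hy)
    have h2 := mul_le_mul_of_nonneg_left (h'.lip' x hx y hy) h.pos.le
    simp only [Function.comp]
    linarith
  hom r hr x hx := by simp [h.hom r hr x hx, h'.hom r hr _ (h.map x hx)]
  hom' r hr x hx := by simp [h'.hom' r hr x hx, h.hom' r hr _ (h'.inv x hx)]

/-- equivalence of functions on `M` -/
def Rel (V : Submodule ℝ E) (M : Set E) (f f' : E → ℝ) : Prop :=
  ∃ χ ψ L, LIso M M χ ψ L ∧ (∀ x ∈ M, f' (χ x) = f x) ∧ ∀ x ∈ M, χ x - x ∈ V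

theorem Rel.refl (V : Submodule ℝ E) (M : Set E) (f : E → ℝ) : Rel V M f f :=
  ⟨id, id, 1, by constructor <;> simp, by simp, by simp⟩

theorem Rel.symm {V : Submodule ℝ E} {M : Set E} {f f' : E → ℝ} (h : Rel V M f f') :
    Rel V M f' f := by
  obtain ⟨χ, ψ, L, hL, h1, h2⟩ := h
  refine ⟨ψ, χ, L, hL.symm, fun x hx => ?_, fun x hx => ?_⟩
  · rw [← h1 _ (hL.inv x hx), hL.right x hx]
  · have := h2 _ (hL.inv x hx)
    rw [hL.right x hx] at this
    rw [← neg_sub]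
    exact V.neg_mem this

theorem Rel.trans {V : Submodule ℝ E} {M : Set E} {f f' f'' : E → ℝ} (h : Rel V M f f')
    (h' : Rel V M f' f'') : Rel V M f f'' := by
  obtain ⟨χ, ψ, L, hL, h1, h2⟩ := h
  obtain ⟨χ', ψ', L', hL', h1', h2'⟩ := h'
  refine ⟨_, _, _, hL.trans hL', fun x hx => ?_, fun x hx => ?_⟩
  · simp [h1' _ (hL.map x hx), h1 x hx]
  · have := V.add_mem (h2' _ (hL.map x hx)) (h2 x hx)
    simpa using this

theorem Rel.congr {V : Submodule ℝ E} {M : Set E} {f f' g g' : E → ℝ} (h : Rel V M f f')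
    (h1 : ∀ x ∈ M, g x = f x) (h2 : ∀ x ∈ M, g' x = f' x) : Rel V M g g' := by
  obtain ⟨χ, ψ, L, hL, h3, h4⟩ := h
  refine ⟨χ, ψ, L, hL, fun x hx => ?_, h4⟩
  rw [h2 _ (hL.map x hx), h3 x hx, h1 x hx]

structure IsFlow (V : Submodule ℝ E) (M : Set E) (h : E → ℝ) (γ : ℝ → E → E) (L : ℝ) :
    Prop where
  pos : 0 < L
  map : ∀ s, ∀ x ∈ M, γ s x ∈ M
  zero : ∀ x ∈ M, γ 0 x = x
  add : ∀ s t, ∀ x ∈ M, γ s (γ t x) = γ (s + t) x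
  val : ∀ s, ∀ x ∈ M, h (γ s x) = h x + s
  dir : ∀ s, ∀ x ∈ M, γ s x - x ∈ V
  lipt : ∀ s t, ∀ x ∈ M, ‖γ s x - γ t x‖ ≤ L * |s - t|
  lip : ∀ s, ∀ x ∈ M, ∀ y ∈ M, ‖γ s x - γ s y‖ ≤ L * ‖x - y‖
  hom : ∀ r : ℝ, 0 < r → ∀ s, ∀ x ∈ M, γ (r * s) (r • x) = r • γ s x

theorem IsFlow.transport {V' : Submodule ℝ E} {M' : Set E} {h' : E → ℝ} {γ : ℝ → E → E} {L : ℝ}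
    (hγ : IsFlow V' M' h' γ L) {M : Set F} {χ : E → F} {ψ : F → E} {K : ℝ}
    (hχ : LIso M' M χ ψ K) {h : F → ℝ} (hh : ∀ x ∈ M', h (χ x) = h' x) {V : Submodule ℝ F}
    (hV : ∀ x ∈ M', ∀ y ∈ M', x - y ∈ V' → χ x - χ y ∈ V) :
    IsFlow V M h (fun s x => χ (γ s (ψ x))) (K * L + K * L * K) where
  pos := by
    have := hγ.pos; have := hχ.pos; positivity
  map s x hx := hχ.map _ (hγ.map s _ (hχ.inv x hx))
  zero x hx := by rw [hγ.zero _ (hχ.inv x hx), hχ.right x hx]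
  add s t x hx := by
    have h1 := hχ.inv x hx
    rw [hχ.left _ (hγ.map t _ h1), hγ.add _ _ _ h1]
  val s x hx := by
    have h1 := hχ.inv x hx
    rw [hh _ (hγ.map s _ h1), hγ.val s _ h1, ← hh _ h1, hχ.right x hx]
  dir s x hx := by
    have h1 := hχ.inv x hx
    have := hV _ (hγ.map s _ h1) _ h1 (hγ.dir s _ h1)
    rwa [hχ.right x hx] at this
  lipt s t x hx := by
    have h1 := hχ.inv x hx
    have h2 := hχ.lip _ (hγ.map s _ h1) _ (hγ.map t _ h1)
    have h3 := mul_le_mul_of_nonneg_left (hγ.lipt s t _ h1) hχ.pos.le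
    have h4 : 0 ≤ K * L * K * |s - t| := by
      have := hγ.pos; have := hχ.pos; positivity
    linarith
  lip s x hx y hy := by
    have h1 := hχ.inv x hx
    have h1' := hχ.inv y hy
    have h2 := hχ.lip _ (hγ.map s _ h1) _ (hγ.map s _ h1')
    have h3 := mul_le_mul_of_nonneg_left (hγ.lip s _ h1 _ h1') hχ.pos.le
    have h5 := mul_le_mul_of_nonneg_left (hχ.lip' x hx y hy) (mul_pos hχ.pos hγ.pos).le
    have h4 : 0 ≤ K * L * ‖x - y‖ := by
      have := hγ.pos; have := hχ.pos; positivity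
    linarith
  hom r hr s x hx := by
    have h1 := hχ.inv x hx
    rw [hχ.hom' r hr x hx, hγ.hom r hr s _ h1, hχ.hom r hr _ (hγ.map s _ h1)]

theorem solve_exists (q : ℝ → ℝ) (hq : ∀ s t, |q s - q t| ≤ 1 / 2 * |s - t|) (b : ℝ) :
    ∃ s, s + q s = b := by
  have hc : ContractingWith (1 / 2) (fun s => b - q s) := by
    refine ⟨by rw [← NNReal.coe_lt_coe]; norm_num, LipschitzWith.of_dist_le_mul fun s t => ?_⟩
    rw [Real.dist_eq, Real.dist_eq]
    have := hq t s
    rw [abs_sub_comm t s] at this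
    simpa using this
  refine ⟨hc.fixedPoint _, ?_⟩
  have : b - q (hc.fixedPoint _) = hc.fixedPoint _ := hc.fixedPoint_isFixedPt
  linarith

theorem solve_bound {q q' : ℝ → ℝ} (hq : ∀ s t, |q s - q t| ≤ 1 / 2 * |s - t|) {b b' s t : ℝ}
    (hs : s + q s = b) (ht : t + q' t = b') : |s - t| ≤ 2 * (|b - b'| + |q t - q' t|) := by
  have h1 := hq s t
  have h2 : s - t = (b - b') - (q s - q t) - (q t - q' t) := by linarith
  have h3 : |s - t| ≤ |b - b'| + |q s - q t| + |q t - q' t| := by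
    rw [h2]
    exact (abs_sub _ _).trans (add_le_add_left (abs_sub _ _) _)
  linarith

theorem push_half {V : Submodule ℝ E} {M : Set E} {h : E → ℝ} {γ : ℝ → E → E} {L : ℝ}
    (hγ : IsFlow V M h γ L) (hM : ∀ r : ℝ, 0 < r → ∀ x ∈ M, r • x ∈ M)
    {g g' : E → ℝ} {ε : ℝ} (hε : 0 ≤ ε) (hεL : ε * L ≤ 1 / 2)
    (hg : ∀ x y, |g x - g y| ≤ ε * ‖x - y‖) (hg' : ∀ x y, |g' x - g' y| ≤ ε * ‖x - y‖)
    (hgh : ∀ r : ℝ, 0 < r → ∀ x, g (r • x) = r * g x)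
    (hgh' : ∀ r : ℝ, 0 < r → ∀ x, g' (r • x) = r * g' x) :
    ∃ σ : E → ℝ, (∀ x ∈ M, σ x + g' (γ (σ x) x) = g x) ∧
      (∀ x ∈ M, ∀ s, s + g' (γ s x) = g x → s = σ x) ∧
      (∀ x ∈ M, ‖γ (σ x) x - x‖ ≤ 2 * L * |g x - g' x|) ∧
      (∀ x ∈ M, ∀ y ∈ M, ‖γ (σ x) x - γ (σ y) y‖ ≤ (2 * L * ε * (1 + L) + L) * ‖x - y‖) ∧
      (∀ r : ℝ, 0 < r → ∀ x ∈ M, γ (σ (r • x)) (r • x) = r • γ (σ x) x) := by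
  have hq : ∀ x ∈ M, ∀ s t, |g' (γ s x) - g' (γ t x)| ≤ 1 / 2 * |s - t| := by
    intro x hx s t
    have h1 := hg' (γ s x) (γ t x)
    have h2 := mul_le_mul_of_nonneg_left (hγ.lipt s t x hx) hε
    have h3 := mul_le_mul_of_nonneg_right hεL (abs_nonneg (s - t))
    linarith
  have hex : ∀ x, ∃ s, x ∈ M → s + g' (γ s x) = g x := by
    intro x
    by_cases hx : x ∈ M
    · obtain ⟨s, hs⟩ := solve_exists (fun s => g' (γ s x)) (hq x hx) (g x)
      exact ⟨s, fun _ => hs⟩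
    · exact ⟨0, fun h => absurd h hx⟩
  choose σ hσ using hex
  have huniq : ∀ x ∈ M, ∀ s, s + g' (γ s x) = g x → s = σ x := by
    intro x hx s hs
    have := solve_bound (q' := fun s => g' (γ s x)) (hq x hx) hs (hσ x hx)
    simp only [sub_self, abs_zero, add_zero, mul_zero] at this
    exact sub_eq_zero.1 (abs_eq_zero.1 (le_antisymm this (abs_nonneg _)))
  refine ⟨σ, hσ, huniq, ?_, ?_, ?_⟩
  · intro x hx
    have h1 := solve_bound (q' := fun _ => g' x) (b' := g' x) (t := 0) (hq x hx) (hσ x hx)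
      (by simp)
    simp only [hγ.zero x hx, sub_self, abs_zero, add_zero] at h1
    have h2 := hγ.lipt (σ x) 0 x hx
    rw [hγ.zero x hx] at h2
    have h3 := mul_le_mul_of_nonneg_left h1 hγ.pos.le
    rw [sub_zero] at h2 h3
    linarith
  · intro x hx y hy
    have h1 := solve_bound (q' := fun s => g' (γ s y)) (hq x hx) (hσ x hx) (hσ y hy)
    have h2 := hg x y
    have h3 := hg' (γ (σ y) x) (γ (σ y) y)
    have h4 := mul_le_mul_of_nonneg_left (hγ.lip (σ y) x hx y hy) hε
    have h5 : |σ x - σ y| ≤ 2 * (ε * ‖x - y‖ + ε * (L * ‖x - y‖)) := by linarith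
    have h6 := mul_le_mul_of_nonneg_left h5 hγ.pos.le
    have h7 := hγ.lipt (σ x) (σ y) x hx
    have h8 := hγ.lip (σ y) x hx y hy
    have h9 := norm_sub_le_norm_sub_add_norm_sub (γ (σ x) x) (γ (σ y) x) (γ (σ y) y)
    nlinarith
  · intro r hr x hx
    have : r * σ x = σ (r • x) := by
      apply huniq _ (hM r hr x hx)
      rw [hγ.hom r hr _ x hx, hgh' r hr, hgh r hr, ← mul_add, hσ x hx]
    rw [← this, hγ.hom r hr _ x hx]

theorem push {V : Submodule ℝ E} {M : Set E} {h : E → ℝ} {γ : ℝ → E → E} {L : ℝ}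
    (hγ : IsFlow V M h γ L) (hM : ∀ r : ℝ, 0 < r → ∀ x ∈ M, r • x ∈ M)
    {g g' : E → ℝ} {ε : ℝ} (hε : 0 ≤ ε) (hεL : ε * L ≤ 1 / 2)
    (hg : ∀ x y, |g x - g y| ≤ ε * ‖x - y‖) (hg' : ∀ x y, |g' x - g' y| ≤ ε * ‖x - y‖)
    (hgh : ∀ r : ℝ, 0 < r → ∀ x, g (r • x) = r * g x)
    (hgh' : ∀ r : ℝ, 0 < r → ∀ x, g' (r • x) = r * g' x) :
    ∃ χ ψ K, LIso M M χ ψ K ∧ (∀ x ∈ M, h (χ x) + g' (χ x) = h x + g x) ∧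
      (∀ x ∈ M, χ x - x ∈ V) ∧ (∀ x ∈ M, ‖χ x - x‖ ≤ 2 * L * |g x - g' x|) ∧
      (∀ x ∈ M, ‖ψ x - x‖ ≤ 2 * L * |g x - g' x|) := by
  obtain ⟨σ, s1, s2, s3, s4, s5⟩ := push_half hγ hM hε hεL hg hg' hgh hgh'
  obtain ⟨τ, t1, t2, t3, t4, t5⟩ := push_half hγ hM hε hεL hg' hg hgh' hgh
  have hL := hγ.pos
  refine ⟨fun x => γ (σ x) x, fun x => γ (τ x) x, _, ⟨?_, ?_, ?_, ?_, ?_, s4, t4, s5, t5⟩,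
    ?_, ?_, s3, ?_⟩
  · positivity
  · exact fun x hx => hγ.map _ x hx
  · exact fun x hx => hγ.map _ x hx
  · intro x hx
    have : -σ x = τ (γ (σ x) x) := by
      apply t2 _ (hγ.map _ x hx)
      rw [hγ.add _ _ x hx, neg_add_cancel, hγ.zero x hx, ← s1 x hx]
      ring
    rw [← this, hγ.add _ _ x hx, neg_add_cancel, hγ.zero x hx]
  · intro x hx
    have : -τ x = σ (γ (τ x) x) := by
      apply s2 _ (hγ.map _ x hx)
      rw [hγ.add _ _ x hx, neg_add_cancel, hγ.zero x hx, ← t1 x hx]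
      ring
    rw [← this, hγ.add _ _ x hx, neg_add_cancel, hγ.zero x hx]
  · intro x hx
    rw [hγ.val _ x hx, ← s1 x hx]
    ring
  · exact fun x hx => hγ.dir _ x hx
  · intro x hx
    rw [abs_sub_comm]
    exact t3 x hx

/-- one gluing step -/
theorem glue {V : Submodule ℝ E} {M N U : Set E} {h f0 : E → ℝ} {γ : ℝ → E → E} {L : ℝ}
    (hγ : IsFlow V N h γ L) (hN : ∀ r : ℝ, 0 < r → ∀ x ∈ N, r • x ∈ N)
    (hU : ∀ r : ℝ, 0 < r → ∀ x, r • x ∈ U ↔ x ∈ U)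
    (hMN : ∀ x ∈ U, (x ∈ M ↔ x ∈ N)) (hf0 : ∀ x ∈ U, x ∈ M → f0 x = h x)
    {g g' : E → ℝ} {ε : ℝ} (hε : 0 ≤ ε) (hεL : ε * L ≤ 1 / 2)
    (hg : ∀ x y, |g x - g y| ≤ ε * ‖x - y‖) (hg' : ∀ x y, |g' x - g' y| ≤ ε * ‖x - y‖)
    (hgh : ∀ r : ℝ, 0 < r → ∀ x, g (r • x) = r * g x)
    (hgh' : ∀ r : ℝ, 0 < r → ∀ x, g' (r • x) = r * g' x)
    (hgg : ∀ x, x ∉ U → g x = g' x) :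
    Rel V M (fun x => f0 x + g x) (fun x => f0 x + g' x) := by
  classical
  obtain ⟨χ, ψ, K, hL, e1, e2, e3, e4⟩ := push hγ hN hε hεL hg hg' hgh hgh'
  have hχU : ∀ x ∈ N, x ∈ U → χ x ∈ U := by
    intro x hx hxU
    by_contra hc
    have h1 := e4 _ (hL.map x hx)
    rw [hgg _ hc, sub_self, abs_zero, mul_zero, hL.left x hx] at h1
    have h2 := sub_eq_zero.1 (norm_le_zero_iff.1 h1)
    exact hc (h2 ▸ hxU)
  have hψU : ∀ x ∈ N, x ∈ U → ψ x ∈ U := by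
    intro x hx hxU
    by_contra hc
    have h1 := e3 _ (hL.inv x hx)
    rw [hgg _ hc, sub_self, abs_zero, mul_zero, hL.right x hx] at h1
    have h2 := sub_eq_zero.1 (norm_le_zero_iff.1 h1)
    exact hc (h2 ▸ hxU)
  have hLp := hγ.pos
  have hKp := hL.pos
  -- a general Lipschitz estimate
  have lipaux : ∀ χ : E → E, (∀ x ∈ N, ∀ y ∈ N, ‖χ x - χ y‖ ≤ K * ‖x - y‖) →
      (∀ x ∈ N, ‖χ x - x‖ ≤ 2 * L * |g x - g' x|) → ∀ x ∈ M, ∀ y ∈ M,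
      ‖(if x ∈ U then χ x else x) - (if y ∈ U then χ y else y)‖ ≤
        (K + 4 * L * ε + 1) * ‖x - y‖ := by
    intro χ c1 c2
    have cross : ∀ x ∈ N, ∀ y, y ∉ U → ‖χ x - y‖ ≤ (4 * L * ε + 1) * ‖x - y‖ := by
      intro x hx y hy
      have h1 := c2 x hx
      have h2 : |g x - g' x| ≤ 2 * ε * ‖x - y‖ := by
        have h3 : g x - g' x = (g x - g y) - (g' x - g' y) := by rw [hgg y hy]; ring
        rw [h3]
        have := abs_sub (g x - g y) (g' x - g' y)
        have := hg x y
        have := hg' x y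
        linarith
      have h4 := mul_le_mul_of_nonneg_left h2 (by positivity : 0 ≤ 2 * L)
      have h5 := norm_sub_le_norm_sub_add_norm_sub (χ x) x y
      linarith
    intro x hx y hy
    have n0 : 0 ≤ ‖x - y‖ := norm_nonneg _
    have n1 : 0 ≤ K * ‖x - y‖ := by positivity
    have n2 : 0 ≤ 4 * L * ε * ‖x - y‖ := by positivity
    by_cases hxU : x ∈ U <;> by_cases hyU : y ∈ U
    · simp only [hxU, hyU, if_true]
      have := c1 x ((hMN x hxU).1 hx) y ((hMN y hyU).1 hy)
      linarith
    · simp only [hxU, hyU, if_true, if_false]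
      have := cross x ((hMN x hxU).1 hx) y hyU
      linarith
    · simp only [hxU, hyU, if_true, if_false]
      have := cross y ((hMN y hyU).1 hy) x hxU
      rw [norm_sub_rev, norm_sub_rev y x] at this
      linarith
    · simp only [hxU, hyU, if_false]
      linarith
  refine ⟨fun x => if x ∈ U then χ x else x, fun x => if x ∈ U then ψ x else x,
    K + 4 * L * ε + 1, ⟨by positivity, ?_, ?_, ?_, ?_, lipaux χ hL.lip e3, lipaux ψ hL.lip' e4,
      ?_, ?_⟩, ?_, ?_⟩
  · intro x hx
    by_cases hxU : x ∈ U
    · have hxN := (hMN x hxU).1 hx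
      simp only [hxU, if_true]
      exact (hMN _ (hχU x hxN hxU)).2 (hL.map x hxN)
    · simpa [hxU] using hx
  · intro x hx
    by_cases hxU : x ∈ U
    · have hxN := (hMN x hxU).1 hx
      simp only [hxU, if_true]
      exact (hMN _ (hψU x hxN hxU)).2 (hL.inv x hxN)
    · simpa [hxU] using hx
  · intro x hx
    by_cases hxU : x ∈ U
    · have hxN := (hMN x hxU).1 hx
      simp [hxU, hχU x hxN hxU, hL.left x hxN]
    · simp [hxU]
  · intro x hx
    by_cases hxU : x ∈ U
    · have hxN := (hMN x hxU).1 hx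
      simp [hxU, hψU x hxN hxU, hL.right x hxN]
    · simp [hxU]
  · intro r hr x hx
    by_cases hxU : x ∈ U
    · have hxN := (hMN x hxU).1 hx
      simp [hxU, hU r hr x, hL.hom r hr x hxN]
    · simp [hxU, hU r hr x]
  · intro r hr x hx
    by_cases hxU : x ∈ U
    · have hxN := (hMN x hxU).1 hx
      simp [hxU, hU r hr x, hL.hom' r hr x hxN]
    · simp [hxU, hU r hr x]
  · intro x hx
    by_cases hxU : x ∈ U
    · have hxN := (hMN x hxU).1 hx
      have hy := hχU x hxN hxU
      simp only [hxU, if_true]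
      rw [hf0 x hxU hx, hf0 _ hy ((hMN _ hy).2 (hL.map x hxN)), e1 x hxN]
    · simp [hxU, hgg x hxU]
  · intro x hx
    by_cases hxU : x ∈ U
    · have hxN := (hMN x hxU).1 hx
      simpa [hxU] using e2 x hxN
    · simp [hxU]

end flows
end RainbowAux


open scoped InnerProductSpace

namespace RainbowAux

section ext
variable {E : Type} [NormedAddCommGroup E] [NormedSpace ℝ E]

theorem hf_add_smul {A : Finset (E →L[ℝ] ℝ)} (hA : A.Nonempty) {x0 : E} {c : ℝ}
    (h : ∀ u ∈ A, u x0 = c) (x : E) (s : ℝ) : hf A (x + s • x0) = hf A x + s * c := by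
  obtain ⟨u, hu, e⟩ := hf_exists hA x
  rw [hf_eq_of hu]
  · simp [h u hu, e]
  · intro v hv
    have := hf_le hv x
    simp [h u hu, h v hv, ← e, this]

open Classical in
/-- interpolation of a set of functionals towards `a` -/
noncomputable def interp (A : Finset (E →L[ℝ] ℝ)) (a : E →L[ℝ] ℝ) (t : ℝ) :
    Finset (E →L[ℝ] ℝ) := A.image (fun u => (1 - t) • u + t • a)

theorem hf_interp {A : Finset (E →L[ℝ] ℝ)} (hA : A.Nonempty) (a : E →L[ℝ] ℝ) {t : ℝ}
    (ht : t ≤ 1) (x : E) : hf (interp A a t) x = (1 - t) * hf A x + t * a x := by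
  classical
  obtain ⟨u, hu, e⟩ := hf_exists hA x
  rw [e, hf_eq_of (u := (1 - t) • u + t • a)]
  · simp
  · exact Finset.mem_image_of_mem _ hu
  · intro v hv
    obtain ⟨w, hw, rfl⟩ := Finset.mem_image.1 hv
    have h1 := hf_le hw x
    rw [e] at h1
    have := mul_le_mul_of_nonneg_left h1 (sub_nonneg.2 ht)
    simpa using this

theorem extend_flow {k : ℕ} {V H : Submodule ℝ E} {x0 : E} {ℓ : E →L[ℝ] ℝ}
    (hH : ∀ x, x ∈ H ↔ ℓ x = 0) (hx0 : ℓ x0 = 1)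
    {A : Finset (E →L[ℝ] ℝ)} {Az : Fin k → Finset (E →L[ℝ] ℝ)} (hA : A.Nonempty)
    (hAz : ∀ j, (Az j).Nonempty) {c : ℝ} (hc : ∀ u ∈ A, u x0 = c)
    (hz : ∀ j, ∀ u ∈ Az j, u x0 = 0) {γ : ℝ → H → H} {L : ℝ}
    (hγ : IsFlow (V.comap H.subtype) (Zs (fun j => restr H (Az j))) (hf (restr H A)) γ L) :
    ∃ γ' L', IsFlow V (Zs Az) (hf A) γ' L' := by
  let π : E → H := fun x => ⟨x - ℓ x • x0, (hH _).2 (by simp [hx0])⟩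
  have hπ : ∀ x, (π x : E) = x - ℓ x • x0 := fun x => rfl
  have hdec : ∀ x, x = (π x : E) + ℓ x • x0 := fun x => by rw [hπ]; simp
  have hπr : ∀ (y : H) (s : ℝ), π ((y : E) + s • x0) = y := by
    intro y s
    apply Subtype.ext
    rw [hπ]
    simp [(hH _).1 y.2, hx0]
  have hℓr : ∀ (y : H) (s : ℝ), ℓ ((y : E) + s • x0) = s := by
    intro y s
    simp [(hH _).1 y.2, hx0]
  have hZ : ∀ (y : H) (s : ℝ), ((y : E) + s • x0 ∈ Zs Az ↔ y ∈ Zs (fun j => restr H (Az j))) := by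
    intro y s
    simp only [Zs, Set.mem_ofPred_eq, hf_restr, hf_add_smul (hAz _) (hz _), mul_zero, add_zero]
  have hπZ : ∀ x ∈ Zs Az, π x ∈ Zs (fun j => restr H (Az j)) := by
    intro x hx
    rw [hdec x] at hx
    exact (hZ _ _).1 hx
  have hLp := hγ.pos
  have hπsub : ∀ x y, ‖π x - π y‖ ≤ (1 + ‖ℓ‖ * ‖x0‖) * ‖x - y‖ ∧
      ‖ℓ x • x0 - ℓ y • x0‖ ≤ ‖ℓ‖ * ‖x0‖ * ‖x - y‖ := by
    intro x y
    have h1 : ‖ℓ x • x0 - ℓ y • x0‖ ≤ ‖ℓ‖ * ‖x0‖ * ‖x - y‖ := by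
      rw [← sub_smul, norm_smul, ← map_sub]
      have := mul_le_mul_of_nonneg_right (ℓ.le_opNorm (x - y)) (norm_nonneg x0)
      linarith
    refine ⟨?_, h1⟩
    have h2 : ‖π x - π y‖ = ‖(x - y) - (ℓ x • x0 - ℓ y • x0)‖ := by
      rw [Submodule.coe_norm]
      congr 1
      simp only [Submodule.coe_sub, hπ]
      abel
    rw [h2]
    have := norm_sub_le (x - y) (ℓ x • x0 - ℓ y • x0)
    linarith
  refine ⟨fun s x => (γ s (π x) : E) + ℓ x • x0,
    L * (1 + ‖ℓ‖ * ‖x0‖) + ‖ℓ‖ * ‖x0‖, ⟨?_, ?_, ?_, ?_, ?_, ?_, ?_, ?_, ?_⟩⟩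
  · positivity
  · intro s x hx
    exact (hZ _ _).2 (hγ.map s _ (hπZ x hx))
  · intro x hx
    rw [hγ.zero _ (hπZ x hx)]
    exact (hdec x).symm
  · intro s t x hx
    simp only [hπr, hℓr, hγ.add s t _ (hπZ x hx)]
  · intro s x hx
    have h1 : hf A x = hf A (π x : E) + ℓ x * c := by
      rw [← hf_add_smul hA hc, ← hdec x]
    rw [hf_add_smul hA hc, h1, ← hf_restr, ← hf_restr, hγ.val s _ (hπZ x hx)]
    ring
  · intro s x hx
    have := hγ.dir s _ (hπZ x hx)
    have h1 : (γ s (π x) : E) + ℓ x • x0 - x = ((γ s (π x) - π x : H) : E) := by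
      rw [Submodule.coe_sub, hπ]
      abel
    rw [h1]
    exact this
  · intro s t x hx
    have h1 := hγ.lipt s t _ (hπZ x hx)
    have h2 : (γ s (π x) : E) + ℓ x • x0 - ((γ t (π x) : E) + ℓ x • x0) =
      ((γ s (π x) - γ t (π x) : H) : E) := by
      rw [Submodule.coe_sub]
      abel
    rw [h2, ← Submodule.coe_norm]
    have h3 : 0 ≤ (L * (‖ℓ‖ * ‖x0‖) + ‖ℓ‖ * ‖x0‖) * |s - t| := by positivity
    linarith
  · intro s x hx y hy
    have h1 := hγ.lip s _ (hπZ x hx) _ (hπZ y hy)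
    obtain ⟨h4, h5⟩ := hπsub x y
    have h2 : (γ s (π x) : E) + ℓ x • x0 - ((γ s (π y) : E) + ℓ y • x0) =
      ((γ s (π x) - γ s (π y) : H) : E) + (ℓ x • x0 - ℓ y • x0) := by
      rw [Submodule.coe_sub]
      abel
    rw [h2]
    have h3 := norm_add_le ((γ s (π x) - γ s (π y) : H) : E) (ℓ x • x0 - ℓ y • x0)
    rw [← Submodule.coe_norm] at h3
    have h6 := mul_le_mul_of_nonneg_left h4 hLp.le
    linarith
  · intro r hr s x hx
    have h1 : π (r • x) = r • π x := by
      apply Subtype.ext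
      rw [Submodule.coe_smul, hπ, hπ, smul_sub, map_smul, smul_assoc]
    rw [h1, hγ.hom r hr s _ (hπZ x hx)]
    simp [smul_smul]

end ext

section global
variable {E : Type} [NormedAddCommGroup E] [NormedSpace ℝ E]

/-- open cone around the ray through `x0` -/
def cone (x0 : E) (r : ℝ) : Set E := {x | ‖x - ‖x‖ • x0‖ < r * ‖x‖}

/-- bump function supported on the cone -/
noncomputable def bump (x0 : E) (r : ℝ) (x : E) : ℝ := max 0 (r * ‖x‖ - ‖x - ‖x‖ • x0‖)

theorem cone_smul (x0 : E) (r : ℝ) {s : ℝ} (hs : 0 < s) (x : E) :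
    s • x ∈ cone x0 r ↔ x ∈ cone x0 r := by
  have h1 : ‖s • x - ‖s • x‖ • x0‖ = s * ‖x - ‖x‖ • x0‖ := by
    rw [norm_smul, Real.norm_of_nonneg hs.le, mul_smul, ← smul_sub, norm_smul,
      Real.norm_of_nonneg hs.le]
  have h2 : r * ‖s • x‖ = s * (r * ‖x‖) := by
    rw [norm_smul, Real.norm_of_nonneg hs.le]; ring
  simp only [cone, Set.mem_ofPred_eq, h1, h2]
  exact mul_lt_mul_iff_right₀ hs

theorem bump_smul (x0 : E) (r : ℝ) {s : ℝ} (hs : 0 < s) (x : E) :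
    bump x0 r (s • x) = s * bump x0 r x := by
  have h1 : ‖s • x - ‖s • x‖ • x0‖ = s * ‖x - ‖x‖ • x0‖ := by
    rw [norm_smul, Real.norm_of_nonneg hs.le, mul_smul, ← smul_sub, norm_smul,
      Real.norm_of_nonneg hs.le]
  have h2 : r * ‖s • x‖ = s * (r * ‖x‖) := by
    rw [norm_smul, Real.norm_of_nonneg hs.le]; ring
  rw [bump, bump, h1, h2, ← mul_sub, mul_max_of_nonneg _ _ hs.le, mul_zero]

theorem bump_nonneg (x0 : E) (r : ℝ) (x : E) : 0 ≤ bump x0 r x := le_max_left _ _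

theorem bump_zero {x0 : E} {r : ℝ} {x : E} (h : x ∉ cone x0 r) : bump x0 r x = 0 := by
  simp only [cone, Set.mem_ofPred_eq, not_lt] at h
  exact max_eq_left (by linarith)

theorem bump_pos {x0 : E} {r : ℝ} {x : E} (h : x ∈ cone x0 r) : 0 < bump x0 r x := by
  simp only [cone, Set.mem_ofPred_eq] at h
  exact lt_max_of_lt_right (by linarith)

theorem abs_max_zero_sub (a b : ℝ) : |max 0 a - max 0 b| ≤ |a - b| := by
  simpa using abs_max_sub_max_le_max 0 a 0 b

theorem bump_lip (x0 : E) {r : ℝ} (hr : 0 ≤ r) (x y : E) :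
    |bump x0 r x - bump x0 r y| ≤ (r + 1 + ‖x0‖) * ‖x - y‖ := by
  refine (abs_max_zero_sub _ _).trans ?_
  have h1 : |‖x‖ - ‖y‖| ≤ ‖x - y‖ := abs_norm_sub_norm_le x y
  have h2 : |‖x - ‖x‖ • x0‖ - ‖y - ‖y‖ • x0‖| ≤ ‖x - y‖ + ‖x0‖ * ‖x - y‖ := by
    refine (abs_norm_sub_norm_le _ _).trans ?_
    have h3 : x - ‖x‖ • x0 - (y - ‖y‖ • x0) = (x - y) - (‖x‖ - ‖y‖) • x0 := by
      rw [sub_smul]; abel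
    rw [h3]
    refine (norm_sub_le _ _).trans ?_
    rw [norm_smul, Real.norm_eq_abs]
    have := mul_le_mul_of_nonneg_right h1 (norm_nonneg x0)
    linarith
  have h4 : r * ‖x‖ - ‖x - ‖x‖ • x0‖ - (r * ‖y‖ - ‖y - ‖y‖ • x0‖) =
    r * (‖x‖ - ‖y‖) - (‖x - ‖x‖ • x0‖ - ‖y - ‖y‖ • x0‖) := by ring
  rw [h4]
  refine (abs_sub _ _).trans ?_
  rw [abs_mul, abs_of_nonneg hr]
  have := mul_le_mul_of_nonneg_left h1 hr
  linarith

theorem globalize [FiniteDimensional ℝ E] {V : Submodule ℝ E} {M : Set E} (hMc : IsClosed M)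
    (hM : ∀ r : ℝ, 0 < r → ∀ x ∈ M, r • x ∈ M) {f0 D : E → ℝ}
    (hD0 : ∀ x, 0 ≤ D x) (hDh : ∀ r : ℝ, 0 < r → ∀ x, D (r • x) = r * D x) {K : ℝ} (hK : 0 ≤ K)
    (hDl : ∀ x y, |D x - D y| ≤ K * ‖x - y‖)
    (hloc : ∀ x0 ∈ M, ‖x0‖ = 1 → ∃ r > 0, ∃ N h γ L, IsFlow V N h γ L ∧
      (∀ r : ℝ, 0 < r → ∀ x ∈ N, r • x ∈ N) ∧ ∀ x ∈ cone x0 r, (x ∈ M ↔ x ∈ N) ∧ f0 x = h x) :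
    ∃ δ > 0, ∀ τ, |τ| ≤ δ → Rel V M f0 (fun x => f0 x - τ * D x) := by
  classical
  have hprop : ProperSpace E := FiniteDimensional.proper ℝ E
  have hloc' : ∀ x0 : E, ∃ (r : ℝ) (N : Set E) (h : E → ℝ) (γ : ℝ → E → E) (L : ℝ),
      0 < r ∧ 0 < L ∧ (x0 ∈ M → ‖x0‖ = 1 → IsFlow V N h γ L ∧
      (∀ r : ℝ, 0 < r → ∀ x ∈ N, r • x ∈ N) ∧
        ∀ x ∈ cone x0 r, (x ∈ M ↔ x ∈ N) ∧ f0 x = h x) := by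
    intro x0
    by_cases h : x0 ∈ M ∧ ‖x0‖ = 1
    · obtain ⟨r, hr, N, h', γ, L, h1, h2⟩ := hloc x0 h.1 h.2
      exact ⟨r, N, h', γ, L, hr, h1.pos, fun _ _ => ⟨h1, h2⟩⟩
    · exact ⟨1, ∅, 0, fun _ => id, 1, one_pos, one_pos, fun h1 h2 => absurd ⟨h1, h2⟩ h⟩
  choose r N h γ L hr hL hrest using hloc'
  have hS : IsCompact (M ∩ Metric.sphere (0 : E) 1) := (isCompact_sphere 0 1).inter_left hMc
  obtain ⟨T, hT1, hT2⟩ := hS.elim_nhds_subcover (fun x => Metric.ball x (r x))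
    (fun x _ => Metric.ball_mem_nhds x (hr x))
  have hT1' : ∀ i ∈ T, i ∈ M ∧ ‖i‖ = 1 := fun i hi => by simpa using hT1 i hi
  -- sum of bumps is bounded below
  have hbl : ∀ i x y, |bump i (r i) x - bump i (r i) y| ≤ (r i + 1 + ‖i‖) * ‖x - y‖ :=
    fun i => bump_lip i (hr i).le
  have hbc : ∀ i, Continuous (bump i (r i)) := by
    intro i
    unfold bump
    fun_prop
  have hmin : ∃ m > 0, ∀ x ∈ M ∩ Metric.sphere (0 : E) 1, m ≤ ∑ i ∈ T, bump i (r i) x := by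
    by_cases hne : (M ∩ Metric.sphere (0 : E) 1).Nonempty
    · obtain ⟨x, hx, hmin⟩ := hS.exists_isMinOn hne
        (f := fun x => ∑ i ∈ T, bump i (r i) x)
        (continuous_finsetSum _ (fun i _ => hbc i)).continuousOn
      refine ⟨_, ?_, fun y hy => hmin hy⟩
      have hx2 := hT2 hx
      simp only [Set.mem_iUnion] at hx2
      obtain ⟨i, hi, hxi⟩ := hx2
      refine Finset.sum_pos' (fun i _ => bump_nonneg _ _ _) ⟨i, hi, bump_pos ?_⟩
      have hx1 : ‖x‖ = 1 := by simpa using hx.2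
      rw [Metric.mem_ball, dist_eq_norm] at hxi
      simpa [cone, hx1] using hxi
    · exact ⟨1, one_pos, fun x hx => absurd ⟨x, hx⟩ hne⟩
  obtain ⟨m, hm, hmin⟩ := hmin
  have hz : ∀ f : E → ℝ, (∀ r : ℝ, 0 < r → ∀ x, f (r • x) = r * f x) → f 0 = 0 := by
    intro f hf
    have := hf 2 two_pos 0
    rw [smul_zero] at this
    linarith
  let κ : ℝ := K / m
  have hκ : 0 ≤ κ := by positivity
  let G : Finset E → E → ℝ := fun T' x => min (D x) (κ * ∑ i ∈ T', bump i (r i) x)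
  have hGh : ∀ T', ∀ r : ℝ, 0 < r → ∀ x, G T' (r • x) = r * G T' x := by
    intro T' s hs x
    simp only [G]
    rw [mul_min_of_nonneg _ _ hs.le, hDh s hs]
    congr 1
    simp only [bump_smul _ _ hs, ← Finset.mul_sum]
    ring
  let Λ : ℝ := K + κ * ∑ i ∈ T, (r i + 1 + ‖i‖)
  have hri : ∀ i, 0 ≤ r i + 1 + ‖i‖ := fun i => by have := hr i; positivity
  have hΛ : 0 ≤ Λ := by
    have : 0 ≤ ∑ i ∈ T, (r i + 1 + ‖i‖) := Finset.sum_nonneg (fun i _ => hri i)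
    positivity
  have hGl : ∀ T' ⊆ T, ∀ x y, |G T' x - G T' y| ≤ Λ * ‖x - y‖ := by
    intro T' hT' x y
    have h1 := abs_min_sub_min_le_max (D x) (κ * ∑ i ∈ T', bump i (r i) x)
      (D y) (κ * ∑ i ∈ T', bump i (r i) y)
    refine h1.trans (max_le ?_ ?_)
    · refine (hDl x y).trans (mul_le_mul_of_nonneg_right ?_ (norm_nonneg _))
      have : 0 ≤ κ * ∑ i ∈ T, (r i + 1 + ‖i‖) :=
        mul_nonneg hκ (Finset.sum_nonneg (fun i _ => hri i))
      simp only [Λ]; linarith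
    · rw [← mul_sub, abs_mul, abs_of_nonneg hκ, ← Finset.sum_sub_distrib]
      have h2 : |∑ i ∈ T', (bump i (r i) x - bump i (r i) y)| ≤
          (∑ i ∈ T, (r i + 1 + ‖i‖)) * ‖x - y‖ := by
        refine (Finset.abs_sum_le_sum_abs _ _).trans ?_
        rw [Finset.sum_mul]
        refine (Finset.sum_le_sum (fun i _ => hbl i x y)).trans ?_
        exact Finset.sum_le_sum_of_subset_of_nonneg hT'
          (fun i _ _ => mul_nonneg (hri i) (norm_nonneg _))
      have h3 := mul_le_mul_of_nonneg_left h2 hκ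
      have h4 : 0 ≤ K * ‖x - y‖ := by positivity
      simp only [Λ]; linarith
  have hGT : ∀ x ∈ M, G T x = D x := by
    intro x hx
    apply min_eq_left
    by_cases hx0 : x = 0
    · subst hx0
      rw [hz D hDh]
      exact mul_nonneg hκ (Finset.sum_nonneg fun i _ => bump_nonneg _ _ _)
    · have hn : 0 < ‖x‖ := norm_pos_iff.2 hx0
      have hxe : x = ‖x‖ • (‖x‖⁻¹ • x) := by
        rw [smul_smul, mul_inv_cancel₀ hn.ne', one_smul]
      have h1 : m ≤ ∑ i ∈ T, bump i (r i) (‖x‖⁻¹ • x) := by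
        apply hmin
        refine ⟨hM _ (inv_pos.2 hn) x hx, ?_⟩
        simp [norm_smul, hn.ne']
      have h2 : D x ≤ K * ‖x‖ := by
        have := hDl x 0
        rw [hz D hDh, sub_zero, sub_zero, abs_of_nonneg (hD0 x)] at this
        exact this
      have h3 : ∑ i ∈ T, bump i (r i) x = ‖x‖ * ∑ i ∈ T, bump i (r i) (‖x‖⁻¹ • x) := by
        rw [Finset.mul_sum]
        refine Finset.sum_congr rfl fun i _ => ?_
        rw [← bump_smul _ _ hn, ← hxe]
      rw [h3]
      have h4 : K * ‖x‖ = κ * (‖x‖ * m) := by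
        simp only [κ]; field_simp
      rw [h4] at h2
      refine h2.trans ?_
      gcongr
  have hG0 : ∀ x, G ∅ x = 0 := by
    intro x
    simp [G, hD0 x]
  refine ⟨1 / (2 * (Λ + 1) * (∑ i ∈ T, L i + 1)), ?_, ?_⟩
  · have : 0 ≤ ∑ i ∈ T, L i := Finset.sum_nonneg (fun i _ => (hL i).le)
    positivity
  intro τ hτ
  have hmain : ∀ T' ⊆ T, Rel V M f0 (fun x => f0 x + -τ * G T' x) := by
    intro T'
    induction T' using Finset.induction_on with
    | empty =>
      intro _
      exact (Rel.refl V M f0).congr (fun x _ => rfl) (fun x _ => by simp [hG0])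
    | insert i T' hi ih =>
      intro hsub
      have hT' : T' ⊆ T := (Finset.subset_insert i T').trans hsub
      have hiT : i ∈ T := hsub (Finset.mem_insert_self _ _)
      obtain ⟨f1, f2, f3⟩ := hrest i (hT1' i hiT).1 (hT1' i hiT).2
      refine (ih hT').trans ?_
      have hlip : ∀ T' ⊆ T, ∀ x y, |-τ * G T' x - -τ * G T' y| ≤ (|τ| * Λ) * ‖x - y‖ := by
        intro T' hT' x y
        rw [← mul_sub, abs_mul, abs_neg, mul_assoc]
        exact mul_le_mul_of_nonneg_left (hGl T' hT' x y) (abs_nonneg _)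
      have hhom : ∀ T', ∀ r : ℝ, 0 < r → ∀ x, -τ * G T' (r • x) = r * (-τ * G T' x) := by
        intro T' s hs x
        rw [hGh T' s hs]; ring
      refine glue f1 f2 (U := cone i (r i)) (fun s hs x => cone_smul i (r i) hs x)
        (fun x hx => (f3 x hx).1) (fun x hx _ => (f3 x hx).2) (ε := |τ| * Λ) (mul_nonneg (abs_nonneg _) hΛ) ?_
        (hlip T' hT') (hlip _ hsub) (hhom T') (hhom _) ?_
      · have h1 : L i ≤ ∑ i ∈ T, L i := Finset.single_le_sum (fun i _ => (hL i).le) hiT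
        have h2 := hL i
        have h0 : 0 ≤ ∑ i ∈ T, L i := Finset.sum_nonneg (fun i _ => (hL i).le)
        have h3 : 0 < 2 * (Λ + 1) * (∑ i ∈ T, L i + 1) := by positivity
        rw [le_div_iff₀ h3] at hτ
        have h4 : |τ| * (Λ * L i) ≤ |τ| * ((Λ + 1) * (∑ i ∈ T, L i + 1)) := by
          gcongr <;> linarith
        linarith
      · intro x hx
        simp only [G]
        rw [Finset.sum_insert hi, bump_zero hx, zero_add]
  refine (hmain T subset_rfl).congr (fun _ _ => rfl) ?_
  intro x hx
  rw [hGT x hx]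
  ring

end global
end RainbowAux


open scoped InnerProductSpace

namespace RainbowAux

section key
variable {E : Type} [NormedAddCommGroup E] [NormedSpace ℝ E]

theorem cone_mono {x0 : E} {r r' : ℝ} (h : r ≤ r') : cone x0 r ⊆ cone x0 r' := by
  intro x hx
  have hx : ‖x - ‖x‖ • x0‖ < r * ‖x‖ := hx
  show ‖x - ‖x‖ • x0‖ < r' * ‖x‖
  exact hx.trans_le (mul_le_mul_of_nonneg_right h (norm_nonneg _))

theorem cone_local {A : Finset (E →L[ℝ] ℝ)} (hA : A.Nonempty) (x0 : E) :
    ∀ᶠ r in nhdsWithin (0 : ℝ) (Set.Ioi 0), ∀ x ∈ cone x0 r, hf A x = hf (act A x0) x := by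
  obtain ⟨r0, hr0, h⟩ := hf_local hA x0
  filter_upwards [Ioo_mem_nhdsGT hr0] with r hr x hx
  have hx : ‖x - ‖x‖ • x0‖ < r * ‖x‖ := hx
  have hn : 0 < ‖x‖ := by
    by_contra hc
    have : ‖x‖ = 0 := le_antisymm (not_lt.1 hc) (norm_nonneg _)
    rw [this] at hx
    have := norm_nonneg (x - (0 : ℝ) • x0)
    linarith
  have h1 : ‖‖x‖⁻¹ • x - x0‖ < r0 := by
    have h2 : ‖x‖⁻¹ • x - x0 = ‖x‖⁻¹ • (x - ‖x‖ • x0) := by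
      rw [smul_sub, smul_smul, inv_mul_cancel₀ hn.ne', one_smul]
    rw [h2, norm_smul, Real.norm_of_nonneg (inv_nonneg.2 hn.le)]
    calc ‖x‖⁻¹ * ‖x - ‖x‖ • x0‖ < ‖x‖⁻¹ * (r * ‖x‖) := by gcongr
      _ = r := by field_simp
      _ < r0 := hr.2
  have h3 := h _ h1
  rw [hf_smul hA (inv_pos.2 hn), hf_smul (act_nonempty hA x0) (inv_pos.2 hn)] at h3
  exact mul_left_cancel₀ (inv_pos.2 hn).ne' h3

theorem straight_flow {k : ℕ} {V : Submodule ℝ E} {x0 : E} (hx0 : x0 ∈ V)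
    {A : Finset (E →L[ℝ] ℝ)} {Az : Fin k → Finset (E →L[ℝ] ℝ)} (hA : A.Nonempty)
    (hAz : ∀ j, (Az j).Nonempty) {c : ℝ} (hc0 : c ≠ 0) (hc : ∀ u ∈ A, u x0 = c)
    (hz : ∀ j, ∀ u ∈ Az j, u x0 = 0) :
    ∃ γ' L', IsFlow V (Zs Az) (hf A) γ' L' := by
  refine ⟨fun s x => x + (s / c) • x0, 1 + ‖x0‖ / |c|, ⟨?_, ?_, ?_, ?_, ?_, ?_, ?_, ?_, ?_⟩⟩
  · positivity
  · intro s x hx j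
    rw [hf_add_smul (hAz j) (hz j), hx j]
    simp
  · intro x _
    simp
  · intro s t x _
    rw [add_assoc, ← add_smul]
    congr 2
    ring
  · intro s x _
    rw [hf_add_smul hA hc]
    field_simp
  · intro s x _
    simpa using V.smul_mem _ hx0
  · intro s t x _
    have : x + (s / c) • x0 - (x + (t / c) • x0) = ((s - t) / c) • x0 := by
      rw [sub_div, sub_smul]; abel
    rw [this, norm_smul, norm_div, Real.norm_eq_abs, Real.norm_eq_abs]
    have h2 : |s - t| / |c| * ‖x0‖ = ‖x0‖ / |c| * |s - t| := by ring
    rw [h2]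
    have := abs_nonneg (s - t)
    linarith
  · intro s x _ y _
    have h1 : 0 ≤ ‖x0‖ / |c| * ‖x - y‖ := by positivity
    simp only [add_sub_add_right_eq_sub]
    linarith
  · intro r hr s x _
    rw [smul_add, smul_smul, mul_div_assoc]

theorem Rel.flow {V : Submodule ℝ E} {M : Set E} {f f' : E → ℝ} (h : Rel V M f f')
    {γ : ℝ → E → E} {L : ℝ} (hγ : IsFlow V M f γ L) : ∃ γ' L', IsFlow V M f' γ' L' := by
  obtain ⟨χ, ψ, K, hK, h1, h2⟩ := h
  refine ⟨_, _, hγ.transport hK h1 ?_⟩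
  intro x hx y hy hxy
  have := V.add_mem (V.sub_mem (h2 x hx) (h2 y hy)) hxy
  convert this using 1
  abel

theorem Ind.inf_of_vanish {n : ℕ} {V : Submodule ℝ E} {B : Fin n → Finset (E →L[ℝ] ℝ)}
    (h : Ind V B) {x0 : E} (hx0 : x0 ∈ V) (hB : ∀ j, ∀ u ∈ B j, u x0 = 0)
    {H : Submodule ℝ E} {ℓ : E →L[ℝ] ℝ} (hH : ∀ x, x ∈ H ↔ ℓ x = 0) (hℓ : ℓ x0 = 1) :
    Ind (V ⊓ H) B := by
  intro u hu c hc
  have hu0 : ∀ j, u j x0 = 0 := by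
    intro j
    have h1 : convexHull ℝ (B j : Set (E →L[ℝ] ℝ)) ⊆ {w | w x0 = 0} := by
      apply convexHull_min
      · exact fun w hw => hB j w hw
      · intro w1 h1 w2 h2 s t _ _ _
        have h1 : w1 x0 = 0 := h1
        have h2 : w2 x0 = 0 := h2
        show (s • w1 + t • w2) x0 = 0
        simp [h1, h2]
    exact h1 (hu j)
  refine h u hu c (fun v hv => ?_)
  have := hc (v - ℓ v • x0) ⟨V.sub_mem hv (V.smul_mem _ hx0), (hH _).2 (by simp [hℓ])⟩
  simpa [hu0] using this

theorem restr_cons {k : ℕ} (H : Submodule ℝ E) (A : Finset (E →L[ℝ] ℝ))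
    (Az : Fin k → Finset (E →L[ℝ] ℝ)) :
    (fun j => restr H ((Fin.cons A Az : Fin (k + 1) → Finset (E →L[ℝ] ℝ)) j)) =
      (Fin.cons (restr H A) (fun j => restr H (Az j)) : Fin (k + 1) → Finset (H →L[ℝ] ℝ)) := by
  funext j
  refine Fin.cases rfl (fun i => rfl) j

theorem Zs_isClosed {k : ℕ} {Az : Fin k → Finset (E →L[ℝ] ℝ)} (hAz : ∀ j, (Az j).Nonempty) :
    IsClosed (Zs Az) := by
  have : Zs Az = ⋂ j, {x | hf (Az j) x = 0} := by
    ext x; simp [Zs]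
  rw [this]
  exact isClosed_iInter fun j => isClosed_eq (hf_continuous (hAz j)) continuous_const

theorem exists_functional [FiniteDimensional ℝ E] (V : Submodule ℝ E) {x0 : E} (h : x0 ∉ V) :
    ∃ ℓ : E →L[ℝ] ℝ, ℓ x0 = 1 ∧ ∀ v ∈ V, ℓ v = 0 := by
  obtain ⟨f, hf, hV⟩ := Submodule.exists_le_ker_of_notMem h
  refine ⟨(f x0)⁻¹ • LinearMap.toContinuousLinearMap f, ?_, ?_⟩
  · simp [hf]
  · intro v hv
    have : f v = 0 := hV hv
    simp [this]

theorem local_flow [FiniteDimensional ℝ E] {k : ℕ} {V : Submodule ℝ E}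
    {A : Finset (E →L[ℝ] ℝ)} {Az : Fin k → Finset (E →L[ℝ] ℝ)} {a : E →L[ℝ] ℝ} (ha : a ∈ A)
    (hAz : ∀ j, (Az j).Nonempty)
    (hI : Ind V (Fin.cons A Az : Fin (k + 1) → Finset (E →L[ℝ] ℝ)))
    (IH : ∀ H : Submodule ℝ E, Module.finrank ℝ H < Module.finrank ℝ E →
      ∀ (V' : Submodule ℝ H) (A' : Finset (H →L[ℝ] ℝ)) (Az' : Fin k → Finset (H →L[ℝ] ℝ)),
      A'.Nonempty → (∀ j, (Az' j).Nonempty) →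
      Ind V' (Fin.cons A' Az' : Fin (k + 1) → Finset (H →L[ℝ] ℝ)) →
      ∃ γ L, IsFlow V' (Zs Az') (hf A') γ L)
    {t : ℝ} (ht0 : 0 ≤ t) (ht1 : t ≤ 1) {x0 : E} (hx0 : x0 ∈ Zs Az) (hn : ‖x0‖ = 1) :
    ∃ r > 0, ∃ N h γ L, IsFlow V N h γ L ∧
      (∀ r : ℝ, 0 < r → ∀ x ∈ N, r • x ∈ N) ∧
      ∀ x ∈ cone x0 r, (x ∈ Zs Az ↔ x ∈ N) ∧ (1 - t) * hf A x + t * a x = h x := by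
  classical
  have hA : A.Nonempty := ⟨a, ha⟩
  let A' := interp (act A x0) a t
  let Az' : Fin k → Finset (E →L[ℝ] ℝ) := fun j => act (Az j) x0
  have hA' : A'.Nonempty := (act_nonempty hA x0).image _
  have hAz' : ∀ j, (Az' j).Nonempty := fun j => act_nonempty (hAz j) x0
  let c : ℝ := (1 - t) * hf A x0 + t * a x0
  have hc : ∀ u ∈ A', u x0 = c := by
    intro u hu
    obtain ⟨w, hw, rfl⟩ := Finset.mem_image.1 hu
    simp [c, (mem_act.1 hw).2]
  have hz : ∀ j, ∀ u ∈ Az' j, u x0 = 0 := by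
    intro j u hu
    rw [(mem_act.1 hu).2]
    exact hx0 j
  have hI' : Ind V (Fin.cons A' Az' : Fin (k + 1) → Finset (E →L[ℝ] ℝ)) := by
    refine hI.mono (fun j => ?_)
    refine Fin.cases ?_ (fun i => ?_) j
    · intro u hu
      have hu : u ∈ A' := hu
      obtain ⟨w, hw, rfl⟩ := Finset.mem_image.1 hu
      exact convex_convexHull ℝ _ (subset_convexHull ℝ _ (mem_act.1 hw).1)
        (subset_convexHull ℝ _ ha) (by linarith) ht0 (by ring)
    · intro u hu
      have hu : u ∈ act (Az i) x0 := hu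
      exact subset_convexHull ℝ _ (mem_act.1 hu).1
  have hflow : ∃ γ L, IsFlow V (Zs Az') (hf A') γ L := by
    by_cases hcase : x0 ∈ V ∧ c ≠ 0
    · exact straight_flow hcase.1 hA' hAz' hcase.2 hc hz
    · have hx00 : x0 ≠ 0 := by
        intro h
        simp [h] at hn
      have hℓ : ∃ ℓ : E →L[ℝ] ℝ, ℓ x0 = 1 ∧
          Ind (V ⊓ LinearMap.ker (ℓ : E →ₗ[ℝ] ℝ))
            (Fin.cons A' Az' : Fin (k + 1) → Finset (E →L[ℝ] ℝ)) := by
        by_cases hxV : x0 ∈ V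
        · obtain ⟨ℓ, h1, -⟩ := exists_functional (⊥ : Submodule ℝ E) (x0 := x0) (by simpa using hx00)
          refine ⟨ℓ, h1, hI'.inf_of_vanish hxV ?_ (fun x => by simp) h1⟩
          have hc0 : c = 0 := by
            by_contra h
            exact hcase ⟨hxV, h⟩
          intro j
          refine Fin.cases ?_ (fun i => ?_) j
          · intro u hu
            rw [← hc0]
            exact hc u hu
          · exact hz i
        · obtain ⟨ℓ, h1, h2⟩ := exists_functional V hxV
          refine ⟨ℓ, h1, ?_⟩
          have : V ⊓ LinearMap.ker (ℓ : E →ₗ[ℝ] ℝ) = V :=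
            inf_eq_left.2 (fun v hv => by simpa using h2 v hv)
          rw [this]
          exact hI'
      obtain ⟨ℓ, hℓ1, hI2⟩ := hℓ
      have hH : ∀ x, x ∈ LinearMap.ker (ℓ : E →ₗ[ℝ] ℝ) ↔ ℓ x = 0 := fun x => by simp
      have hlt : Module.finrank ℝ (LinearMap.ker (ℓ : E →ₗ[ℝ] ℝ)) < Module.finrank ℝ E := by
        apply Submodule.finrank_lt
        intro h
        have : x0 ∈ LinearMap.ker (ℓ : E →ₗ[ℝ] ℝ) := by rw [h]; trivial
        rw [hH] at this
        rw [this] at hℓ1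
        norm_num at hℓ1
      have hI3 := hI2.restr
      rw [restr_cons] at hI3
      obtain ⟨γ, L, hγ⟩ := IH _ hlt _ _ _ (restr_nonempty hA')
        (fun j => restr_nonempty (hAz' j)) hI3
      exact extend_flow hH hℓ1 hA' hAz' hc hz hγ
  obtain ⟨γ, L, hγ⟩ := hflow
  have hev : ∀ᶠ r in nhdsWithin (0 : ℝ) (Set.Ioi 0),
      (∀ x ∈ cone x0 r, hf A x = hf (act A x0) x) ∧
      (∀ j, ∀ x ∈ cone x0 r, hf (Az j) x = hf (Az' j) x) ∧ 0 < r := by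
    refine (cone_local hA x0).and (Filter.Eventually.and ?_ self_mem_nhdsWithin)
    rw [Filter.eventually_all]
    exact fun j => cone_local (hAz j) x0
  obtain ⟨r, h1, h2, hr⟩ := hev.exists
  refine ⟨r, hr, Zs Az', hf A', γ, L, hγ, fun r hr x hx => Zs_smul hAz' hr hx, fun x hx => ⟨?_, ?_⟩⟩
  · constructor
    · intro h j
      rw [← h2 j x hx]
      exact h j
    · intro h j
      rw [h2 j x hx]
      exact h j
  · rw [hf_interp (act_nonempty hA x0) a ht1, h1 x hx]

theorem rel_path {V : Submodule ℝ E} {M : Set E} (f : ℝ → E → ℝ)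
    (h : ∀ t, 0 ≤ t → t ≤ 1 → ∃ δ > 0, ∀ τ, |τ| ≤ δ → Rel V M (f t) (f (t + τ))) :
    Rel V M (f 0) (f 1) := by
  let S : Set (Set.Icc (0 : ℝ) 1) := {t | Rel V M (f 0) (f t)}
  have hnear : ∀ t : Set.Icc (0 : ℝ) 1, ∀ᶠ s : Set.Icc (0 : ℝ) 1 in nhds t,
      Rel V M (f t) (f s) := by
    intro t
    obtain ⟨δ, hδ, h1⟩ := h t t.2.1 t.2.2
    rw [Metric.eventually_nhds_iff]
    refine ⟨δ, hδ, fun s hs => ?_⟩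
    have := h1 ((s : ℝ) - t) (by
      rw [Subtype.dist_eq, Real.dist_eq] at hs
      exact hs.le)
    simpa using this
  have hS : IsClopen S := by
    constructor
    · rw [← isOpen_compl_iff, isOpen_iff_mem_nhds]
      intro t ht
      filter_upwards [hnear t] with s hs hsS
      exact ht (Rel.trans hsS hs.symm)
    · rw [isOpen_iff_mem_nhds]
      intro t ht
      filter_upwards [hnear t] with s hs
      exact Rel.trans ht hs
  have h0 : (⟨0, by simp⟩ : Set.Icc (0 : ℝ) 1) ∈ S := Rel.refl _ _ _
  have hu := hS.eq_univ ⟨_, h0⟩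
  have : (⟨1, by simp⟩ : Set.Icc (0 : ℝ) 1) ∈ S := by rw [hu]; trivial
  exact this

end key

/-- flows for linear functions on zero sets -/
def FlowSt (k : ℕ) : Prop :=
  ∀ (E : Type) [NormedAddCommGroup E] [NormedSpace ℝ E] [FiniteDimensional ℝ E]
    (V : Submodule ℝ E) (a : E →L[ℝ] ℝ) (Az : Fin k → Finset (E →L[ℝ] ℝ)),
    (∀ j, (Az j).Nonempty) → Ind V (Fin.cons {a} Az : Fin (k + 1) → Finset (E →L[ℝ] ℝ)) →
    ∃ γ L, IsFlow V (Zs Az) a γ L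

/-- equivalence of a support function and one of its linear pieces -/
def KeySt (k n : ℕ) : Prop :=
  ∀ (E : Type) [NormedAddCommGroup E] [NormedSpace ℝ E] [FiniteDimensional ℝ E],
    Module.finrank ℝ E = n →
    ∀ (V : Submodule ℝ E) (a : E →L[ℝ] ℝ) (A : Finset (E →L[ℝ] ℝ))
    (Az : Fin k → Finset (E →L[ℝ] ℝ)), a ∈ A →
    (∀ j, (Az j).Nonempty) → Ind V (Fin.cons A Az : Fin (k + 1) → Finset (E →L[ℝ] ℝ)) →
    Rel V (Zs Az) a (hf A)

theorem key_of_flow {k : ℕ} (hF : FlowSt k) (n : ℕ) : KeySt k n := by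
  induction n using Nat.strong_induction_on with
  | _ n ih =>
  intro E _ _ _ hn V a A Az ha hAz hI
  have hA : A.Nonempty := ⟨a, ha⟩
  have IH : ∀ H : Submodule ℝ E, Module.finrank ℝ H < Module.finrank ℝ E →
      ∀ (V' : Submodule ℝ H) (A' : Finset (H →L[ℝ] ℝ)) (Az' : Fin k → Finset (H →L[ℝ] ℝ)),
      A'.Nonempty → (∀ j, (Az' j).Nonempty) →
      Ind V' (Fin.cons A' Az' : Fin (k + 1) → Finset (H →L[ℝ] ℝ)) →
      ∃ γ L, IsFlow V' (Zs Az') (hf A') γ L := by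
    intro H hH V' A' Az' hA' hAz' hI'
    obtain ⟨a', ha'⟩ := hA'
    have h1 := ih _ (hn ▸ hH) H rfl V' a' A' Az' ha' hAz' hI'
    obtain ⟨γ, L, hγ⟩ := hF H V' a' Az' hAz' (hI'.mono (fun j => by
      refine Fin.cases ?_ (fun i => ?_) j
      · intro u hu
        have hu : u ∈ ({a'} : Finset (H →L[ℝ] ℝ)) := hu
        rw [Finset.mem_singleton] at hu
        subst hu
        exact subset_convexHull ℝ _ ha'
      · exact subset_convexHull ℝ _))
    exact h1.flow hγ
  let D : E → ℝ := fun x => hf A x - a x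
  obtain ⟨K, hK, hl⟩ := hf_lip hA
  have hDl : ∀ x y, |D x - D y| ≤ (K + ‖a‖) * ‖x - y‖ := by
    intro x y
    have h1 : D x - D y = (hf A x - hf A y) - a (x - y) := by
      simp only [D, map_sub]; ring
    rw [h1]
    refine (abs_sub _ _).trans ?_
    have h2 := hl x y
    have h3 := a.le_opNorm (x - y)
    rw [Real.norm_eq_abs] at h3
    linarith
  have hD0 : ∀ x, 0 ≤ D x := fun x => sub_nonneg.2 (hf_le ha x)
  have hDh : ∀ r : ℝ, 0 < r → ∀ x, D (r • x) = r * D x := by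
    intro r hr x
    simp only [D, hf_smul hA hr, map_smul, smul_eq_mul]; ring
  have hpath := rel_path (V := V) (M := Zs Az) (fun t x => (1 - t) * hf A x + t * a x) (by
    intro t ht0 ht1
    obtain ⟨δ, hδ, h⟩ := globalize (V := V) (Zs_isClosed hAz)
      (fun r hr x hx => Zs_smul hAz hr hx) (f0 := fun x => (1 - t) * hf A x + t * a x)
      hD0 hDh (by positivity) hDl
      (fun x0 hx0 hn0 => local_flow ha hAz hI IH ht0 ht1 hx0 hn0)
    refine ⟨δ, hδ, fun τ hτ => (h τ hτ).congr (fun _ _ => rfl) (fun x _ => ?_)⟩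
    simp only [D]; ring)
  exact hpath.symm.congr (fun x _ => by simp) (fun x _ => by simp)

section step
variable {E : Type} [NormedAddCommGroup E] [NormedSpace ℝ E]

theorem cons_zero_tail {k : ℕ} (Az : Fin (k + 1) → Finset (E →L[ℝ] ℝ)) :
    (Fin.cons (Az 0) (fun j : Fin k => Az j.succ) : Fin (k + 1) → Finset (E →L[ℝ] ℝ)) = Az := by
  funext j
  refine Fin.cases rfl (fun i => rfl) j

/-- zero sets: cut by a linear functional, then straighten -/
theorem restrict_iso {k : ℕ} {Az : Fin (k + 1) → Finset (E →L[ℝ] ℝ)} {a : E →L[ℝ] ℝ}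
    {χ ψ : E → E} {L : ℝ}
    (hL : LIso (Zs (fun j : Fin k => Az j.succ)) (Zs (fun j : Fin k => Az j.succ)) χ ψ L)
    (h1 : ∀ x ∈ Zs (fun j : Fin k => Az j.succ), hf (Az 0) (χ x) = a x)
    {H : Submodule ℝ E} (hH : ∀ x, x ∈ H ↔ a x = 0) :
    ∃ ψ' : E → H, LIso (Zs (fun j : Fin k => restr H (Az j.succ))) (Zs Az)
      (fun y : H => χ y) ψ' L := by
  classical
  have hZ : ∀ y : H, y ∈ Zs (fun j : Fin k => restr H (Az j.succ)) ↔
      (y : E) ∈ Zs (fun j : Fin k => Az j.succ) := by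
    intro y
    simp only [Zs, Set.mem_ofPred_eq, hf_restr]
  have hZ2 : ∀ x, x ∈ Zs Az ↔ x ∈ Zs (fun j : Fin k => Az j.succ) ∧ hf (Az 0) x = 0 := by
    intro x
    simp only [Zs, Set.mem_ofPred_eq]
    rw [Fin.forall_fin_succ, and_comm]
  have hψ : ∀ x ∈ Zs Az, ψ x ∈ H := by
    intro x hx
    obtain ⟨h2, h3⟩ := (hZ2 x).1 hx
    rw [hH, ← h1 _ (hL.inv x h2), hL.right x h2, h3]
  let ψ' : E → H := fun x => if h : ψ x ∈ H then ⟨ψ x, h⟩ else 0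
  have hψ' : ∀ x ∈ Zs Az, (ψ' x : E) = ψ x := by
    intro x hx
    simp [ψ', hψ x hx]
  have hmap : ∀ y ∈ Zs (fun j : Fin k => restr H (Az j.succ)), χ (y : E) ∈ Zs Az := by
    intro y hy
    rw [hZ2, h1 _ ((hZ y).1 hy)]
    exact ⟨hL.map _ ((hZ y).1 hy), (hH _).1 y.2⟩
  refine ⟨ψ', ⟨hL.pos, hmap, ?_, ?_, ?_, ?_, ?_, ?_, ?_⟩⟩
  · intro x hx
    rw [hZ, hψ' x hx]
    exact hL.inv x ((hZ2 x).1 hx).1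
  · intro y hy
    apply Subtype.ext
    rw [hψ' _ (hmap y hy), hL.left _ ((hZ y).1 hy)]
  · intro x hx
    rw [hψ' x hx, hL.right x ((hZ2 x).1 hx).1]
  · intro x hx y hy
    exact hL.lip _ ((hZ x).1 hx) _ ((hZ y).1 hy)
  · intro x hx y hy
    rw [Submodule.coe_norm, Submodule.coe_sub, hψ' x hx, hψ' y hy]
    exact hL.lip' _ ((hZ2 x).1 hx).1 _ ((hZ2 y).1 hy).1
  · intro r hr x hx
    exact hL.hom r hr _ ((hZ x).1 hx)
  · intro r hr x hx
    have hx1 := ((hZ2 x).1 hx).1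
    have hr2 : ψ (r • x) = r • ψ x := hL.hom' r hr x hx1
    apply Subtype.ext
    rw [Submodule.coe_smul, hψ' x hx, ← hr2]
    have : ψ (r • x) ∈ H := by rw [hr2]; exact H.smul_mem _ (hψ x hx)
    simp [ψ', this]

end step

theorem flow_zero : FlowSt 0 := by
  intro E _ _ _ V a Az hAz hI
  have hv : ∃ v ∈ V, a v ≠ 0 := by
    by_contra hc
    push Not at hc
    have := hI (fun _ => a) (fun j => by
      refine Fin.cases ?_ (fun i => i.elim0) j
      simp) (fun _ => 1) (fun v hv => by simp [hc v hv]) 0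
    norm_num at this
  obtain ⟨v, hv, hav⟩ := hv
  have := straight_flow (A := {a}) hv (by simp) hAz hav (by simp) (fun j => j.elim0)
  rwa [hf_singleton] at this

theorem flow_succ {k : ℕ} (hF : FlowSt k) : FlowSt (k + 1) := by
  intro E _ _ _ V a Az hAz hI
  obtain ⟨a', ha'⟩ := hAz 0
  have hK := key_of_flow hF (Module.finrank ℝ E) E rfl
  have hI0 := hI.remove 0 (a := a) (by simp) (H := LinearMap.ker (a : E →ₗ[ℝ] ℝ)) (by simp)
  have e0 : (fun j => (Fin.cons {a} Az : Fin (k + 2) → Finset (E →L[ℝ] ℝ))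
      (Fin.succAbove 0 j)) = Fin.cons (Az 0) (fun j : Fin k => Az j.succ) := by
    rw [cons_zero_tail]
    funext j
    simp
  rw [e0] at hI0
  obtain ⟨χ, ψ, L, hL, h1, h2⟩ := hK _ a' (Az 0) _ ha' (fun j => hAz _) hI0
  have hH : ∀ x, x ∈ LinearMap.ker (a' : E →ₗ[ℝ] ℝ) ↔ a' x = 0 := by simp
  obtain ⟨ψ', hL'⟩ := restrict_iso hL h1 hH
  have hI1 := hI.remove 1 (a := a') (by simpa using ha') hH
  have e1 : (fun j => (Fin.cons {a} Az : Fin (k + 2) → Finset (E →L[ℝ] ℝ))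
      (Fin.succAbove 1 j)) = Fin.cons {a} (fun j : Fin k => Az j.succ) := by
    funext j
    refine Fin.cases ?_ (fun i => ?_) j
    · simp
    · simp
  rw [e1] at hI1
  have hI2 := hI1.restr
  rw [restr_cons, restr_singleton] at hI2
  obtain ⟨γ, L2, hγ⟩ := hF _ _ _ _ (fun j => restr_nonempty (hAz _)) hI2
  refine ⟨_, _, hγ.transport hL' ?_ ?_⟩
  · intro x hx
    have hx' : (x : E) ∈ Zs (fun j : Fin k => Az j.succ) := by
      intro j
      rw [← hf_restr]
      exact hx j
    have h3 := (h2 x hx').2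
    have h4 : a (χ (x : E) - (x : E)) = 0 := by simpa using h3
    rw [map_sub, sub_eq_zero] at h4
    rw [h4]
    rfl
  · intro x hx y hy hxy
    have hx' : (x : E) ∈ Zs (fun j : Fin k => Az j.succ) := by
      intro j
      rw [← hf_restr]
      exact hx j
    have hy' : (y : E) ∈ Zs (fun j : Fin k => Az j.succ) := by
      intro j
      rw [← hf_restr]
      exact hy j
    have hxy' : (x : E) - (y : E) ∈ V := hxy
    have := V.add_mem (V.sub_mem (h2 x hx').1 (h2 y hy').1) hxy'
    convert this using 1
    abel

theorem flow_all (k : ℕ) : FlowSt k := by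
  induction k with
  | zero => exact flow_zero
  | succ k ih => exact flow_succ ih

theorem final_all (k : ℕ) : ∀ (n : ℕ) (E : Type) [NormedAddCommGroup E] [NormedSpace ℝ E]
    [FiniteDimensional ℝ E] (Az : Fin k → Finset (E →L[ℝ] ℝ)), Module.finrank ℝ E = n + k →
    (∀ j, (Az j).Nonempty) → Ind ⊤ Az →
    ∃ χ ψ L, LIso (Set.univ : Set (EuclideanSpace ℝ (Fin n))) (Zs Az) χ ψ L := by
  induction k with
  | zero =>
    intro n E _ _ _ Az hn hAz hI
    have e : EuclideanSpace ℝ (Fin n) ≃L[ℝ] E :=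
      ContinuousLinearEquiv.ofFinrankEq (by simp [hn])
    refine ⟨e, e.symm, ‖(e : EuclideanSpace ℝ (Fin n) →L[ℝ] E)‖ +
      ‖(e.symm : E →L[ℝ] EuclideanSpace ℝ (Fin n))‖ + 1, ⟨by positivity, ?_, by simp, by simp,
        by simp, ?_, ?_, by simp, by simp⟩⟩
    · intro x _ j
      exact j.elim0
    · intro x _ y _
      have h1 := (e : EuclideanSpace ℝ (Fin n) →L[ℝ] E).le_opNorm (x - y)
      have h2 : 0 ≤ (‖(e.symm : E →L[ℝ] EuclideanSpace ℝ (Fin n))‖ + 1) * ‖x - y‖ := by positivity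
      rw [← map_sub]
      simp only [ContinuousLinearEquiv.coe_coe] at h1
      linarith
    · intro x _ y _
      have h1 := (e.symm : E →L[ℝ] EuclideanSpace ℝ (Fin n)).le_opNorm (x - y)
      have h2 : 0 ≤ (‖(e : EuclideanSpace ℝ (Fin n) →L[ℝ] E)‖ + 1) * ‖x - y‖ := by positivity
      rw [← map_sub]
      simp only [ContinuousLinearEquiv.coe_coe] at h1
      linarith
  | succ k ih =>
    intro n E _ _ _ Az hn hAz hI
    obtain ⟨a', ha'⟩ := hAz 0
    have hI0 := hI
    rw [← cons_zero_tail Az] at hI0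
    obtain ⟨χ, ψ, L, hL, h1, -⟩ := key_of_flow (flow_all k) (Module.finrank ℝ E) E rfl ⊤ a' (Az 0)
      _ ha' (fun j => hAz _) hI0
    have hH : ∀ x, x ∈ LinearMap.ker (a' : E →ₗ[ℝ] ℝ) ↔ a' x = 0 := by simp
    obtain ⟨ψ', hL'⟩ := restrict_iso hL h1 hH
    have hI1 := (hI.remove 0 ha' hH).restr
    rw [Submodule.comap_top] at hI1
    have ha0 : (a' : E →ₗ[ℝ] ℝ) ≠ 0 := by
      intro h0
      have h00 : ∀ v, a' v = 0 := fun v => by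
        have := LinearMap.congr_fun h0 v
        simpa using this
      choose b hb using hAz
      have := hI (Function.update b 0 a') (fun j => by
        by_cases hj : j = 0
        · subst hj
          simpa using subset_convexHull ℝ _ ha'
        · simpa [hj] using subset_convexHull ℝ _ (hb j)) (Pi.single 0 1) (fun v _ => by
          rw [Finset.sum_eq_single 0]
          · simp [h00 v]
          · intro j _ hj
            simp [hj]
          · simp) 0
      simp at this
    have hfr : Module.finrank ℝ (LinearMap.ker (a' : E →ₗ[ℝ] ℝ)) = n + k := by
      have := Module.Dual.finrank_ker_add_one_of_ne_zero (K := ℝ) ha0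
      omega
    obtain ⟨χ2, ψ2, L2, hL2⟩ := ih n _ _ hfr (fun j => restr_nonempty (hAz _)) hI1
    exact ⟨_, _, _, hL2.trans hL'⟩

end RainbowAux


open scoped InnerProductSpace

namespace RainbowAux

section poly
variable {d : ℕ}

/-- supporting data of a facet -/
def FData (P F : Set (EuclideanSpace ℝ (Fin d))) (u : EuclideanSpace ℝ (Fin d)) (α : ℝ) : Prop :=
  u ≠ 0 ∧ (∀ x ∈ P, ⟪u, x⟫_ℝ ≤ α) ∧ F = P ∩ {x | ⟪u, x⟫_ℝ = α} ∧
    Module.finrank ℝ (vectorSpan ℝ F) = d - 1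

theorem int_strict {P : Set (EuclideanSpace ℝ (Fin d))} {p0 u : EuclideanSpace ℝ (Fin d)} {α : ℝ}
    (hp0 : p0 ∈ interior P) (hu : u ≠ 0) (h : ∀ x ∈ P, ⟪u, x⟫_ℝ ≤ α) : ⟪u, p0⟫_ℝ < α := by
  have hc : Continuous (fun t : ℝ => p0 + t • u) := by fun_prop
  have h1 : ∀ᶠ t : ℝ in nhds 0, p0 + t • u ∈ P := by
    have : Filter.Tendsto (fun t : ℝ => p0 + t • u) (nhds 0) (nhds p0) := by
      have := hc.tendsto 0
      simpa using this
    exact this (mem_interior_iff_mem_nhds.1 hp0)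
  obtain ⟨t, ht, htp⟩ := ((h1.filter_mono nhdsWithin_le_nhds).and
    (self_mem_nhdsWithin (a := (0 : ℝ)) (s := Set.Ioi 0))).exists
  have h2 := h _ ht
  rw [inner_add_right, inner_smul_right, real_inner_self_eq_norm_sq] at h2
  have h3 : 0 < ‖u‖ := norm_pos_iff.2 hu
  have h4 : 0 < t := htp
  have : 0 < t * ‖u‖ ^ 2 := by positivity
  linarith

theorem finrank_orth {u : EuclideanSpace ℝ (Fin d)} (hu : u ≠ 0) :
    Module.finrank ℝ (ℝ ∙ u)ᗮ = d - 1 := by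
  have h1 := Submodule.finrank_add_finrank_orthogonal (ℝ ∙ u)
  rw [finrank_span_singleton hu, finrank_euclideanSpace_fin] at h1
  omega

theorem vectorSpan_le_orth {F : Set (EuclideanSpace ℝ (Fin d))} {u : EuclideanSpace ℝ (Fin d)}
    {α : ℝ} (h : ∀ x ∈ F, ⟪u, x⟫_ℝ = α) : vectorSpan ℝ F ≤ (ℝ ∙ u)ᗮ := by
  rw [vectorSpan_def, Submodule.span_le]
  rintro _ ⟨x, hx, y, hy, rfl⟩
  rw [SetLike.mem_coe, Submodule.mem_orthogonal_singleton_iff_inner_right]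
  show ⟪u, x -ᵥ y⟫_ℝ = 0
  rw [vsub_eq_sub, inner_sub_right, h x hx, h y hy, sub_self]

theorem FData.vectorSpan {P F : Set (EuclideanSpace ℝ (Fin d))} {u : EuclideanSpace ℝ (Fin d)}
    {α : ℝ} (h : FData P F u α) : vectorSpan ℝ F = (ℝ ∙ u)ᗮ := by
  obtain ⟨hu, h1, h2, h3⟩ := h
  apply Submodule.eq_of_le_of_finrank_eq
  · apply vectorSpan_le_orth (α := α)
    intro x hx
    rw [h2] at hx
    exact hx.2
  · rw [h3, finrank_orth hu]

theorem face_eq {V : Finset (EuclideanSpace ℝ (Fin d))} {u : EuclideanSpace ℝ (Fin d)} {α : ℝ}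
    (h : ∀ x ∈ convexHull ℝ (V : Set (EuclideanSpace ℝ (Fin d))), ⟪u, x⟫_ℝ ≤ α) :
    convexHull ℝ (V : Set (EuclideanSpace ℝ (Fin d))) ∩ {x | ⟪u, x⟫_ℝ = α} ⊆
      convexHull ℝ ((V : Set (EuclideanSpace ℝ (Fin d))) ∩
        (convexHull ℝ (V : Set (EuclideanSpace ℝ (Fin d))) ∩ {x | ⟪u, x⟫_ℝ = α})) := by
  classical
  rintro x ⟨hx, hxα⟩
  have hxα : ⟪u, x⟫_ℝ = α := hxα
  obtain ⟨w, hw0, hw1, hwx⟩ := Finset.mem_convexHull'.1 hx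
  have hsum : ∑ v ∈ V, w v * (α - ⟪u, v⟫_ℝ) = 0 := by
    simp only [mul_sub, Finset.sum_sub_distrib]
    rw [← Finset.sum_mul, hw1, one_mul, ← hxα, ← hwx, inner_sum]
    simp only [inner_smul_right, sub_self]
  have hVα : ∀ v ∈ V, ⟪u, v⟫_ℝ ≤ α := fun v hv => h v (subset_convexHull ℝ _ hv)
  have hz := (Finset.sum_eq_zero_iff_of_nonneg (fun v hv =>
    mul_nonneg (hw0 v hv) (sub_nonneg.2 (hVα v hv)))).1 hsum
  have hz' : ∀ v ∈ V, w v ≠ 0 → ⟪u, v⟫_ℝ = α := by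
    intro v hv hwv
    rcases mul_eq_zero.1 (hz v hv) with h1 | h1
    · exact absurd h1 hwv
    · linarith
  have hset : ((V : Set (EuclideanSpace ℝ (Fin d))) ∩
        (convexHull ℝ (V : Set (EuclideanSpace ℝ (Fin d))) ∩ {x | ⟪u, x⟫_ℝ = α})) =
      ((V.filter (fun v => ⟪u, v⟫_ℝ = α) : Finset _) : Set (EuclideanSpace ℝ (Fin d))) := by
    ext v
    simp only [Set.mem_inter_iff, Finset.coe_filter, Finset.mem_coe, Set.mem_ofPred_eq]
    constructor
    · rintro ⟨h1, -, h2⟩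
      exact ⟨h1, h2⟩
    · rintro ⟨h1, h2⟩
      exact ⟨h1, subset_convexHull ℝ _ h1, h2⟩
  rw [hset, Finset.mem_convexHull']
  refine ⟨w, fun v hv => hw0 v (Finset.mem_filter.1 hv).1, ?_, ?_⟩
  · rw [← hw1]
    apply Finset.sum_filter_of_ne
    exact fun v hv hwv => hz' v hv hwv
  · rw [← hwx]
    apply Finset.sum_filter_of_ne
    intro v hv hwv
    apply hz' v hv
    intro h0
    exact hwv (by rw [h0, zero_smul])

theorem facets_finite (V : Finset (EuclideanSpace ℝ (Fin d))) :
    {F | IsFacet (convexHull ℝ (V : Set (EuclideanSpace ℝ (Fin d)))) F}.Finite := by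
  have hinj : Set.InjOn (fun F : Set (EuclideanSpace ℝ (Fin d)) => (V : Set _) ∩ F)
      {F | IsFacet (convexHull ℝ (V : Set (EuclideanSpace ℝ (Fin d)))) F} := by
    have key : ∀ F, IsFacet (convexHull ℝ (V : Set (EuclideanSpace ℝ (Fin d)))) F →
        F = convexHull ℝ ((V : Set _) ∩ F) := by
      rintro F ⟨-, u, α, hu, h1, h2, h3⟩
      apply Set.Subset.antisymm
      · have := face_eq h1
        rwa [← h2] at this
      · apply convexHull_min Set.inter_subset_right
        rw [h2]
        refine (convex_convexHull ℝ _).inter ?_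
        intro x hx y hy s t _ _ hst
        have hx : ⟪u, x⟫_ℝ = α := hx
        have hy : ⟪u, y⟫_ℝ = α := hy
        show ⟪u, s • x + t • y⟫_ℝ = α
        rw [inner_add_right, inner_smul_right, inner_smul_right, hx, hy, ← add_mul, hst, one_mul]
    intro F hF F' hF' h
    have h : (V : Set _) ∩ F = (V : Set _) ∩ F' := h
    rw [key F hF, h, ← key F' hF']
  apply Set.Finite.of_finite_image _ hinj
  apply (V.finite_toSet.powerset).subset
  rintro _ ⟨F, -, rfl⟩
  exact Set.inter_subset_left

/-- every boundary point lies on a facet -/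
theorem exists_facet {V : Finset (EuclideanSpace ℝ (Fin d))}
    {P : Set (EuclideanSpace ℝ (Fin d))} (hP : P = convexHull ℝ (V : Set _))
    {p0 : EuclideanSpace ℝ (Fin d)} (hp0 : p0 ∈ interior P)
    {y : EuclideanSpace ℝ (Fin d)} (hy : y ∈ P) (hy' : y ∉ interior P) :
    ∃ F, IsFacet P F ∧ y ∈ F := by
  classical
  have hconv : Convex ℝ P := hP ▸ convex_convexHull ℝ _
  let Good : EuclideanSpace ℝ (Fin d) → Prop := fun u => u ≠ 0 ∧ ∀ v ∈ V, ⟪u, v - y⟫_ℝ ≤ 0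
  let W : EuclideanSpace ℝ (Fin d) → Submodule ℝ (EuclideanSpace ℝ (Fin d)) := fun u =>
    Submodule.span ℝ ((fun v => v - y) '' {v | v ∈ V ∧ ⟪u, v - y⟫_ℝ = 0})
  have hVP : ∀ v ∈ V, v ∈ P := fun v hv => hP ▸ subset_convexHull ℝ _ hv
  have hPV : ∀ (u : EuclideanSpace ℝ (Fin d)) (α : ℝ), (∀ v ∈ V, ⟪u, v⟫_ℝ ≤ α) →
      ∀ x ∈ P, ⟪u, x⟫_ℝ ≤ α := by
    intro u α h x hx
    rw [hP] at hx
    have h1 : convexHull ℝ (V : Set (EuclideanSpace ℝ (Fin d))) ⊆ {x | ⟪u, x⟫_ℝ ≤ α} := by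
      apply convexHull_min
      · exact fun v hv => h v hv
      · exact convex_halfSpace_le (f := fun x => ⟪u, x⟫_ℝ) (by
          constructor
          · intro a b; exact inner_add_right _ _ _
          · intro a b; exact inner_smul_right _ _ _) α
    exact h1 hx
  have hgood : ∃ u, Good u := by
    obtain ⟨f, hf⟩ := geometric_hahn_banach_open_point hconv.interior isOpen_interior hy'
    let u := (InnerProductSpace.toDual ℝ (EuclideanSpace ℝ (Fin d))).symm f
    have hu : ∀ x, ⟪u, x⟫_ℝ = f x := fun x => InnerProductSpace.toDual_symm_apply
    refine ⟨u, ?_, ?_⟩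
    · intro h0
      have h1 := hf p0 hp0
      rw [← hu, ← hu, h0] at h1
      simp at h1
    · intro v hv
      have h1 : v ∈ closure (interior P) := by
        rw [hconv.closure_interior_eq_closure_of_nonempty_interior ⟨p0, hp0⟩]
        exact subset_closure (hVP v hv)
      have h2 : closure (interior P) ⊆ {x | f x ≤ f y} :=
        closure_minimal (fun x hx => (hf x hx).le)
          (isClosed_le f.continuous continuous_const)
      have h3 : f v ≤ f y := h2 h1
      rw [inner_sub_right, hu, hu]
      linarith
  let S : Set ℕ := {n | ∃ u, Good u ∧ Module.finrank ℝ (W u) = n}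
  have hSne : S.Nonempty := by
    obtain ⟨u, hu⟩ := hgood
    exact ⟨_, u, hu, rfl⟩
  have hSb : BddAbove S := by
    refine ⟨d, ?_⟩
    rintro n ⟨u, -, rfl⟩
    have := Submodule.finrank_le (W u)
    rwa [finrank_euclideanSpace_fin] at this
  obtain ⟨u, hu, hmax⟩ := Nat.sSup_mem hSne hSb
  have hWu : W u ≤ (ℝ ∙ u)ᗮ := by
    rw [Submodule.span_le]
    rintro _ ⟨v, ⟨hv, hv0⟩, rfl⟩
    rw [SetLike.mem_coe, Submodule.mem_orthogonal_singleton_iff_inner_right]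
    exact hv0
  have hdim : Module.finrank ℝ (W u) = d - 1 := by
    refine le_antisymm ((Submodule.finrank_mono hWu).trans (finrank_orth hu.1).le) ?_
    by_contra hlt
    push Not at hlt
    -- a direction orthogonal to `W u` and `u`
    have hQ : (W u ⊔ (ℝ ∙ u)) ≠ ⊤ := by
      intro htop
      have h1 := Submodule.finrank_add_le_finrank_add_finrank (W u) (ℝ ∙ u)
      rw [htop, finrank_top, finrank_euclideanSpace_fin, finrank_span_singleton hu.1] at h1
      omega
    have hQ' : (W u ⊔ (ℝ ∙ u))ᗮ ≠ ⊥ := by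
      rwa [Ne, Submodule.orthogonal_eq_bot_iff]
    obtain ⟨w0, hw0, hw00⟩ := Submodule.exists_mem_ne_zero_of_ne_bot hQ'
    have hspan : ∃ v ∈ V, ⟪w0, v - y⟫_ℝ ≠ 0 := by
      by_contra hc
      push Not at hc
      have h1 : ∀ v ∈ V, ⟪w0, v⟫_ℝ = ⟪w0, y⟫_ℝ := by
        intro v hv
        have := hc v hv
        rw [inner_sub_right] at this
        linarith
      have h2 := int_strict hp0 hw00 (hPV w0 _ (fun v hv => (h1 v hv).le))
      have h3 := int_strict hp0 (neg_ne_zero.2 hw00) (hPV (-w0) (-⟪w0, y⟫_ℝ) (fun v hv => by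
        rw [inner_neg_left, h1 v hv]))
      rw [inner_neg_left] at h3
      linarith
    have hw : ∃ w ∈ (W u ⊔ (ℝ ∙ u))ᗮ, ∃ v ∈ V, 0 < ⟪w, v - y⟫_ℝ := by
      obtain ⟨v, hv, hne⟩ := hspan
      rcases lt_or_gt_of_ne hne with h | h
      · refine ⟨-w0, Submodule.neg_mem _ hw0, v, hv, ?_⟩
        rw [inner_neg_left]
        linarith
      · exact ⟨w0, hw0, v, hv, h⟩
    obtain ⟨w, hwQ, v0, hv0, hv0p⟩ := hw
    have hwW : ∀ z ∈ W u, ⟪w, z⟫_ℝ = 0 := by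
      intro z hz
      rw [real_inner_comm]
      exact (Submodule.mem_orthogonal _ _).1 hwQ z (Submodule.mem_sup_left hz)
    have hwu : ⟪w, u⟫_ℝ = 0 := by
      rw [real_inner_comm]
      exact (Submodule.mem_orthogonal _ _).1 hwQ u
        (Submodule.mem_sup_right (Submodule.mem_span_singleton_self u))
    obtain ⟨v1, hv1, hmin⟩ := Finset.exists_min_image (V.filter (fun v => 0 < ⟪w, v - y⟫_ℝ))
      (fun v => -⟪u, v - y⟫_ℝ / ⟪w, v - y⟫_ℝ) ⟨v0, Finset.mem_filter.2 ⟨hv0, hv0p⟩⟩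
    obtain ⟨hv1V, hv1p⟩ := Finset.mem_filter.1 hv1
    let t : ℝ := -⟪u, v1 - y⟫_ℝ / ⟪w, v1 - y⟫_ℝ
    have ht : 0 ≤ t := div_nonneg (neg_nonneg.2 (hu.2 v1 hv1V)) hv1p.le
    have hu'e : ∀ z, ⟪u + t • w, z⟫_ℝ = ⟪u, z⟫_ℝ + t * ⟪w, z⟫_ℝ := by
      intro z
      rw [inner_add_left, real_inner_smul_left]
    have hg' : Good (u + t • w) := by
      refine ⟨?_, ?_⟩
      · intro h0
        have := hu'e u
        rw [h0, inner_zero_left, hwu, mul_zero, add_zero] at this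
        exact hu.1 (inner_self_eq_zero.1 this.symm)
      · intro v hv
        rw [hu'e]
        by_cases hp : 0 < ⟪w, v - y⟫_ℝ
        · have h1 := hmin v (Finset.mem_filter.2 ⟨hv, hp⟩)
          have h2 : t * ⟪w, v - y⟫_ℝ ≤ -⟪u, v - y⟫_ℝ := by
            rw [← le_div_iff₀ hp]
            exact h1
          linarith
        · have h1 := mul_nonneg ht (neg_nonneg.2 (not_lt.1 hp))
          have h2 := hu.2 v hv
          linarith
    have hlt' : W u < W (u + t • w) := by
      refine lt_of_le_of_ne ?_ ?_
      · apply Submodule.span_mono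
        rintro _ ⟨v, ⟨hv, hv0⟩, rfl⟩
        refine ⟨v, ⟨hv, ?_⟩, rfl⟩
        rw [hu'e, hv0, hwW (v - y) (Submodule.subset_span ⟨v, ⟨hv, hv0⟩, rfl⟩)]
        ring
      · intro he
        have h1 : v1 - y ∈ W (u + t • w) := by
          refine Submodule.subset_span ⟨v1, ⟨hv1V, ?_⟩, rfl⟩
          rw [hu'e]
          simp only [t]
          field_simp
          ring
        rw [← he] at h1
        have := hwW _ h1
        linarith
    have h1 := Submodule.finrank_lt_finrank_of_lt hlt'
    have h2 : Module.finrank ℝ (W (u + t • w)) ≤ sSup S := le_csSup hSb ⟨_, hg', rfl⟩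
    omega
  have hsup : ∀ x ∈ P, ⟪u, x⟫_ℝ ≤ ⟪u, y⟫_ℝ := hPV u _ (fun v hv => by
    have := hu.2 v hv
    rw [inner_sub_right] at this
    linarith)
  have hyF : y ∈ P ∩ {x | ⟪u, x⟫_ℝ = ⟪u, y⟫_ℝ} := ⟨hy, rfl⟩
  refine ⟨P ∩ {x | ⟪u, x⟫_ℝ = ⟪u, y⟫_ℝ}, ⟨⟨y, hyF⟩, u, _, hu.1, hsup, rfl, ?_⟩, hyF⟩
  apply le_antisymm
  · rw [← finrank_orth hu.1]
    exact Submodule.finrank_mono (vectorSpan_le_orth (α := ⟪u, y⟫_ℝ) (fun x hx => hx.2))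
  · rw [← hdim]
    apply Submodule.finrank_mono
    rw [Submodule.span_le]
    rintro _ ⟨v, ⟨hv, hv0⟩, rfl⟩
    refine vsub_mem_vectorSpan ℝ (?_ : v ∈ _) hyF
    refine ⟨hVP v hv, ?_⟩
    show ⟪u, v⟫_ℝ = ⟪u, y⟫_ℝ
    rw [inner_sub_right] at hv0
    linarith

theorem exists_violated {V : Finset (EuclideanSpace ℝ (Fin d))}
    {P : Set (EuclideanSpace ℝ (Fin d))} (hP : P = convexHull ℝ (V : Set _))
    {p0 : EuclideanSpace ℝ (Fin d)} (hp0 : p0 ∈ interior P)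
    {X : EuclideanSpace ℝ (Fin d)} (hX : X ∉ P) :
    ∃ F, IsFacet P F ∧ ∀ u α, FData P F u α → α < ⟪u, X⟫_ℝ := by
  have hclosed : IsClosed P := by
    rw [hP]
    exact (V.finite_toSet.isCompact_convexHull ℝ).isClosed
  have hex : ∃ y ∈ segment ℝ p0 X, y ∈ P ∧ y ∉ interior P := by
    by_contra hc
    push Not at hc
    have hpre : IsPreconnected (segment ℝ p0 X) := (convex_segment p0 X).isPreconnected
    have h1 := hpre (interior P) Pᶜ isOpen_interior hclosed.isOpen_compl (by
      intro y hy
      by_cases hyP : y ∈ P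
      · exact Or.inl (hc y hy hyP)
      · exact Or.inr hyP) ⟨p0, left_mem_segment ℝ _ _, hp0⟩ ⟨X, right_mem_segment ℝ _ _, hX⟩
    obtain ⟨y, -, h2, h3⟩ := h1
    exact h3 (interior_subset h2)
  obtain ⟨y, ⟨s, t, hs, ht, hst, rfl⟩, hyP, hyi⟩ := hex
  obtain ⟨F, hF, hyF⟩ := exists_facet hP hp0 hyP hyi
  refine ⟨F, hF, ?_⟩
  rintro u α ⟨hu, h1, h2, -⟩
  have h3 := int_strict hp0 hu h1
  rw [h2] at hyF
  have h4 : ⟪u, s • p0 + t • X⟫_ℝ = α := hyF.2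
  rw [inner_add_right, inner_smul_right, inner_smul_right] at h4
  by_contra hle
  push Not at hle
  have hs0 : s ≠ 0 := by
    rintro rfl
    have : t = 1 := by linarith
    subst this
    simp at hyP
    exact hX hyP
  have hsp : 0 < s := lt_of_le_of_ne hs (Ne.symm hs0)
  have h5 := mul_lt_mul_of_pos_left h3 hsp
  have h6 := mul_le_mul_of_nonneg_left hle ht
  have h7 : s * α + t * α = α := by rw [← add_mul, hst, one_mul]
  linarith

theorem visible_iff {P F : Set (EuclideanSpace ℝ (Fin d))} (hconv : Convex ℝ P)
    {p0 : EuclideanSpace ℝ (Fin d)} (hp0 : p0 ∈ interior P)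
    {u : EuclideanSpace ℝ (Fin d)} {α : ℝ} (hne : F.Nonempty) (hF : FData P F u α)
    {p : EuclideanSpace ℝ (Fin d)} (hp : p ∉ P) :
    FacetVisibleFrom P F p ↔ α < ⟪u, p⟫_ℝ := by
  have hspan := hF.vectorSpan
  obtain ⟨hu, h1, h2, -⟩ := hF
  have hFα : ∀ x ∈ F, ⟪u, x⟫_ℝ = α := by
    intro x hx
    rw [h2] at hx
    exact hx.2
  have hFP : F ⊆ P := by
    rw [h2]
    exact Set.inter_subset_left
  have hFconv : Convex ℝ F := by
    rw [h2]
    refine hconv.inter ?_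
    intro x hx y hy s t _ _ hst
    have hx : ⟪u, x⟫_ℝ = α := hx
    have hy : ⟪u, y⟫_ℝ = α := hy
    show ⟪u, s • x + t • y⟫_ℝ = α
    rw [inner_add_right, inner_smul_right, inner_smul_right, hx, hy, ← add_mul, hst, one_mul]
  constructor
  · intro hvis
    by_contra hle
    push Not at hle
    obtain ⟨q, hq⟩ := Set.Nonempty.intrinsicInterior hFconv hne
    have hqF : q ∈ F := intrinsicInterior_subset hq
    have h3 := int_strict hp0 hu h1
    let l : ℝ := (⟪u, p⟫_ℝ - α) / (⟪u, p0⟫_ℝ - α)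
    have hl : 0 ≤ l := div_nonneg_of_nonpos (by linarith) (by linarith)
    let w := p - q - l • (p0 - q)
    have hwu : ⟪u, w⟫_ℝ = 0 := by
      simp only [w, inner_sub_right, inner_smul_right, hFα q hqF, l]
      have : ⟪u, p0⟫_ℝ - α ≠ 0 := by linarith
      field_simp
      ring
    have hwV : w ∈ vectorSpan ℝ F := by
      rw [hspan, Submodule.mem_orthogonal_singleton_iff_inner_right]
      exact hwu
    obtain ⟨q', hq', hqq⟩ := mem_intrinsicInterior.1 hq
    have hmem : ∀ t : ℝ, t • w +ᵥ q ∈ affineSpan ℝ F := by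
      intro t
      apply AffineSubspace.vadd_mem_of_mem_direction
      · rw [direction_affineSpan]
        exact Submodule.smul_mem _ _ hwV
      · exact subset_affineSpan ℝ F hqF
    have hcont : Continuous (fun t : ℝ => (⟨t • w +ᵥ q, hmem t⟩ : affineSpan ℝ F)) := by
      apply Continuous.subtype_mk
      simp only [vadd_eq_add]
      fun_prop
    have hev : ∀ᶠ t : ℝ in nhds 0, t • w + q ∈ F := by
      have h5 := hcont.tendsto 0
      have h6 : (⟨(0 : ℝ) • w +ᵥ q, hmem 0⟩ : affineSpan ℝ F) = q' := by
        apply Subtype.ext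
        rw [hqq]
        simp
      rw [h6] at h5
      exact h5 (mem_interior_iff_mem_nhds.1 hq')
    have hev2 : ∀ᶠ t : ℝ in nhds 0, t * l < 1 ∧ t < 1 := by
      refine Filter.Eventually.and ?_ ?_
      · have : Continuous (fun t : ℝ => t * l) := by fun_prop
        exact this.continuousAt.eventually_lt continuousAt_const (by simp)
      · exact eventually_lt_nhds one_pos
    obtain ⟨t, ⟨ht1, ht2, ht3⟩, ht⟩ := (((hev.and hev2).filter_mono nhdsWithin_le_nhds).and
      (self_mem_nhdsWithin (a := (0 : ℝ)) (s := Set.Ioi 0))).exists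
    have ht : 0 < t := ht
    have hz1 : q + (t * l) • (p0 - q) ∈ P := by
      have := hconv (hFP hqF) (interior_subset hp0) (a := 1 - t * l) (b := t * l)
        (by linarith) (by positivity) (by ring)
      convert this using 1
      module
    have hz2 : q + (t / 2) • (p - q) ∈ P := by
      have := hconv (hFP ht1) hz1 (a := 1 / 2) (b := 1 / 2)
        (by norm_num) (by norm_num) (by norm_num)
      convert this using 1
      simp only [w]
      module
    have hz3 : q + (t / 2) • (p - q) ∈ segment ℝ q p := by
      refine ⟨1 - t / 2, t / 2, by linarith, by linarith, by ring, ?_⟩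
      module
    have hz4 : q + (t / 2) • (p - q) ∈ P ∩ segment ℝ q p := ⟨hz2, hz3⟩
    have hv : P ∩ segment ℝ q p = {q} := hvis q hq
    rw [hv, Set.mem_singleton_iff] at hz4
    have hz5 : (t / 2) • (p - q) = 0 := by simpa using hz4
    rcases smul_eq_zero.1 hz5 with h | h
    · linarith
    · rw [sub_eq_zero.1 h] at hp
      exact hp (hFP hqF)
  · intro hlt q hq
    have hqF : q ∈ F := intrinsicInterior_subset hq
    show P ∩ segment ℝ q p = {q}
    apply Set.Subset.antisymm
    · rintro z ⟨hzP, s, t, hs, ht, hst, rfl⟩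
      have h3 := h1 _ hzP
      rw [inner_add_right, inner_smul_right, inner_smul_right, hFα q hqF] at h3
      have h4 : t = 0 := by
        by_contra h0
        have htp : 0 < t := lt_of_le_of_ne ht (Ne.symm h0)
        have h5 := mul_lt_mul_of_pos_left hlt htp
        have h7 : s * α + t * α = α := by rw [← add_mul, hst, one_mul]
        linarith
      subst h4
      have : s = 1 := by linarith
      subst this
      simp
    · rintro z rfl
      exact ⟨hFP hqF, left_mem_segment ℝ _ _⟩

end poly
end RainbowAux


open scoped InnerProductSpace

namespace RainbowAux

/-- radial projection of the cone to the slice and to the sphere -/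
theorem cone_slice_homeo {X Y : Type} [NormedAddCommGroup X] [NormedSpace ℝ X]
    [NormedAddCommGroup Y] [NormedSpace ℝ Y] {Z : Set (X × ℝ)} {χ : Y → X × ℝ} {ψ : X × ℝ → Y}
    {L : ℝ} (h : LIso (Set.univ : Set Y) Z χ ψ L)
    (hcone : ∀ r : ℝ, 0 < r → ∀ z ∈ Z, r • z ∈ Z)
    (hpos : ∀ z ∈ Z, z ≠ 0 → 0 < z.2) :
    Nonempty ({x : X // (x, (1 : ℝ)) ∈ Z} ≃ₜ Metric.sphere (0 : Y) 1) := by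
  have hχ0 : χ 0 = 0 := by
    have := h.hom 2 (by norm_num) 0 (Set.mem_univ _)
    rw [smul_zero, two_smul] at this
    simpa using this
  have hχc : Continuous χ := by
    have : LipschitzWith (Real.toNNReal L) χ := by
      apply LipschitzWith.of_dist_le_mul
      intro x y
      rw [dist_eq_norm, dist_eq_norm, Real.coe_toNNReal _ h.pos.le]
      exact h.lip x (Set.mem_univ _) y (Set.mem_univ _)
    exact this.continuous
  have hψc : ContinuousOn ψ Z := by
    have : LipschitzOnWith (Real.toNNReal L) ψ Z := by
      apply LipschitzOnWith.of_dist_le_mul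
      intro x hx y hy
      rw [dist_eq_norm, dist_eq_norm, Real.coe_toNNReal _ h.pos.le]
      exact h.lip' x hx y hy
    exact this.continuousOn
  have hψne : ∀ x : {x : X // (x, (1 : ℝ)) ∈ Z}, ψ (x.1, 1) ≠ 0 := by
    intro x hx
    have := h.right _ x.2
    rw [hx, hχ0] at this
    have := congrArg Prod.snd this
    simp at this
  have hψc' : Continuous (fun x : {x : X // (x, (1 : ℝ)) ∈ Z} => ψ (x.1, 1)) :=
    hψc.comp_continuous (by fun_prop) (fun x => x.2)
  have hs : ∀ y : Metric.sphere (0 : Y) 1, 0 < (χ y.1).2 := by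
    intro y
    apply hpos _ (h.map _ (Set.mem_univ _))
    intro h0
    have h1 := h.left y.1 (Set.mem_univ _)
    have h2 := h.left 0 (Set.mem_univ _)
    rw [h0] at h1
    rw [hχ0] at h2
    have h3 := y.2
    rw [← h1, h2] at h3
    simp at h3
  have hsc : ∀ y : Metric.sphere (0 : Y) 1,
      (((χ y.1).2)⁻¹ • (χ y.1).1, (1 : ℝ)) = ((χ y.1).2)⁻¹ • χ y.1 := by
    intro y
    ext
    · rfl
    · simp [(hs y).ne']
  refine ⟨⟨⟨fun x => ⟨(‖ψ (x.1, 1)‖)⁻¹ • ψ (x.1, 1), ?_⟩,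
    fun y => ⟨((χ y.1).2)⁻¹ • (χ y.1).1, ?_⟩, ?_, ?_⟩, ?_, ?_⟩⟩
  · have := hψne x
    rw [mem_sphere_zero_iff_norm, norm_smul, norm_inv, norm_norm,
      inv_mul_cancel₀ (norm_ne_zero_iff.2 this)]
  · rw [hsc]
    exact hcone _ (inv_pos.2 (hs y)) _ (h.map _ (Set.mem_univ _))
  · intro x
    have hn : 0 < ‖ψ (x.1, 1)‖ := norm_pos_iff.2 (hψne x)
    apply Subtype.ext
    show ((χ ((‖ψ (x.1, 1)‖)⁻¹ • ψ (x.1, 1))).2)⁻¹ • (χ ((‖ψ (x.1, 1)‖)⁻¹ • ψ (x.1, 1))).1 = x.1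
    rw [h.hom _ (inv_pos.2 hn) _ (Set.mem_univ _), h.right _ x.2]
    simp [smul_smul, hn.ne']
  · intro y
    apply Subtype.ext
    show (‖ψ (((χ y.1).2)⁻¹ • (χ y.1).1, 1)‖)⁻¹ • ψ (((χ y.1).2)⁻¹ • (χ y.1).1, 1) = y.1
    have hy : ‖y.1‖ = 1 := mem_sphere_zero_iff_norm.1 y.2
    rw [hsc, h.hom' _ (inv_pos.2 (hs y)) _ (h.map _ (Set.mem_univ _)), h.left _ (Set.mem_univ _),
      norm_smul, hy, smul_smul]
    have h1 := hs y
    rw [Real.norm_of_nonneg (inv_pos.2 h1).le, mul_one, inv_mul_cancel₀ (inv_pos.2 h1).ne',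
      one_smul]
  · apply Continuous.subtype_mk
    exact (hψc'.norm.inv₀ (fun x => norm_ne_zero_iff.2 (hψne x))).smul hψc'
  · apply Continuous.subtype_mk
    have h1 : Continuous (fun y : Metric.sphere (0 : Y) 1 => χ y.1) :=
      hχc.comp continuous_subtype_val
    exact (h1.snd.inv₀ (fun y => (hs y).ne')).smul h1.fst

/-- values of elements of a convex hull of functionals -/
theorem hull_le {E : Type} [NormedAddCommGroup E] [NormedSpace ℝ E] {S : Set (E →L[ℝ] ℝ)}
    {v : E} {a : ℝ} (h : ∀ w ∈ S, w v ≤ a) {u : E →L[ℝ] ℝ} (hu : u ∈ convexHull ℝ S) :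
    u v ≤ a := by
  have : convexHull ℝ S ⊆ {w : E →L[ℝ] ℝ | w v ≤ a} := by
    apply convexHull_min h
    intro x hx y hy s t hs ht hst
    have hx : x v ≤ a := hx
    have hy : y v ≤ a := hy
    show s * x v + t * y v ≤ a
    have e : a = s * a + t * a := by rw [← add_mul, hst, one_mul]
    rw [e]
    gcongr
  exact this hu

theorem hull_lt {E : Type} [NormedAddCommGroup E] [NormedSpace ℝ E] {S : Set (E →L[ℝ] ℝ)}
    {v : E} {a : ℝ} (h : ∀ w ∈ S, w v < a) {u : E →L[ℝ] ℝ} (hu : u ∈ convexHull ℝ S) :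
    u v < a := by
  have : convexHull ℝ S ⊆ {w : E →L[ℝ] ℝ | w v < a} := by
    apply convexHull_min h
    intro x hx y hy s t hs ht hst
    have hx : x v < a := hx
    have hy : y v < a := hy
    show s * x v + t * y v < a
    have e : a = s * a + t * a := by rw [← add_mul, hst, one_mul]
    rcases hs.eq_or_lt with rfl | hs
    · rw [zero_add] at hst; subst hst; simpa using hy
    · rw [e]
      exact add_lt_add_of_lt_of_le (by gcongr) (by gcongr)
  exact this hu

theorem hull_gt {E : Type} [NormedAddCommGroup E] [NormedSpace ℝ E] {S : Set (E →L[ℝ] ℝ)}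
    {v : E} {a : ℝ} (h : ∀ w ∈ S, a < w v) {u : E →L[ℝ] ℝ} (hu : u ∈ convexHull ℝ S) :
    a < u v := by
  have := hull_lt (v := -v) (a := -a) (S := S) (by intro w hw; have := h w hw; simpa using this) hu
  simpa using this

/-- rays are not contained in bounded sets -/
theorem ray_bounded {X : Type} [NormedAddCommGroup X] [NormedSpace ℝ X] {P : Set X}
    (hb : Bornology.IsBounded P) {p0 w : X} (h : ∀ t : ℝ, 0 ≤ t → p0 + t • w ∈ P) : w = 0 := by
  obtain ⟨C, hC⟩ := hb.exists_norm_le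
  by_contra hw
  have hw' : 0 < ‖w‖ := norm_pos_iff.2 hw
  have h0 := hC _ (h 0 le_rfl)
  simp only [zero_smul, add_zero] at h0
  have hC0 : 0 ≤ C := (norm_nonneg _).trans h0
  have h1 := hC _ (h ((2 * C + 1) / ‖w‖) (by positivity))
  have h2 : ‖((2 * C + 1) / ‖w‖) • w‖ = 2 * C + 1 := by
    rw [norm_smul, Real.norm_of_nonneg (by positivity)]
    field_simp
  have h3 : ‖((2 * C + 1) / ‖w‖) • w‖ ≤ ‖p0 + ((2 * C + 1) / ‖w‖) • w‖ + ‖p0‖ := by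
    have := norm_sub_le (p0 + ((2 * C + 1) / ‖w‖) • w) p0
    simpa using this
  linarith

theorem main_aux {d m : ℕ} (hm : 2 ≤ m) (hmd : m ≤ d)
    (P : Set (EuclideanSpace ℝ (Fin d)))
    (hpoly : ∃ V : Finset (EuclideanSpace ℝ (Fin d)), P = convexHull ℝ (V : Set _))
    (hfull : (interior P).Nonempty)
    (c : Set (EuclideanSpace ℝ (Fin d)) → Fin m)
    (hvis : ∀ I : Finset (Fin m), I.Nonempty → I ≠ Finset.univ →
      VisibleFacetSet P {F | IsFacet P F ∧ c F ∈ I} ∨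
      CovisibleFacetSet P {F | IsFacet P F ∧ c F ∈ I}) :
    Nonempty (
      {x : EuclideanSpace ℝ (Fin d) // x ∈ frontier P ∧
          ∀ j : Fin m, ∃ F, IsFacet P F ∧ c F = j ∧ x ∈ F}
        ≃ₜ Metric.sphere (0 : EuclideanSpace ℝ (Fin (d - m + 1))) 1) := by
  classical
  obtain ⟨V, hV⟩ := hpoly
  obtain ⟨p0, hp0⟩ := hfull
  have hcpt : IsCompact P := by
    rw [hV]; exact V.finite_toSet.isCompact_convexHull ℝ
  have hbdd := hcpt.isBounded
  have hconv : Convex ℝ P := by rw [hV]; exact convex_convexHull ℝ _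
  have hfin : {F | IsFacet P F}.Finite := by rw [hV]; exact facets_finite V
  have hdat : ∀ F, ∃ q : EuclideanSpace ℝ (Fin d) × ℝ, IsFacet P F → FData P F q.1 q.2 := by
    intro F
    by_cases hF : IsFacet P F
    · obtain ⟨_, u, α, h⟩ := hF
      exact ⟨(u, α), fun _ => h⟩
    · exact ⟨0, fun h => absurd h hF⟩
  choose q hq using hdat
  have hstrictp : ∀ F, IsFacet P F → ⟪(q F).1, p0⟫_ℝ < (q F).2 := fun F hF =>
    int_strict hp0 (hq F hF).1 (hq F hF).2.1
  have hmemP : ∀ X, (∀ F, IsFacet P F → ⟪(q F).1, X⟫_ℝ ≤ (q F).2) → X ∈ P := by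
    intro X hX
    by_contra hXP
    obtain ⟨F, hF, h⟩ := exists_violated hV hp0 hXP
    exact absurd (h _ _ (hq F hF)) (not_lt.2 (hX F hF))
  have hvi : ∀ F, IsFacet P F → ∀ p, p ∉ P → (FacetVisibleFrom P F p ↔ (q F).2 < ⟪(q F).1, p⟫_ℝ) :=
    fun F hF p hp => visible_iff hconv hp0 hF.1 (hq F hF) hp
  -- no point sees all facets
  have hnot : ∀ p, p ∉ P → ∃ F, IsFacet P F ∧ ⟪(q F).1, p⟫_ℝ ≤ (q F).2 := by
    intro p hp
    by_contra! hcon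
    have : p0 - p = 0 := by
      apply ray_bounded hbdd (p0 := p0)
      intro t ht
      apply hmemP
      intro F hF
      have h1 := hstrictp F hF
      have h2 := hcon F hF
      rw [inner_add_right, inner_smul_right, inner_sub_right]
      nlinarith
    rw [sub_eq_zero] at this
    exact hp (this ▸ interior_subset hp0)
  let φ : Set (EuclideanSpace ℝ (Fin d)) → (EuclideanSpace ℝ (Fin d) × ℝ →L[ℝ] ℝ) := fun F =>
    (innerSL ℝ (q F).1).comp (ContinuousLinearMap.fst ℝ _ _) -
      (q F).2 • ContinuousLinearMap.snd ℝ _ _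
  have hφ : ∀ F X s, φ F (X, s) = ⟪(q F).1, X⟫_ℝ - (q F).2 * s := by
    intro F X s
    simp [φ]
  let A : Fin m → Finset (EuclideanSpace ℝ (Fin d) × ℝ →L[ℝ] ℝ) := fun j =>
    (hfin.toFinset.filter (fun F => c F = j)).image φ
  have hA : ∀ j w, w ∈ A j ↔ ∃ F, IsFacet P F ∧ c F = j ∧ φ F = w := by
    intro j w
    simp [A, and_assoc]
  have hmem : ∀ F, IsFacet P F → φ F ∈ A (c F) := fun F hF => (hA _ _).2 ⟨F, hF, rfl, rfl⟩
  have hcard : Nontrivial (Fin m) := Fin.nontrivial_iff_two_le.2 hm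
  have hcol : ∀ j, ∃ F, IsFacet P F ∧ c F = j := by
    intro j
    rcases hvis {j} (Finset.singleton_nonempty j) (by
      intro h
      obtain ⟨i, hi⟩ := exists_ne j
      have : i ∈ ({j} : Finset (Fin m)) := h ▸ Finset.mem_univ i
      exact hi (Finset.mem_singleton.1 this)) with h | h
    · obtain ⟨⟨F, hF, hc⟩, _⟩ := h
      exact ⟨F, hF, Finset.mem_singleton.1 hc⟩
    · obtain ⟨_, p, hp, h⟩ := h
      obtain ⟨F, hF, hle⟩ := hnot p hp
      refine ⟨F, hF, ?_⟩
      by_contra hc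
      have h1 := (h F hF).2 ⟨hF, fun h' => hc (Finset.mem_singleton.1 h'.2)⟩
      rw [hvi F hF p hp] at h1
      linarith
  have hAne : ∀ j, (A j).Nonempty := fun j => by
    obtain ⟨F, hF, hc⟩ := hcol j
    exact ⟨φ F, (hA _ _).2 ⟨F, hF, hc, rfl⟩⟩
  have hInd : Ind ⊤ A := by
    intro u hu a ha
    have hneg : ∀ j, u j (p0, 1) < 0 := by
      intro j
      apply hull_lt _ (hu j)
      intro w hw
      obtain ⟨F, hF, _, rfl⟩ := (hA _ _).1 hw
      rw [hφ]
      have := hstrictp F hF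
      linarith
    have h0 := ha (p0, 1) trivial
    -- one-signed coefficients vanish
    by_cases hge : ∀ j, 0 ≤ a j
    · have h1 : ∀ j ∈ Finset.univ, a j * u j (p0, 1) ≤ 0 := fun j _ =>
        mul_nonpos_of_nonneg_of_nonpos (hge j) (hneg j).le
      intro j
      have := (Finset.sum_eq_zero_iff_of_nonpos h1).1 h0 j (Finset.mem_univ _)
      exact (mul_eq_zero.1 this).resolve_right (hneg j).ne
    by_cases hle : ∀ j, a j ≤ 0
    · have h1 : ∀ j ∈ Finset.univ, 0 ≤ a j * u j (p0, 1) := fun j _ =>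
        mul_nonneg_of_nonpos_of_nonpos (hle j) (hneg j).le
      intro j
      have := (Finset.sum_eq_zero_iff_of_nonneg h1).1 h0 j (Finset.mem_univ _)
      exact (mul_eq_zero.1 this).resolve_right (hneg j).ne
    exfalso
    push Not at hge hle
    obtain ⟨j1, hj1⟩ := hge
    obtain ⟨j2, hj2⟩ := hle
    rcases hvis (Finset.univ.filter (fun j => 0 < a j)) ⟨j2, by simpa using hj2⟩ (by
      intro h
      have : j1 ∈ Finset.univ.filter (fun j => 0 < a j) := by
        rw [h]; exact Finset.mem_univ j1
      simp at this
      linarith) with h | h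
    · obtain ⟨_, p, hp, h⟩ := h
      have hval := ha (p, 1) trivial
      have hP1 : ∀ j, 0 < a j → 0 < u j (p, 1) := by
        intro j hj
        apply hull_gt _ (hu j)
        intro w hw
        obtain ⟨F, hF, rfl, rfl⟩ := (hA _ _).1 hw
        have := (h F hF).2 ⟨hF, by simpa using hj⟩
        rw [hvi F hF p hp] at this
        rw [hφ]; linarith
      have hP2 : ∀ j, a j ≤ 0 → u j (p, 1) ≤ 0 := by
        intro j hj
        apply hull_le _ (hu j)
        intro w hw
        obtain ⟨F, hF, rfl, rfl⟩ := (hA _ _).1 hw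
        have : ¬ FacetVisibleFrom P F p := fun hv => by
          have := ((h F hF).1 hv).2
          simp at this
          linarith
        rw [hvi F hF p hp] at this
        rw [hφ]; linarith
      have : 0 < ∑ j, a j * u j (p, 1) := by
        apply Finset.sum_pos'
        · intro j _
          rcases lt_or_ge 0 (a j) with hj | hj
          · exact (mul_pos hj (hP1 j hj)).le
          · exact mul_nonneg_of_nonpos_of_nonpos hj (hP2 j hj)
        · exact ⟨j2, Finset.mem_univ _, mul_pos hj2 (hP1 j2 hj2)⟩
      linarith
    · obtain ⟨_, p, hp, h⟩ := h
      have hval := ha (p, 1) trivial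
      have hP1 : ∀ j, a j ≤ 0 → 0 < u j (p, 1) := by
        intro j hj
        apply hull_gt _ (hu j)
        intro w hw
        obtain ⟨F, hF, rfl, rfl⟩ := (hA _ _).1 hw
        have := (h F hF).2 ⟨hF, fun h' => by
          have := h'.2
          simp at this
          linarith⟩
        rw [hvi F hF p hp] at this
        rw [hφ]; linarith
      have hP2 : ∀ j, 0 < a j → u j (p, 1) ≤ 0 := by
        intro j hj
        apply hull_le _ (hu j)
        intro w hw
        obtain ⟨F, hF, rfl, rfl⟩ := (hA _ _).1 hw
        have : ¬ FacetVisibleFrom P F p := fun hv =>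
          ((h F hF).1 hv).2 ⟨hF, by simpa using hj⟩
        rw [hvi F hF p hp] at this
        rw [hφ]; linarith
      have : 0 < ∑ j, -(a j * u j (p, 1)) := by
        apply Finset.sum_pos'
        · intro j _
          rcases lt_or_ge 0 (a j) with hj | hj
          · exact neg_nonneg.2 (mul_nonpos_of_nonneg_of_nonpos hj.le (hP2 j hj))
          · exact neg_nonneg.2 (mul_nonpos_of_nonpos_of_nonneg hj (hP1 j hj).le)
        · exact ⟨j1, Finset.mem_univ _, neg_pos.2 (mul_neg_of_neg_of_pos hj1 (hP1 j1 hj1.le))⟩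
      rw [Finset.sum_neg_distrib] at this
      linarith
  have hrank : Module.finrank ℝ (EuclideanSpace ℝ (Fin d) × ℝ) = (d - m + 1) + m := by
    rw [Module.finrank_prod, finrank_euclideanSpace_fin, Module.finrank_self]
    omega
  obtain ⟨χ, ψ, L, hL⟩ := final_all m (d - m + 1) _ A hrank hAne hInd
  have hZle : ∀ z ∈ Zs A, ∀ F, IsFacet P F → ⟪(q F).1, z.1⟫_ℝ ≤ (q F).2 * z.2 := by
    intro z hz F hF
    have h1 := hf_le (hmem F hF) z
    rw [hz (c F)] at h1
    have h2 := hφ F z.1 z.2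
    have h3 : φ F (z.1, z.2) = φ F z := rfl
    linarith
  have hpos : ∀ z ∈ Zs A, z ≠ 0 → 0 < z.2 := by
    intro z hz hz0
    by_contra! hs
    have h1 := hZle z hz
    have h2 : z.1 - z.2 • p0 = 0 := by
      apply ray_bounded hbdd (p0 := p0)
      intro t ht
      apply hmemP
      intro F hF
      have e1 := h1 F hF
      have e2 := hstrictp F hF
      rw [inner_add_right, inner_smul_right, inner_sub_right, inner_smul_right]
      have e3 : z.2 * ((q F).2 - ⟪(q F).1, p0⟫_ℝ) ≤ 0 :=
        mul_nonpos_of_nonpos_of_nonneg hs (by linarith)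
      have e4 : t * (⟪(q F).1, z.1⟫_ℝ - z.2 * ⟪(q F).1, p0⟫_ℝ) ≤ 0 :=
        mul_nonpos_of_nonneg_of_nonpos ht (by linarith)
      linarith
    rw [sub_eq_zero] at h2
    obtain ⟨F, hF, _⟩ := hcol ⟨0, by omega⟩
    have e1 := h1 F hF
    have e2 := hstrictp F hF
    rw [h2, inner_smul_right] at e1
    have hs0 : z.2 = 0 := by
      rcases hs.eq_or_lt with h | h
      · exact h
      · nlinarith
    apply hz0
    rw [hs0, zero_smul] at h2
    exact Prod.ext h2 hs0
  obtain ⟨e⟩ := cone_slice_homeo hL (fun r hr z hz => Zs_smul hAne hr hz) hpos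
  have hset : {x : EuclideanSpace ℝ (Fin d) | x ∈ frontier P ∧
          ∀ j : Fin m, ∃ F, IsFacet P F ∧ c F = j ∧ x ∈ F} = {x | (x, (1 : ℝ)) ∈ Zs A} := by
    ext X
    simp only [Set.mem_ofPred_eq]
    constructor
    · rintro ⟨hX, hj⟩ j
      have hXP : X ∈ P := hcpt.isClosed.frontier_subset hX
      obtain ⟨F, hF, hc, hXF⟩ := hj j
      have h1 : φ F (X, 1) = 0 := by
        rw [(hq F hF).2.2.1] at hXF
        have := hXF.2
        simp only [Set.mem_ofPred_eq] at this
        rw [hφ, this]; ring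
      rw [hf_eq_of ((hA j _).2 ⟨F, hF, hc, rfl⟩) (X, 1), h1]
      intro w hw
      obtain ⟨G, hG, _, rfl⟩ := (hA _ _).1 hw
      rw [h1, hφ]
      have := (hq G hG).2.1 X hXP
      linarith
    · intro hX
      have hXP : X ∈ P := by
        apply hmemP
        intro F hF
        have := hZle _ hX F hF
        simpa using this
      have hall : ∀ j : Fin m, ∃ F, IsFacet P F ∧ c F = j ∧ X ∈ F := by
        intro j
        obtain ⟨w, hw, hwe⟩ := hf_exists (hAne j) (X, (1 : ℝ))
        obtain ⟨F, hF, hc, rfl⟩ := (hA _ _).1 hw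
        refine ⟨F, hF, hc, ?_⟩
        rw [hX j, hφ] at hwe
        rw [(hq F hF).2.2.1]
        refine ⟨hXP, ?_⟩
        show ⟪(q F).1, X⟫_ℝ = (q F).2
        linarith
      refine ⟨?_, hall⟩
      rw [hcpt.isClosed.frontier_eq]
      refine ⟨hXP, fun hXi => ?_⟩
      obtain ⟨F, hF, _, hXF⟩ := hall ⟨0, by omega⟩
      have h1 := int_strict hXi (hq F hF).1 (hq F hF).2.1
      rw [(hq F hF).2.2.1] at hXF
      have h2 : ⟪(q F).1, X⟫_ℝ = (q F).2 := hXF.2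
      linarith
  exact ⟨(Homeomorph.setCongr hset).trans e⟩

end RainbowAux

/-- Dual Main Theorem: if the facets of a full-dimensional polytope `P ⊆ ℝ^d` are colored
with `m` colors (`2 ≤ m ≤ d`) so that every nonempty proper subset of colors is visible or
covisible, then the set of rainbow points of `∂P` is homeomorphic to `S^{d-m}`. -/
theorem rainbow_points_homeomorphic_sphere {d m : ℕ} (hd : 2 ≤ d)
    (hm : 2 ≤ m) (hmd : m ≤ d)
    (P : Set (EuclideanSpace ℝ (Fin d)))
    (hpoly : ∃ V : Finset (EuclideanSpace ℝ (Fin d)), P = convexHull ℝ (V : Set _))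
    (hfull : (interior P).Nonempty)
    (c : Set (EuclideanSpace ℝ (Fin d)) → Fin m)
    (hvis : ∀ I : Finset (Fin m), I.Nonempty → I ≠ Finset.univ →
      VisibleFacetSet P {F | IsFacet P F ∧ c F ∈ I} ∨
      CovisibleFacetSet P {F | IsFacet P F ∧ c F ∈ I}) :
    Nonempty (
      {x : EuclideanSpace ℝ (Fin d) // x ∈ frontier P ∧
          ∀ j : Fin m, ∃ F, IsFacet P F ∧ c F = j ∧ x ∈ F}
        ≃ₜ Metric.sphere (0 : EuclideanSpace ℝ (Fin (d - m + 1))) 1) := by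
  exact RainbowAux.main_aux hm hmd P hpoly hfull c hvis
end

section
/- Let P₁,…,P_d be a strongly separated family of polytopes in ℝ^d whose union is affinely spanning (the affine span of P₁ ∪ ⋯ ∪ P_d is all of ℝ^d), and let A ⊔ B = {1,…,d} be a partition. Then there exist exactly two pairs (u,α) with ‖u‖ = 1 such that the hyperplane H_{u,α} = {x : ⟨u,x⟩ = α} is tangent to every Pᵢ (H_{u,α} ∩ Pᵢ ≠ ∅ for every i), P_a ⊆ {x : ⟨u,x⟩ ≥ α} for every a ∈ A, and P_b ⊆ {x : ⟨u,x⟩ ≤ α} for every b ∈ B. Furthermore, if each Pᵢ has nonempty interior, then the 2^d hyperplanes obtained as the partition (A,B) ranges over all partitions of {1,…,d} are pairwise distinct as subsets of ℝ^d. -/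
open scoped InnerProductSpace

/-- A family of sets in `ℝ^d` is strongly separated if every subset of indices can be
strictly separated from its complement by an affine hyperplane. -/
def StronglySeparated {d m : ℕ} (S : Fin m → Set (EuclideanSpace ℝ (Fin d))) : Prop :=
  ∀ I : Finset (Fin m), ∃ (u : EuclideanSpace ℝ (Fin d)) (α : ℝ), u ≠ 0 ∧
    (∀ i ∈ I, ∀ x ∈ S i, ⟪u, x⟫_ℝ < α) ∧ (∀ i, i ∉ I → ∀ x ∈ S i, α < ⟪u, x⟫_ℝ)

open Matrix in
/-- The orientation determinant of a functional `φ` and a selection `q`. -/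
noncomputable def orientDet {d : ℕ} (q : Fin d → Fin (d + 1) → ℝ) (φ : Fin (d + 1) → ℝ) : ℝ :=
  Matrix.detRowAlternating (Fin.cons φ q : Fin (d + 1) → Fin (d + 1) → ℝ)

lemma orientDet_smul {d : ℕ} (q : Fin d → Fin (d + 1) → ℝ) (φ : Fin (d + 1) → ℝ) (c : ℝ) :
    orientDet q (c • φ) = c * orientDet q φ := by
  unfold orientDet
  exact MultilinearMap.cons_smul (Matrix.detRowAlternating (R := ℝ) (n := Fin (d+1))).toMultilinearMap q c φ

lemma orientDet_neg {d : ℕ} (q : Fin d → Fin (d + 1) → ℝ) (φ : Fin (d + 1) → ℝ) :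
    orientDet q (-φ) = - orientDet q φ := by
  have := orientDet_smul q φ (-1)
  simpa using this

lemma orientDet_continuous {d : ℕ} (s : ℝ → Fin d → Fin (d + 1) → ℝ) (θ : ℝ → Fin (d + 1) → ℝ)
    (S : Set ℝ) (hs : ∀ i, ContinuousOn (fun t => s t i) S) (hθ : ContinuousOn θ S) :
    ContinuousOn (fun t => orientDet (s t) (θ t)) S := by
  have h1 : ContinuousOn
      (fun t => (Matrix.of (Fin.cons (θ t) (s t)) : Matrix (Fin (d+1)) (Fin (d+1)) ℝ)) S := by
    refine continuousOn_pi.2 fun i => ?_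
    refine Fin.cases ?_ (fun j => ?_) i
    · exact hθ
    · exact hs j
  exact (continuous_id.matrix_det).comp_continuousOn h1

open Matrix in
lemma orientDet_ne_zero {d : ℕ} (q : Fin d → Fin (d + 1) → ℝ) (φ : Fin (d + 1) → ℝ)
    (hq : ∀ c : Fin d → ℝ, ∑ i, c i • q i = 0 → c = 0) (hφ : φ ≠ 0) (h : ∀ i, φ ⬝ᵥ q i = 0) :
    orientDet q φ ≠ 0 := by
  intro h0
  have h0' : (Matrix.of (Fin.cons φ q) : Matrix (Fin (d+1)) (Fin (d+1)) ℝ).det = 0 := h0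
  obtain ⟨c, hc, hc0⟩ := Matrix.exists_vecMul_eq_zero_iff.2 h0'
  have e : c 0 • φ + ∑ i : Fin d, c i.succ • q i = 0 := by
    rw [← hc0]
    ext j
    simp [Matrix.vecMul, dotProduct, Fin.sum_univ_succ]
  have e2 : c 0 * (φ ⬝ᵥ φ) = 0 := by
    have := congrArg (fun x => φ ⬝ᵥ x) e
    simpa [dotProduct_add, dotProduct_sum, h] using this
  have hne : φ ⬝ᵥ φ ≠ 0 := fun hh => hφ (dotProduct_self_eq_zero.1 hh)
  have hc00 : c 0 = 0 := by
    rcases mul_eq_zero.1 e2 with h | h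
    · exact h
    · exact absurd h hne
  rw [hc00, zero_smul, zero_add] at e
  have := hq _ e
  apply hc
  ext i
  refine Fin.cases hc00 (fun j => ?_) i
  exact congrFun this j

/-- Every selection is linearly independent. -/
def SelIndep {d : ℕ} (C : Fin d → Set (Fin (d + 1) → ℝ)) : Prop :=
  ∀ q : Fin d → Fin (d + 1) → ℝ, (∀ i, q i ∈ C i) → ∀ c : Fin d → ℝ, ∑ i, c i • q i = 0 → c = 0

open Matrix in
lemma path_lemma {d : ℕ} {C : Fin d → Set (Fin (d + 1) → ℝ)} (hI : SelIndep C)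
    (s : ℝ → Fin d → Fin (d + 1) → ℝ) (θ : ℝ → Fin (d + 1) → ℝ)
    (hs : ∀ i, ContinuousOn (fun t => s t i) (Set.Icc 0 1)) (hθ : ContinuousOn θ (Set.Icc 0 1))
    (hsC : ∀ t ∈ Set.Icc (0:ℝ) 1, ∀ i, s t i ∈ C i)
    (h0 : ∀ t ∈ Set.Icc (0:ℝ) 1, ∀ i, θ t ⬝ᵥ s t i = 0)
    (hne : ∀ t ∈ Set.Icc (0:ℝ) 1, θ t ≠ 0) :
    0 < orientDet (s 0) (θ 0) * orientDet (s 1) (θ 1) := by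
  have hc := orientDet_continuous s θ _ hs hθ
  have hn : ∀ t ∈ Set.Icc (0:ℝ) 1, orientDet (s t) (θ t) ≠ 0 := fun t ht =>
    orientDet_ne_zero _ _ (hI _ (hsC t ht)) (hne t ht) (h0 t ht)
  by_contra hcon
  push Not at hcon
  have m0 : (0:ℝ) ∈ Set.Icc (0:ℝ) 1 := by simp
  have m1 : (1:ℝ) ∈ Set.Icc (0:ℝ) 1 := by simp
  have : (0:ℝ) ∈ (fun t => orientDet (s t) (θ t)) '' Set.Icc 0 1 := by
    rcases mul_nonpos_iff.1 hcon with ⟨ha, hb⟩ | ⟨ha, hb⟩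
    · exact intermediate_value_Icc' zero_le_one hc ⟨hb, ha⟩
    · exact intermediate_value_Icc zero_le_one hc ⟨ha, hb⟩
  obtain ⟨t, ht, h⟩ := this
  exact hn t ht h

open Matrix in
lemma replace_lemma {d : ℕ} {C : Fin d → Set (Fin (d + 1) → ℝ)} (hC : ∀ i, Convex ℝ (C i))
    (hI : SelIndep C) {φ : Fin (d + 1) → ℝ} (hφ : φ ≠ 0) {q r : Fin d → Fin (d + 1) → ℝ}
    (hq : ∀ i, q i ∈ C i) (hr : ∀ i, r i ∈ C i)
    (hq0 : ∀ i, φ ⬝ᵥ q i = 0) (hr0 : ∀ i, φ ⬝ᵥ r i = 0) :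
    0 < orientDet q φ * orientDet r φ := by
  have := path_lemma hI (fun t i => (1 - t) • q i + t • r i) (fun _ => φ)
    (fun i => by fun_prop) (by fun_prop)
    (fun t ht i => hC i (hq i) (hr i) (by linarith [ht.2]) ht.1 (by ring))
    (fun t ht i => by simp [dotProduct_add, hq0, hr0]) (fun t ht => hφ)
  simpa using this

lemma ne_zero_of_det {d : ℕ} {q : Fin d → Fin (d + 1) → ℝ} {φ : Fin (d + 1) → ℝ} {σ : ℝ}
    (h : 0 < σ * orientDet q φ) : φ ≠ 0 := by
  rintro rfl
  have := orientDet_smul q 0 0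
  simp at this
  simp [this] at h

open Matrix in
lemma crossing {d : ℕ} {C : Fin d → Set (Fin (d + 1) → ℝ)} (hC : ∀ i, Convex ℝ (C i))
    (hI : SelIndep C) {φ ψ : Fin (d + 1) → ℝ} {q r : Fin d → Fin (d + 1) → ℝ} {σ : ℝ}
    (hq : ∀ i, q i ∈ C i) (hr : ∀ i, r i ∈ C i)
    (hq0 : ∀ i, φ ⬝ᵥ q i = 0) (hr0 : ∀ i, ψ ⬝ᵥ r i = 0)
    (hφ : 0 < σ * orientDet q φ) (hψ : 0 < σ * orientDet r ψ)
    (hx : ∀ i, 0 ≤ (φ ⬝ᵥ r i) * (ψ ⬝ᵥ q i)) : ∃ c : ℝ, 0 < c ∧ ψ = c • φ := by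
  have hφ0 := ne_zero_of_det hφ
  have hψ0 := ne_zero_of_det hψ
  by_contra hcon
  have hne : ∀ t ∈ Set.Icc (0:ℝ) 1, (1 - t) • φ - t • ψ ≠ 0 := by
    intro t ht h
    rcases eq_or_lt_of_le ht.1 with h0 | h0
    · subst h0; simp at h; exact hφ0 h
    rcases eq_or_lt_of_le ht.2 with h1 | h1
    · subst h1; simp at h; exact hψ0 h
    apply hcon
    refine ⟨(1 - t) / t, div_pos (by linarith) h0, ?_⟩
    rw [sub_eq_zero] at h
    rw [div_eq_inv_mul, mul_smul, h, smul_smul, inv_mul_cancel₀ h0.ne', one_smul]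
  -- the path of points
  let den : Fin d → ℝ → ℝ := fun i t => (1 - t) * (φ ⬝ᵥ r i) + t * (ψ ⬝ᵥ q i)
  let s : ℝ → Fin d → Fin (d + 1) → ℝ := fun t i =>
    if φ ⬝ᵥ r i = 0 then r i else if ψ ⬝ᵥ q i = 0 then q i else
      ((1 - t) * (φ ⬝ᵥ r i) / den i t) • q i + (t * (ψ ⬝ᵥ q i) / den i t) • r i
  have hden : ∀ i, φ ⬝ᵥ r i ≠ 0 → ψ ⬝ᵥ q i ≠ 0 → ∀ t ∈ Set.Icc (0:ℝ) 1,
      den i t ≠ 0 ∧ 0 ≤ (1 - t) * (φ ⬝ᵥ r i) / den i t ∧ 0 ≤ t * (ψ ⬝ᵥ q i) / den i t := by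
    intro i ha hb t ht
    have h := hx i
    obtain ⟨t0, t1⟩ := ht
    simp only [den]
    generalize φ ⬝ᵥ r i = a at *
    generalize ψ ⬝ᵥ q i = b at *
    have t1' : 0 ≤ 1 - t := by linarith
    rcases mul_nonneg_iff.1 h with ⟨h1, h2⟩ | ⟨h1, h2⟩
    · have h1 := lt_of_le_of_ne h1 (Ne.symm ha)
      have h2 := lt_of_le_of_ne h2 (Ne.symm hb)
      have p1 := mul_nonneg t1' h1.le
      have p2 := mul_nonneg t0 h2.le
      have : 0 < (1 - t) * a + t * b := by
        rcases eq_or_lt_of_le t0 with h0 | h0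
        · subst h0; simpa using h1
        · have := mul_pos h0 h2; linarith
      exact ⟨this.ne', div_nonneg p1 this.le, div_nonneg p2 this.le⟩
    · have h1 := lt_of_le_of_ne h1 ha
      have h2 := lt_of_le_of_ne h2 hb
      have p1 := mul_nonpos_of_nonneg_of_nonpos t1' h1.le
      have p2 := mul_nonpos_of_nonneg_of_nonpos t0 h2.le
      have : (1 - t) * a + t * b < 0 := by
        rcases eq_or_lt_of_le t0 with h0 | h0
        · subst h0; simpa using h1
        · have := mul_neg_of_pos_of_neg h0 h2; linarith
      exact ⟨this.ne, div_nonneg_of_nonpos p1 this.le, div_nonneg_of_nonpos p2 this.le⟩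
  have hsC : ∀ t ∈ Set.Icc (0:ℝ) 1, ∀ i, s t i ∈ C i := by
    intro t ht i
    simp only [s]
    split_ifs with ha hb
    · exact hr i
    · exact hq i
    · obtain ⟨h1, h2, h3⟩ := hden i ha hb t ht
      refine hC i (hq i) (hr i) h2 h3 ?_
      rw [← add_div]; exact div_self h1
  have key := path_lemma hI s (fun t => (1 - t) • φ - t • ψ) ?_ (by fun_prop) hsC ?_ hne
  · simp only [sub_zero, one_smul, zero_smul, sub_self, zero_sub, orientDet_neg] at key
    have m0 : (0:ℝ) ∈ Set.Icc (0:ℝ) 1 := by simp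
    have m1 : (1:ℝ) ∈ Set.Icc (0:ℝ) 1 := by simp
    have k1 := replace_lemma hC hI hφ0 hq (hsC 0 m0) hq0 (by
      intro i
      simp only [s]
      split_ifs with ha hb
      · exact ha
      · exact hq0 i
      · simp [hq0])
    have k2 := replace_lemma hC hI hψ0 hr (hsC 1 m1) hr0 (by
      intro i
      simp only [s]
      split_ifs with ha hb
      · exact hr0 i
      · exact hb
      · simp [hr0])
    have k3 : 0 < orientDet q φ * orientDet r ψ := by
      have := mul_pos hφ hψ
      have h2 : 0 < σ ^ 2 * (orientDet q φ * orientDet r ψ) := by linarith [this]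
      by_contra hh
      push Not at hh
      have := mul_nonpos_of_nonneg_of_nonpos (sq_nonneg σ) hh
      linarith
    generalize orientDet q φ = a at *
    generalize orientDet r ψ = b at *
    generalize orientDet (s 0) φ = x at *
    generalize orientDet (s 1) ψ = y at *
    have h1 : 0 < (a * x) * (b * y) := mul_pos k1 k2
    have h2 : 0 < (a * b) * (x * -y) := mul_pos k3 key
    linarith
  · intro i
    simp only [s]
    split_ifs with ha hb
    · fun_prop
    · fun_prop
    · have hd : ContinuousOn (den i) (Set.Icc 0 1) := by
        simp only [den]; fun_prop
      have h0 : ∀ t ∈ Set.Icc (0:ℝ) 1, den i t ≠ 0 := fun t ht => (hden i ha hb t ht).1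
      refine ContinuousOn.add ?_ ?_
      · exact (ContinuousOn.div (by fun_prop) hd h0).smul (by fun_prop)
      · exact (ContinuousOn.div (by fun_prop) hd h0).smul (by fun_prop)
  · intro t ht i
    simp only [s]
    split_ifs with ha hb
    · simp [sub_dotProduct, ha, hr0]
    · simp [sub_dotProduct, hb, hq0]
    · simp [sub_dotProduct, dotProduct_add, hq0, hr0]
      ring

open Matrix in
lemma sink {n : ℕ} {C : Set (Fin n → ℝ)} (hC : Convex ℝ C) (ψ : (Fin n → ℝ) → Fin n → ℝ)
    (h0 : ∀ x ∈ C, ψ x ⬝ᵥ x = 0)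
    (h1 : ∀ x ∈ C, ∀ y ∈ C, 0 ≤ (ψ x ⬝ᵥ y) * (ψ y ⬝ᵥ x) → ∃ c : ℝ, 0 < c ∧ ψ y = c • ψ x)
    (e : ℝ) (V : Finset (Fin n → ℝ)) (hV : V.Nonempty) (hVC : ∀ x ∈ V, x ∈ C) :
    ∃ m ∈ V, ∀ x ∈ V, 0 ≤ e * (ψ m ⬝ᵥ x) := by
  classical
  induction hV using Finset.Nonempty.cons_induction with
  | singleton a =>
    refine ⟨a, by simp, fun x hx => ?_⟩
    rw [Finset.mem_singleton] at hx
    subst hx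
    simp [h0 x (hVC x (by simp))]
  | cons v V hv hne ih =>
    obtain ⟨m, hm, hmin⟩ := ih (fun x hx => hVC x (Finset.mem_cons_of_mem hx))
    by_cases hmv : 0 ≤ e * (ψ m ⬝ᵥ v)
    · refine ⟨m, Finset.mem_cons_of_mem hm, fun x hx => ?_⟩
      rcases Finset.mem_cons.1 hx with rfl | hx
      · exact hmv
      · exact hmin x hx
    · refine ⟨v, Finset.mem_cons_self _ _, fun x hx => ?_⟩
      have vC := hVC v (Finset.mem_cons_self _ _)
      have mC := hVC m (Finset.mem_cons_of_mem hm)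
      rcases Finset.mem_cons.1 hx with rfl | hx
      · simp [h0 x vC]
      have xC := hVC x (Finset.mem_cons_of_mem hx)
      by_contra hvx
      push Not at hmv hvx
      have hmx := hmin x hx
      have hvm : 0 < e * (ψ v ⬝ᵥ m) := by
        by_contra hh
        push Not at hh
        have : 0 ≤ (e * (ψ m ⬝ᵥ v)) * (e * (ψ v ⬝ᵥ m)) := mul_nonneg_of_nonpos_of_nonpos hmv.le hh
        have he : 0 < e ^ 2 := by
          have : e ≠ 0 := by rintro rfl; simp at hmv
          positivity
        have : 0 ≤ (ψ m ⬝ᵥ v) * (ψ v ⬝ᵥ m) := by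
          refine nonneg_of_mul_nonneg_right (a := e ^ 2) ?_ he
          linarith
        obtain ⟨c, hc, hcc⟩ := h1 m mC v vC this
        have h := h0 v vC
        rw [hcc, smul_dotProduct, smul_eq_mul] at h
        rcases mul_eq_zero.1 h with h | h
        · exact hc.ne' h
        · simp [h] at hmv
      -- the crossing point of the two cevians
      set a := -(e * (ψ m ⬝ᵥ v)) with ha
      set b := e * (ψ m ⬝ᵥ x) with hb
      set k := e * (ψ v ⬝ᵥ m) with hk
      set l := -(e * (ψ v ⬝ᵥ x)) with hl
      have ha0 : 0 < a := by linarith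
      have hl0 : 0 < l := by linarith
      have hT : 0 < l * a + b * k + a * k := by
        have := mul_pos hl0 ha0
        have := mul_nonneg hmx hvm.le
        have := mul_pos ha0 hvm
        linarith
      set T := l * a + b * k + a * k with hTd
      let p : Fin n → ℝ := (l * a / T) • m + (b * k / T) • v + (a * k / T) • x
      have pC : p ∈ C := by
        have := hC.sum_mem (t := (Finset.univ : Finset (Fin 3)))
          (w := ![l * a / T, b * k / T, a * k / T]) (z := ![m, v, x]) ?_ ?_ ?_
        · simpa [Fin.sum_univ_three] using this
        · intro i _
          fin_cases i
          · exact (div_pos (mul_pos hl0 ha0) hT).le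
          · exact div_nonneg (mul_nonneg hmx hvm.le) hT.le
          · exact (div_pos (mul_pos ha0 hvm) hT).le
        · simp only [Fin.sum_univ_three]
          simp only [Matrix.cons_val]
          rw [← add_div, ← add_div, ← hTd]; exact div_self hT.ne'
        · intro i _
          fin_cases i
          · exact mC
          · exact vC
          · exact xC
      have e0 : e ≠ 0 := by rintro rfl; simp at hmv
      have hmp : ψ m ⬝ᵥ p = 0 := by
        simp only [p, dotProduct_add, dotProduct_smul, smul_eq_mul, h0 m mC]
        refine (mul_eq_zero.1 (?_ : e * _ = 0)).resolve_left e0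
        have : e * (l * a / T * 0 + b * k / T * (ψ m ⬝ᵥ v) + a * k / T * (ψ m ⬝ᵥ x))
          = (b * k / T) * (-a) + a * k / T * b := by
            rw [ha, hb]; ring
        rw [this]; ring
      have hvp : ψ v ⬝ᵥ p = 0 := by
        simp only [p, dotProduct_add, dotProduct_smul, smul_eq_mul, h0 v vC]
        refine (mul_eq_zero.1 (?_ : e * _ = 0)).resolve_left e0
        have : e * (l * a / T * (ψ v ⬝ᵥ m) + b * k / T * 0 + a * k / T * (ψ v ⬝ᵥ x))
          = (l * a / T) * k + a * k / T * (-l) := by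
            rw [hk, hl]; ring
        rw [this]; ring
      obtain ⟨c, hc, hcc⟩ := h1 m mC p pC (by simp [hmp])
      obtain ⟨c', hc', hcc'⟩ := h1 v vC p pC (by simp [hvp])
      have h2 : c * (ψ m ⬝ᵥ v) = 0 := by
        have : c • ψ m = c' • ψ v := by rw [← hcc, ← hcc']
        have := congrArg (fun z => z ⬝ᵥ v) this
        simpa [h0 v vC] using this
      rcases mul_eq_zero.1 h2 with h | h
      · exact hc.ne' h
      · simp [ha, h] at ha0

open Matrix in
lemma exists_orth {d : ℕ} (q : Fin d → Fin (d + 1) → ℝ) :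
    ∃ φ : Fin (d + 1) → ℝ, φ ≠ 0 ∧ ∀ i, φ ⬝ᵥ q i = 0 := by
  have h := LinearMap.ker_ne_bot_of_finrank_lt (f := Matrix.mulVecLin (Matrix.of q)) (by simp)
  obtain ⟨φ, hφ, h0⟩ := (Submodule.ne_bot_iff _).1 h
  refine ⟨φ, h0, fun i => ?_⟩
  have := congrFun (LinearMap.mem_ker.1 hφ) i
  rw [dotProduct_comm]
  simpa [Matrix.mulVec] using this

open Matrix in
lemma exists_sol {d : ℕ} {C : Fin d → Set (Fin (d + 1) → ℝ)} (hC : ∀ i, Convex ℝ (C i))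
    (hI : SelIndep C) (ε : Fin d → ℝ) (hε : ∀ i, ε i ≠ 0) {σ : ℝ} (hσ : σ ≠ 0)
    (J : Finset (Fin d)) : ∀ V : Fin d → Finset (Fin (d + 1) → ℝ), (∀ i, (V i).Nonempty) →
      (∀ i, ∀ x ∈ V i, x ∈ C i) → (∀ i, i ∉ J → ∃ x, V i = {x}) →
      ∃ (φ : Fin (d + 1) → ℝ) (q : Fin d → Fin (d + 1) → ℝ), (∀ i, q i ∈ V i) ∧
        (∀ i, φ ⬝ᵥ q i = 0) ∧ (∀ i, ∀ x ∈ V i, 0 ≤ ε i * (φ ⬝ᵥ x)) ∧ 0 < σ * orientDet q φ := by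
  classical
  induction J using Finset.induction_on with
  | empty =>
    intro V hV hVC hJ
    choose p hp using fun i => hJ i (by simp)
    have hpV : ∀ i, p i ∈ V i := fun i => by rw [hp i]; simp
    obtain ⟨φ, hφ, h0⟩ := exists_orth p
    have hD := orientDet_ne_zero p φ (hI p fun i => hVC i _ (hpV i)) hφ h0
    have hz : ∀ i, ∀ x ∈ V i, φ ⬝ᵥ x = 0 := by
      intro i x hx
      rw [hp i, Finset.mem_singleton] at hx
      rw [hx, h0]
    rcases lt_or_gt_of_ne (mul_ne_zero hσ hD) with h | h
    · refine ⟨-φ, p, hpV, fun i => by simp [h0], fun i x hx => by simp [hz i x hx], ?_⟩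
      rw [orientDet_neg]; linarith
    · exact ⟨φ, p, hpV, h0, fun i x hx => by simp [hz i x hx], h⟩
  | insert i J hi ih =>
    intro V hV hVC hJ
    have hex : ∀ x : Fin (d + 1) → ℝ, ∃ (φ : Fin (d + 1) → ℝ) (q : Fin d → Fin (d + 1) → ℝ),
        x ∈ C i → (q i = x ∧ (∀ j, j ≠ i → q j ∈ V j) ∧
        (∀ j, φ ⬝ᵥ q j = 0) ∧ (∀ j, j ≠ i → ∀ y ∈ V j, 0 ≤ ε j * (φ ⬝ᵥ y)) ∧
        0 < σ * orientDet q φ) := by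
      intro x
      by_cases hx : x ∈ C i
      · obtain ⟨φ, q, h1, h2, h3, h4⟩ := ih (Function.update V i {x}) (by
          intro j
          by_cases hj : j = i
          · subst hj; simp
          · simpa [Function.update_of_ne hj] using hV j) (by
          intro j y hy
          by_cases hj : j = i
          · subst hj; simp at hy; rwa [hy]
          · rw [Function.update_of_ne hj] at hy; exact hVC j y hy) (by
          intro j hj'
          by_cases hj : j = i
          · subst hj; exact ⟨x, by simp⟩
          · rw [Function.update_of_ne hj]; exact hJ j (by simp [hj, hj']))
        refine ⟨φ, q, fun _ => ⟨?_, ?_, h2, ?_, h4⟩⟩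
        · simpa using h1 i
        · intro j hj; simpa [Function.update_of_ne hj] using h1 j
        · intro j hj; simpa [Function.update_of_ne hj] using h3 j
      · exact ⟨0, 0, fun h => absurd h hx⟩
    choose ψ r hψ using hex
    have hrC : ∀ x ∈ C i, ∀ j, r x j ∈ C j := by
      intro x hx j
      obtain ⟨h1, h2, -⟩ := hψ x hx
      by_cases hj : j = i
      · subst hj; rwa [h1]
      · exact hVC j _ (h2 j hj)
    obtain ⟨m, hm, hmin⟩ := sink (hC i) ψ (fun x hx => by
        obtain ⟨h1, h2, h3, -⟩ := hψ x hx
        have := h3 i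
        rwa [h1] at this) (fun x hx y hy hxy => by
        obtain ⟨h1, h2, h3, h4, h5⟩ := hψ x hx
        obtain ⟨k1, k2, k3, k4, k5⟩ := hψ y hy
        refine crossing hC hI (hrC x hx) (hrC y hy) h3 k3 h5 k5 fun j => ?_
        by_cases hj : j = i
        · subst hj; rwa [h1, k1]
        · have a1 := h4 j hj _ (k2 j hj)
          have a2 := k4 j hj _ (h2 j hj)
          have := mul_nonneg a1 a2
          have he : 0 < ε j ^ 2 := by have := hε j; positivity
          refine nonneg_of_mul_nonneg_right (a := ε j ^ 2) ?_ he
          linarith) (ε i) (V i) (hV i) (hVC i)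
    obtain ⟨h1, h2, h3, h4, h5⟩ := hψ m (hVC i m hm)
    refine ⟨ψ m, r m, fun j => ?_, h3, fun j => ?_, h5⟩
    · by_cases hj : j = i
      · subst hj; rwa [h1]
      · exact h2 j hj
    · by_cases hj : j = i
      · subst hj; exact hmin
      · exact h4 j hj

/-- Homogenization of a point. -/
def liftPt {d : ℕ} (x : EuclideanSpace ℝ (Fin d)) : Fin (d + 1) → ℝ := Fin.cons 1 (fun i => x i)

/-- Linear functional attached to an oriented hyperplane. -/
def hypFn {d : ℕ} (p : EuclideanSpace ℝ (Fin d) × ℝ) : Fin (d + 1) → ℝ :=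
  Fin.cons (-p.2) (fun i => p.1 i)

open Matrix in
lemma hypFn_dot {d : ℕ} (p : EuclideanSpace ℝ (Fin d) × ℝ) (x : EuclideanSpace ℝ (Fin d)) :
    hypFn p ⬝ᵥ liftPt x = ⟪p.1, x⟫_ℝ - p.2 := by
  simp only [hypFn, liftPt, dotProduct, Fin.sum_univ_succ, PiLp.inner_apply, Fin.cons_zero,
    Fin.cons_succ]
  simp [mul_comm]
  ring

lemma hypFn_inj {d : ℕ} {p p' : EuclideanSpace ℝ (Fin d) × ℝ} {c : ℝ} (hc : 0 < c)
    (h1 : ‖p.1‖ = 1) (h2 : ‖p'.1‖ = 1) (h : hypFn p' = c • hypFn p) : p' = p := by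
  have e1 : p'.1 = c • p.1 := by
    ext i
    have := congrFun h i.succ
    simpa [hypFn] using this
  have hc1 : c = 1 := by
    have := congrArg norm e1
    rw [norm_smul, h1, h2, Real.norm_of_nonneg hc.le] at this
    linarith
  subst hc1
  have e2 := congrFun h 0
  simp [hypFn] at e2
  exact Prod.ext (by simpa using e1) e2

lemma lift_convex {d : ℕ} {S : Set (EuclideanSpace ℝ (Fin d))} (hS : Convex ℝ S) :
    Convex ℝ (liftPt '' S) := by
  rintro _ ⟨x, hx, rfl⟩ _ ⟨y, hy, rfl⟩ a b ha hb hab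
  refine ⟨a • x + b • y, hS hx hy ha hb hab, ?_⟩
  ext i
  refine Fin.cases ?_ (fun j => ?_) i
  · simp [liftPt, hab]
  · simp [liftPt]

open Matrix in
lemma lift_indep {d : ℕ} {P : Fin d → Set (EuclideanSpace ℝ (Fin d))} (hsep : StronglySeparated P) :
    SelIndep (fun i => liftPt '' P i) := by
  classical
  intro q hq c hc
  choose x hx hxq using hq
  obtain ⟨u, α, -, h1, h2⟩ := hsep (Finset.univ.filter fun i => c i < 0)
  have hs : ∑ i, c i * (⟪u, x i⟫_ℝ - α) = 0 := by
    have := congrArg (fun z => hypFn (u, α) ⬝ᵥ z) hc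
    simpa [dotProduct_sum, ← hxq, hypFn_dot] using this
  have hnn : ∀ i ∈ Finset.univ, 0 ≤ c i * (⟪u, x i⟫_ℝ - α) := by
    intro i _
    by_cases hi : c i < 0
    · have := h1 i (by simp [hi]) _ (hx i)
      exact mul_nonneg_of_nonpos_of_nonpos hi.le (by linarith)
    · have := h2 i (by simpa using hi) _ (hx i)
      exact mul_nonneg (by linarith) (by linarith)
  have hz := (Finset.sum_eq_zero_iff_of_nonneg hnn).1 hs
  ext i
  rcases mul_eq_zero.1 (hz i (Finset.mem_univ i)) with h | h
  · exact h
  · exfalso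
    by_cases hi : c i < 0
    · have := h1 i (by simp [hi]) _ (hx i); linarith
    · have := h2 i (by simpa using hi) _ (hx i); linarith

/-- `p` is an oriented unit hyperplane tangent to all `P i`, with `A` above and `B` below. -/
def IsTan {d : ℕ} (P : Fin d → Set (EuclideanSpace ℝ (Fin d))) (A B : Finset (Fin d))
    (p : EuclideanSpace ℝ (Fin d) × ℝ) : Prop :=
  ‖p.1‖ = 1 ∧
          (∀ i : Fin d, ({x | ⟪p.1, x⟫_ℝ = p.2} ∩ P i).Nonempty) ∧
          (∀ a ∈ A, P a ⊆ {x | p.2 ≤ ⟪p.1, x⟫_ℝ}) ∧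
          (∀ b ∈ B, P b ⊆ {x | ⟪p.1, x⟫_ℝ ≤ p.2})

/-- `p` has orientation `σ`. -/
def HasOr {d : ℕ} (P : Fin d → Set (EuclideanSpace ℝ (Fin d))) (σ : ℝ)
    (p : EuclideanSpace ℝ (Fin d) × ℝ) : Prop :=
  ∃ x : Fin d → EuclideanSpace ℝ (Fin d), (∀ i, x i ∈ P i) ∧ (∀ i, ⟪p.1, x i⟫_ℝ = p.2) ∧
    0 < σ * orientDet (fun i => liftPt (x i)) (hypFn p)

lemma hypFn_ne {d : ℕ} {p : EuclideanSpace ℝ (Fin d) × ℝ} (h : ‖p.1‖ = 1) : hypFn p ≠ 0 := by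
  intro h0
  have : p.1 = 0 := by
    ext i
    simpa [hypFn] using congrFun h0 i.succ
  simp [this] at h

lemma hypFn_neg {d : ℕ} (p : EuclideanSpace ℝ (Fin d) × ℝ) : hypFn (-p) = - hypFn p := by
  ext i
  refine Fin.cases ?_ (fun j => ?_) i <;> simp [hypFn]

open Matrix in
lemma or_cases {d : ℕ} {P : Fin d → Set (EuclideanSpace ℝ (Fin d))} (hsep : StronglySeparated P)
    {p : EuclideanSpace ℝ (Fin d) × ℝ} (h : ‖p.1‖ = 1)
    (ht : ∀ i : Fin d, ({x | ⟪p.1, x⟫_ℝ = p.2} ∩ P i).Nonempty) :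
    HasOr P 1 p ∨ HasOr P (-1) p := by
  choose x hx using ht
  have hne := orientDet_ne_zero (fun i => liftPt (x i)) (hypFn p)
    (lift_indep hsep _ fun i => ⟨x i, (hx i).2, rfl⟩) (hypFn_ne h)
    (fun i => by rw [hypFn_dot]; have := (hx i).1; simp only [Set.mem_setOf_eq] at this; linarith)
  rcases lt_or_gt_of_ne hne with h | h
  · exact Or.inr ⟨x, fun i => (hx i).2, fun i => (hx i).1, by linarith⟩
  · exact Or.inl ⟨x, fun i => (hx i).2, fun i => (hx i).1, by linarith⟩

open Matrix in
lemma or_not_both {d : ℕ} {P : Fin d → Set (EuclideanSpace ℝ (Fin d))}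
    (hconv : ∀ i, Convex ℝ (P i)) (hsep : StronglySeparated P)
    {p : EuclideanSpace ℝ (Fin d) × ℝ} (h1 : HasOr P 1 p) (h2 : HasOr P (-1) p) : False := by
  obtain ⟨x, hx, hx0, hxd⟩ := h1
  obtain ⟨y, hy, hy0, hyd⟩ := h2
  have := replace_lemma (fun i => lift_convex (hconv i)) (lift_indep hsep) (ne_zero_of_det hxd)
    (q := fun i => liftPt (x i)) (r := fun i => liftPt (y i))
    (fun i => ⟨x i, hx i, rfl⟩) (fun i => ⟨y i, hy i, rfl⟩)
    (fun i => by rw [hypFn_dot, hx0]; ring) (fun i => by rw [hypFn_dot, hy0]; ring)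
  have h3 := mul_pos hxd hyd
  linarith

open Matrix in
lemma or_unique {d : ℕ} {P : Fin d → Set (EuclideanSpace ℝ (Fin d))}
    (hconv : ∀ i, Convex ℝ (P i)) (hsep : StronglySeparated P) {σ : ℝ}
    {p p' : EuclideanSpace ℝ (Fin d) × ℝ} (hp : ‖p.1‖ = 1) (hp' : ‖p'.1‖ = 1)
    (h1 : HasOr P σ p) (h2 : HasOr P σ p')
    (hs : ∀ i, ∀ x ∈ P i, ∀ y ∈ P i, ⟪p.1, x⟫_ℝ = p.2 → ⟪p'.1, y⟫_ℝ = p'.2 →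
      0 ≤ (⟪p.1, y⟫_ℝ - p.2) * (⟪p'.1, x⟫_ℝ - p'.2)) : p' = p := by
  obtain ⟨x, hx, hx0, hxd⟩ := h1
  obtain ⟨y, hy, hy0, hyd⟩ := h2
  obtain ⟨c, hc, hcc⟩ := crossing (fun i => lift_convex (hconv i)) (lift_indep hsep)
    (q := fun i => liftPt (x i)) (r := fun i => liftPt (y i))
    (fun i => ⟨x i, hx i, rfl⟩) (fun i => ⟨y i, hy i, rfl⟩)
    (fun i => by rw [hypFn_dot, hx0]; ring) (fun i => by rw [hypFn_dot, hy0]; ring) hxd hyd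
    (fun i => by rw [hypFn_dot, hypFn_dot]; exact hs i _ (hx i) _ (hy i) (hx0 i) (hy0 i))
  exact hypFn_inj hc hp hp' hcc

lemma tan_unique {d : ℕ} {P : Fin d → Set (EuclideanSpace ℝ (Fin d))}
    (hconv : ∀ i, Convex ℝ (P i)) (hsep : StronglySeparated P) {σ : ℝ} {A B : Finset (Fin d)}
    (hAB : A ∪ B = Finset.univ)
    {p p' : EuclideanSpace ℝ (Fin d) × ℝ} (hp : IsTan P A B p) (hp' : IsTan P A B p')
    (h1 : HasOr P σ p) (h2 : HasOr P σ p') : p' = p := by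
  refine or_unique hconv hsep hp.1 hp'.1 h1 h2 fun i x hx y hy _ _ => ?_
  have hi : i ∈ A ∪ B := by rw [hAB]; exact Finset.mem_univ i
  rcases Finset.mem_union.1 hi with h | h
  · have a1 := hp.2.2.1 i h hy
    have a2 := hp'.2.2.1 i h hx
    simp only [Set.mem_setOf_eq] at a1 a2
    exact mul_nonneg (by linarith) (by linarith)
  · have a1 := hp.2.2.2 i h hy
    have a2 := hp'.2.2.2 i h hx
    simp only [Set.mem_setOf_eq] at a1 a2
    exact mul_nonneg_of_nonpos_of_nonpos (by linarith) (by linarith)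

open Matrix in
lemma tan_exists {d : ℕ} (hd : 0 < d) {P : Fin d → Set (EuclideanSpace ℝ (Fin d))}
    (hpoly : ∀ i, ∃ V : Finset (EuclideanSpace ℝ (Fin d)),
      V.Nonempty ∧ P i = convexHull ℝ (V : Set _))
    (hconv : ∀ i, Convex ℝ (P i)) (hsep : StronglySeparated P) {σ : ℝ} (hσ : σ ≠ 0)
    {A B : Finset (Fin d)} (hdis : Disjoint A B) :
    ∃ p, IsTan P A B p ∧ HasOr P σ p := by
  classical
  choose V hV hPV using hpoly
  have hVP : ∀ i, ∀ x ∈ V i, x ∈ P i := fun i x hx => by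
    rw [hPV i]; exact subset_convexHull ℝ _ hx
  obtain ⟨φ, q, h1, h2, h3, h4⟩ := exists_sol (fun i => lift_convex (hconv i)) (lift_indep hsep)
    (fun i => if i ∈ A then 1 else -1) (fun i => by split_ifs <;> norm_num) hσ Finset.univ
    (fun i => (V i).image liftPt) (fun i => (hV i).image _) (by
      intro i x hx
      obtain ⟨y, hy, rfl⟩ := Finset.mem_image.1 hx
      exact ⟨y, hVP i y hy, rfl⟩) (by simp)
  choose x hx hxq using fun i => Finset.mem_image.1 (h1 i)
  have hφ0 := ne_zero_of_det h4
  let p0 : EuclideanSpace ℝ (Fin d) × ℝ := (WithLp.toLp 2 (fun i : Fin d => φ i.succ), - φ 0)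
  have hp0 : hypFn p0 = φ := by
    ext i
    refine Fin.cases ?_ (fun j => ?_) i <;> simp [hypFn, p0]
  have hx0 : ∀ i, ⟪p0.1, x i⟫_ℝ = p0.2 := by
    intro i
    have := h2 i
    rw [← hxq i, ← hp0, hypFn_dot] at this
    linarith
  have hu : p0.1 ≠ 0 := by
    intro h
    have h5 := hx0 ⟨0, hd⟩
    rw [h, inner_zero_left] at h5
    apply hφ0
    rw [← hp0]
    have : p0 = 0 := Prod.ext h h5.symm
    rw [this]
    ext i
    refine Fin.cases ?_ (fun j => ?_) i <;> simp [hypFn]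
  have hn : 0 < ‖p0.1‖⁻¹ := inv_pos.2 (norm_pos_iff.2 hu)
  set c := ‖p0.1‖⁻¹ with hcdef
  have hin : ∀ y, ⟪(c • p0).1, y⟫_ℝ - (c • p0).2 = c * (⟪p0.1, y⟫_ℝ - p0.2) := by
    intro y
    simp [inner_smul_left]
    ring
  have hfn : hypFn (c • p0) = c • φ := by
    rw [← hp0]
    ext i
    refine Fin.cases ?_ (fun j => ?_) i <;> simp [hypFn]
  have hxc : ∀ i, ⟪(c • p0).1, x i⟫_ℝ = (c • p0).2 := fun i => by
    have := hin (x i); rw [hx0 i] at this; linarith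
  refine ⟨c • p0, ⟨?_, fun i => ⟨x i, hxc i, hVP i _ (hx i)⟩, ?_, ?_⟩,
    x, fun i => hVP i _ (hx i), hxc, ?_⟩
  · rw [Prod.smul_fst, norm_smul, Real.norm_of_nonneg hn.le, hcdef]
    exact inv_mul_cancel₀ (norm_pos_iff.2 hu).ne'
  · intro a ha
    rw [hPV a]
    refine convexHull_min ?_ (convex_halfSpace_ge ⟨fun x y => inner_add_right _ x y, fun c x => by
      simp [inner_smul_right]⟩ _)
    intro y hy
    have h5 := h3 a (liftPt y) (Finset.mem_image_of_mem _ hy)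
    rw [← hp0, hypFn_dot, if_pos ha] at h5
    have := hin y
    have h6 : 0 ≤ c * (⟪p0.1, y⟫_ℝ - p0.2) := mul_nonneg hn.le (by linarith)
    simp only [Set.mem_setOf_eq]
    linarith
  · intro b hb
    have hbA : b ∉ A := fun h => Finset.disjoint_left.1 hdis h hb
    rw [hPV b]
    refine convexHull_min ?_ (convex_halfSpace_le ⟨fun x y => inner_add_right _ x y, fun c x => by
      simp [inner_smul_right]⟩ _)
    intro y hy
    have h5 := h3 b (liftPt y) (Finset.mem_image_of_mem _ hy)
    rw [← hp0, hypFn_dot, if_neg hbA] at h5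
    have := hin y
    have h6 : 0 ≤ c * -(⟪p0.1, y⟫_ℝ - p0.2) := mul_nonneg hn.le (by linarith)
    simp only [Set.mem_setOf_eq]
    linarith
  · rw [hfn, orientDet_smul]
    have : (fun i => liftPt (x i)) = q := funext hxq
    rw [this]
    have := mul_pos hn h4
    linarith

lemma tan_neg {d : ℕ} {P : Fin d → Set (EuclideanSpace ℝ (Fin d))} {A B : Finset (Fin d)}
    {p : EuclideanSpace ℝ (Fin d) × ℝ} (h : IsTan P A B p) : IsTan P B A (-p) := by
  obtain ⟨h1, h2, h3, h4⟩ := h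
  refine ⟨by simpa using h1, fun i => ?_, fun a ha x hx => ?_, fun b hb x hx => ?_⟩
  · obtain ⟨x, hx, hx'⟩ := h2 i
    refine ⟨x, ?_, hx'⟩
    simp only [Set.mem_setOf_eq] at hx
    simp [hx]
  · have := h4 a ha hx
    simp only [Set.mem_setOf_eq] at this
    simpa using this
  · have := h3 b hb hx
    simp only [Set.mem_setOf_eq] at this
    simpa using this

lemma or_neg {d : ℕ} {P : Fin d → Set (EuclideanSpace ℝ (Fin d))}
    {p : EuclideanSpace ℝ (Fin d) × ℝ} (h : HasOr P (-1) p) : HasOr P 1 (-p) := by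
  obtain ⟨x, hx, h0, hd⟩ := h
  refine ⟨x, hx, fun i => by simp [h0], ?_⟩
  rw [hypFn_neg, orientDet_neg]
  linarith

lemma tan_partition {d : ℕ} {P : Fin d → Set (EuclideanSpace ℝ (Fin d))} {A A' : Finset (Fin d)}
    (hint : ∀ i, (interior (P i)).Nonempty) {p : EuclideanSpace ℝ (Fin d) × ℝ}
    (h : IsTan P A Aᶜ p) (h' : IsTan P A' A'ᶜ p) : A ⊆ A' := by
  intro i hi
  by_contra hi'
  have h1 := h.2.2.1 i hi
  have h2 := h'.2.2.2 i (by simpa using hi')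
  obtain ⟨x, hx⟩ := hint i
  rw [mem_interior_iff_mem_nhds, Metric.mem_nhds_iff] at hx
  obtain ⟨δ, hδ, hb⟩ := hx
  have hin : ∀ y ∈ P i, ⟪p.1, y⟫_ℝ = p.2 := fun y hy => le_antisymm (h2 hy) (h1 hy)
  have e1 := hin x (hb (Metric.mem_ball_self hδ))
  have e2 := hin (x + (δ / 2) • p.1) (hb (by
    rw [Metric.mem_ball, dist_eq_norm, add_sub_cancel_left, norm_smul, h.1, mul_one,
      Real.norm_of_nonneg (by linarith)]
    linarith))
  rw [inner_add_right, inner_smul_right, real_inner_self_eq_norm_sq, h.1] at e2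
  linarith

/-- For a strongly separated, affinely spanning family of `d` polytopes in `ℝ^d` and each
partition `A ⊔ B = [d]`, there are exactly two oriented tangent hyperplanes separating `A`
from `B`; and if every polytope is full-dimensional, the `2^d` hyperplanes obtained from
all partitions are pairwise distinct as subsets of `ℝ^d`. -/
theorem polytope_tangents_per_partition_and_distinct {d : ℕ}
    (P : Fin d → Set (EuclideanSpace ℝ (Fin d)))
    (hpoly : ∀ i, ∃ V : Finset (EuclideanSpace ℝ (Fin d)),
      V.Nonempty ∧ P i = convexHull ℝ (V : Set _))
    (hspan : affineSpan ℝ (⋃ i, P i) = ⊤)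
    (hsep : StronglySeparated P) :
    (∀ A B : Finset (Fin d), Disjoint A B → A ∪ B = Finset.univ →
      {p : EuclideanSpace ℝ (Fin d) × ℝ | ‖p.1‖ = 1 ∧
          (∀ i : Fin d, ({x | ⟪p.1, x⟫_ℝ = p.2} ∩ P i).Nonempty) ∧
          (∀ a ∈ A, P a ⊆ {x | p.2 ≤ ⟪p.1, x⟫_ℝ}) ∧
          (∀ b ∈ B, P b ⊆ {x | ⟪p.1, x⟫_ℝ ≤ p.2})}.encard = 2) ∧
    ((∀ i, (interior (P i)).Nonempty) →
      {H : Set (EuclideanSpace ℝ (Fin d)) |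
          ∃ (A B : Finset (Fin d)) (u : EuclideanSpace ℝ (Fin d)) (α : ℝ),
            Disjoint A B ∧ A ∪ B = Finset.univ ∧ ‖u‖ = 1 ∧ H = {x | ⟪u, x⟫_ℝ = α} ∧
            (∀ i : Fin d, (H ∩ P i).Nonempty) ∧
            (∀ a ∈ A, P a ⊆ {x | α ≤ ⟪u, x⟫_ℝ}) ∧
            (∀ b ∈ B, P b ⊆ {x | ⟪u, x⟫_ℝ ≤ α})}.encard = 2 ^ d) := by
  classical
  have hd : 0 < d := by
    rcases Nat.eq_zero_or_pos d with h | h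
    · subst h
      exfalso
      have : (⋃ i, P i) = ∅ := by simp
      rw [this, AffineSubspace.span_empty] at hspan
      exact bot_ne_top hspan
    · exact h
  have hconv : ∀ i, Convex ℝ (P i) := fun i => by
    obtain ⟨V, -, h⟩ := hpoly i
    rw [h]; exact convex_convexHull ℝ _
  refine ⟨fun A B hdis hAB => ?_, fun hint => ?_⟩
  · obtain ⟨p, hp, hpo⟩ := tan_exists hd hpoly hconv hsep (one_ne_zero (α := ℝ)) hdis
    obtain ⟨m, hm, hmo⟩ := tan_exists hd hpoly hconv hsep
      (neg_ne_zero.2 (one_ne_zero (α := ℝ))) hdis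
    have hpm : p ≠ m := by
      rintro rfl
      exact or_not_both hconv hsep hpo hmo
    rw [← Set.encard_pair hpm]
    congr 1
    ext z
    constructor
    · intro hz
      rcases or_cases hsep hz.1 hz.2.1 with h | h
      · exact Or.inl (tan_unique hconv hsep hAB hp hz hpo h)
      · exact Or.inr (tan_unique hconv hsep hAB hm hz hmo h)
    · rintro (rfl | rfl)
      · exact hp
      · exact hm
  · choose F hF hFo using fun A : Finset (Fin d) =>
      tan_exists hd hpoly hconv hsep (one_ne_zero (α := ℝ)) (disjoint_compl_right (a := A))
    let G : Finset (Fin d) → Set (EuclideanSpace ℝ (Fin d)) := fun A =>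
      {x | ⟪(F A).1, x⟫_ℝ = (F A).2}
    have hG : Function.Injective G := by
      intro A A' h
      have hFF : F A' = F A := by
        refine or_unique hconv hsep (hF A).1 (hF A').1 (hFo A) (hFo A') ?_
        intro i x hx y hy h1 h2
        have : x ∈ G A' := by rw [← h]; exact h1
        have h3 : ⟪(F A').1, x⟫_ℝ = (F A').2 := this
        rw [h3, sub_self, mul_zero]
      have k := hF A'
      rw [hFF] at k
      exact Finset.Subset.antisymm (tan_partition hint (hF A) k) (tan_partition hint k (hF A))
    have hcard : (G '' Set.univ).encard = 2 ^ d := by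
      rw [hG.injOn.encard_image, Set.encard_univ]
      simp
    rw [← hcard]
    congr 1
    ext H
    constructor
    · rintro ⟨A, B, u, α, hdis, hAB, hu, rfl, ht, hA, hB⟩
      have hc : IsCompl A B := ⟨hdis, codisjoint_iff.2 hAB⟩
      have hBA : B = Aᶜ := hc.compl_eq.symm
      have hAB' : A = Bᶜ := hc.symm.compl_eq.symm
      have hz : IsTan P A B (u, α) := ⟨hu, ht, hA, hB⟩
      rcases or_cases hsep hz.1 hz.2.1 with h | h
      · refine ⟨A, trivial, ?_⟩
        rw [hBA] at hz
        have := tan_unique hconv hsep (by simp) hz (hF A) h (hFo A)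
        simp only [G, this]
      · refine ⟨B, trivial, ?_⟩
        have hz' := tan_neg hz
        rw [hAB'] at hz'
        have := tan_unique hconv hsep (by simp) hz' (hF B) (or_neg h) (hFo B)
        simp only [G, this]
        ext x
        simp
    · rintro ⟨A, -, rfl⟩
      exact ⟨A, Aᶜ, (F A).1, (F A).2, disjoint_compl_right, by simp, (hF A).1, rfl,
        (hF A).2.1, (hF A).2.2.1, (hF A).2.2.2⟩
end

section
/- Let P₁,…,P_d be a strongly separated family of polytopes in ℝ^d whose union is affinely spanning (the affine span of P₁ ∪ ⋯ ∪ P_d is all of ℝ^d). Then there exist two distinct affine hyperplanes, given by pairs (u₁,α₁) and (u₂,α₂) with {x : ⟨u₁,x⟩ = α₁} ≠ {x : ⟨u₂,x⟩ = α₂}, each of which is tangent to every Pᵢ and contains every Pᵢ in its closed nonnegative side: for j = 1,2 and every i, H_{uⱼ,αⱼ} ∩ Pᵢ ≠ ∅ and Pᵢ ⊆ {x : ⟨uⱼ,x⟩ ≥ αⱼ}. -/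
open scoped InnerProductSpace

namespace TwoTangents

section
variable {ι : Type} [Fintype ι] [DecidableEq ι]

/-- The square matrix with rows `y i` and last row `w`. -/
def bm (y : ι → (ι ⊕ Unit → ℝ)) (w : ι ⊕ Unit → ℝ) : Matrix (ι ⊕ Unit) (ι ⊕ Unit) ℝ :=
  Matrix.of (Sum.elim y (fun _ => w))

lemma det_bm_ne (y : ι → (ι ⊕ Unit → ℝ)) (w : ι ⊕ Unit → ℝ) (hw : w ≠ 0)
    (horth : ∀ i, w ⬝ᵥ y i = 0)
    (hind : ∀ c : ι → ℝ, ∑ i, c i • y i = 0 → c = 0) : (bm y w).det ≠ 0 := by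
  intro h
  obtain ⟨v, hv, hv0⟩ := Matrix.exists_vecMul_eq_zero_iff.2 h
  have hsum : ∑ i, v (Sum.inl i) • y i + v (Sum.inr ()) • w = 0 := by
    ext k
    have := congrFun hv0 k
    simp [Matrix.vecMul, dotProduct, bm] at this
    simp [Finset.sum_apply, this]
  have hww : w ⬝ᵥ w ≠ 0 := by
    intro h0
    exact hw (dotProduct_self_eq_zero.1 h0)
  have hlast : v (Sum.inr ()) = 0 := by
    have := congrArg (fun z => w ⬝ᵥ z) hsum
    simp only [dotProduct_add, dotProduct_sum, dotProduct_smul, horth, dotProduct_zero,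
      smul_eq_mul, mul_zero, Finset.sum_const_zero, zero_add] at this
    exact (mul_eq_zero.1 this).resolve_right hww
  rw [hlast, zero_smul, add_zero] at hsum
  have hc := hind (fun i => v (Sum.inl i)) hsum
  apply hv
  ext k
  rcases k with i | ⟨⟩
  · exact congrFun hc i
  · exact hlast

lemma det_bm_neg (y : ι → (ι ⊕ Unit → ℝ)) (w : ι ⊕ Unit → ℝ) :
    (bm y (-w)).det = - (bm y w).det := by
  have h : bm y (-w) = (bm y w).updateRow (Sum.inr ()) ((-1 : ℝ) • w) := by
    ext a b
    rcases a with i | ⟨⟩ <;> simp [bm, Matrix.updateRow_apply]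
  have h2 : (bm y w).updateRow (Sum.inr ()) w = bm y w := by
    ext a b
    rcases a with i | ⟨⟩ <;> simp [bm, Matrix.updateRow_apply]
  rw [h, Matrix.det_updateRow_smul, h2]
  simp

/-- Homotopy invariance of the sign. -/
lemma path_sign (K : ι → Set (ι ⊕ Unit → ℝ))
    (hind : ∀ y : ι → (ι ⊕ Unit → ℝ), (∀ i, y i ∈ K i) →
      ∀ c : ι → ℝ, ∑ i, c i • y i = 0 → c = 0)
    (D : ℝ → (ι ⊕ Unit → ℝ)) (y : ℝ → ι → (ι ⊕ Unit → ℝ))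
    (hD : Continuous D) (hy : Continuous y)
    (hD0 : ∀ t, 0 ≤ t → t ≤ 1 → D t ≠ 0)
    (hyK : ∀ t, 0 ≤ t → t ≤ 1 → ∀ i, y t i ∈ K i)
    (horth : ∀ t, 0 ≤ t → t ≤ 1 → ∀ i, D t ⬝ᵥ y t i = 0)
    (ε : ℝ) (h0 : 0 < ε * (bm (y 0) (D 0)).det) : 0 < ε * (bm (y 1) (D 1)).det := by
  have hε : ε ≠ 0 := by rintro rfl; simp at h0
  by_contra hcon
  push Not at hcon
  have hcont : Continuous (fun t => ε * (bm (y t) (D t)).det) := by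
    refine continuous_const.mul (Continuous.matrix_det ?_)
    refine continuous_matrix ?_
    intro a b
    rcases a with i | ⟨⟩
    · simp only [bm, Matrix.of_apply, Sum.elim_inl]; fun_prop
    · simp only [bm, Matrix.of_apply, Sum.elim_inr]; fun_prop
  have := intermediate_value_Icc' (zero_le_one (α := ℝ)) hcont.continuousOn
  obtain ⟨t, ⟨ht0, ht1⟩, ht⟩ := this ⟨hcon, h0.le⟩
  have hne := det_bm_ne (y t) (D t) (hD0 t ht0 ht1) (horth t ht0 ht1) (hind _ (hyK t ht0 ht1))
  exact (mul_ne_zero hε hne) ht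

lemma same_sign (K : ι → Set (ι ⊕ Unit → ℝ))
    (hK : ∀ i, ∀ x ∈ K i, ∀ y ∈ K i, ∀ a b : ℝ, 0 ≤ a → 0 ≤ b → 0 < a + b →
      a • x + b • y ∈ K i)
    (hind : ∀ y : ι → (ι ⊕ Unit → ℝ), (∀ i, y i ∈ K i) →
      ∀ c : ι → ℝ, ∑ i, c i • y i = 0 → c = 0)
    (w : ι ⊕ Unit → ℝ) (hw : w ≠ 0) (x y : ι → (ι ⊕ Unit → ℝ))
    (hx : ∀ i, x i ∈ K i) (hy : ∀ i, y i ∈ K i)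
    (hwx : ∀ i, w ⬝ᵥ x i = 0) (hwy : ∀ i, w ⬝ᵥ y i = 0)
    (ε : ℝ) (h0 : 0 < ε * (bm x w).det) : 0 < ε * (bm y w).det := by
  have := path_sign K hind (fun _ => w) (fun t i => (1 - t) • x i + t • y i)
    continuous_const (by fun_prop) (fun _ _ _ => hw)
    (fun t h0 h1 i => hK i _ (hx i) _ (hy i) _ _ (by linarith) h0 (by linarith))
    (fun t _ _ i => by simp [dotProduct_add, dotProduct_smul, hwx, hwy]) ε (by simpa using h0)
  simpa using this

lemma contra (K : ι → Set (ι ⊕ Unit → ℝ))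
    (hK : ∀ i, ∀ x ∈ K i, ∀ y ∈ K i, ∀ a b : ℝ, 0 ≤ a → 0 ≤ b → 0 < a + b →
      a • x + b • y ∈ K i)
    (hind : ∀ y : ι → (ι ⊕ Unit → ℝ), (∀ i, y i ∈ K i) →
      ∀ c : ι → ℝ, ∑ i, c i • y i = 0 → c = 0)
    (w w' : ι ⊕ Unit → ℝ) (x x' : ι → (ι ⊕ Unit → ℝ))
    (hx : ∀ i, x i ∈ K i) (hx' : ∀ i, x' i ∈ K i)
    (hwx : ∀ i, w ⬝ᵥ x i = 0) (hwx' : ∀ i, w' ⬝ᵥ x' i = 0)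
    (i₀ : ι) (hp : ∀ j, j ≠ i₀ → 0 ≤ w' ⬝ᵥ x j) (hq : ∀ j, j ≠ i₀ → 0 ≤ w ⬝ᵥ x' j)
    (hp0 : w' ⬝ᵥ x i₀ < 0) (hq0 : w ⬝ᵥ x' i₀ < 0)
    (ε : ℝ) (h1 : 0 < ε * (bm x w).det) (h2 : 0 < ε * (bm x' w').det) : False := by
  classical
  have hw : w ≠ 0 := by rintro rfl; simp at hq0
  have hw' : w' ≠ 0 := by rintro rfl; simp at hp0
  -- the path
  let D : ℝ → (ι ⊕ Unit → ℝ) := fun t => (1 - t) • w - t • w'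
  let y : ℝ → ι → (ι ⊕ Unit → ℝ) := fun t j =>
    if w ⬝ᵥ x' j = 0 then x' j else if w' ⬝ᵥ x j = 0 then x j else
      ((1 - t) * |w ⬝ᵥ x' j|) • x j + (t * |w' ⬝ᵥ x j|) • x' j
  have hDc : Continuous D := by fun_prop
  have hyc : Continuous y := by
    refine continuous_pi fun j => ?_
    simp only [y]
    split_ifs <;> fun_prop
  have hD0 : ∀ t, 0 ≤ t → t ≤ 1 → D t ≠ 0 := by
    intro t ht0 ht1 h
    have e1 := congrArg (fun z => z ⬝ᵥ x i₀) h
    have e2 := congrArg (fun z => z ⬝ᵥ x' i₀) h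
    simp only [D, sub_dotProduct, smul_dotProduct, hwx, hwx', smul_eq_mul, zero_dotProduct,
      mul_zero, zero_sub, sub_zero, neg_eq_zero, mul_eq_zero] at e1 e2
    have a1 := e1.resolve_right hp0.ne
    have a2 := e2.resolve_right hq0.ne
    linarith
  have hyK : ∀ t, 0 ≤ t → t ≤ 1 → ∀ i, y t i ∈ K i := by
    intro t ht0 ht1 i
    simp only [y]
    split_ifs with c1 c2
    · exact hx' i
    · exact hx i
    · have b1 : 0 < |w ⬝ᵥ x' i| := abs_pos.2 c1
      have b2 : 0 < |w' ⬝ᵥ x i| := abs_pos.2 c2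
      refine hK i _ (hx i) _ (hx' i) _ _ (mul_nonneg (by linarith) b1.le)
        (mul_nonneg ht0 b2.le) ?_
      rcases ht0.eq_or_lt with h | h
      · subst h; simpa using c1
      · have := mul_pos h b2
        have := mul_nonneg (sub_nonneg.2 ht1) b1.le
        linarith
  have horth : ∀ t, 0 ≤ t → t ≤ 1 → ∀ i, D t ⬝ᵥ y t i = 0 := by
    intro t ht0 ht1 i
    simp only [y, D]
    split_ifs with c1 c2
    · simp [sub_dotProduct, c1, hwx']
    · simp [sub_dotProduct, c2, hwx]
    · simp only [sub_dotProduct, smul_dotProduct, dotProduct_add, dotProduct_smul, hwx, hwx',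
        smul_eq_mul]
      by_cases hi : i = i₀
      · subst hi
        rw [abs_of_neg hp0, abs_of_neg hq0]; ring
      · rw [abs_of_nonneg (hp i hi), abs_of_nonneg (hq i hi)]; ring
  have D0 : D 0 = w := by simp [D]
  have D1 : D 1 = -w' := by simp [D]
  have s0 : 0 < ε * (bm (y 0) (D 0)).det := by
    rw [D0]
    refine same_sign K hK hind w hw x (y 0) hx (hyK 0 le_rfl zero_le_one) hwx ?_ ε h1
    intro i
    have := horth 0 le_rfl zero_le_one i
    rwa [D0] at this
  have s1 := path_sign K hind D y hDc hyc hD0 hyK horth ε s0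
  rw [D1] at s1
  have s2 := same_sign K hK hind (-w') (neg_ne_zero.2 hw') (y 1) x' (hyK 1 zero_le_one le_rfl) hx'
    (by
      intro i
      have := horth 1 zero_le_one le_rfl i
      rwa [D1] at this) (by intro i; simp [hwx']) ε s1
  rw [det_bm_neg] at s2
  linarith

lemma exists_sink (K : ι → Set (ι ⊕ Unit → ℝ))
    (hK : ∀ i, ∀ x ∈ K i, ∀ y ∈ K i, ∀ a b : ℝ, 0 ≤ a → 0 ≤ b → 0 < a + b →
      a • x + b • y ∈ K i)
    (hind : ∀ y : ι → (ι ⊕ Unit → ℝ), (∀ i, y i ∈ K i) →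
      ∀ c : ι → ℝ, ∑ i, c i • y i = 0 → c = 0)
    (ε : ℝ) (hε : ε ≠ 0) (n : ℕ) :
    ∀ V : ι → Finset (ι ⊕ Unit → ℝ), (∑ i, (V i).card ≤ n) → (∀ i, (V i).Nonempty) →
      (∀ i, ∀ v ∈ V i, v ∈ K i) →
      ∃ (w : ι ⊕ Unit → ℝ) (x : ι → (ι ⊕ Unit → ℝ)), w ≠ 0 ∧ (∀ i, x i ∈ V i) ∧
        (∀ i, w ⬝ᵥ x i = 0) ∧ (∀ i, ∀ v ∈ V i, 0 ≤ w ⬝ᵥ v) ∧ 0 < ε * (bm x w).det := by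
  classical
  induction n with
  | zero =>
    intro V hn hne hVK
    have hem : IsEmpty ι := by
      refine ⟨fun i => ?_⟩
      have h1 := (hne i).card_pos
      have h2 := Finset.single_le_sum (f := fun i => (V i).card) (fun _ _ => Nat.zero_le _)
        (Finset.mem_univ i)
      omega
    have hd := det_bm_ne (ι := ι) (fun i => hem.elim i) (fun _ => (1 : ℝ))
      (fun h => by simpa using congrFun h (Sum.inr ())) (fun i => hem.elim i)
      (fun c _ => funext fun i => hem.elim i)
    rcases lt_or_gt_of_ne (mul_ne_zero hε hd) with h | h
    · refine ⟨-(fun _ => (1 : ℝ)), fun i => hem.elim i,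
        fun h => by simpa using congrFun h (Sum.inr ()), fun i => hem.elim i,
        fun i => hem.elim i, fun i => hem.elim i, ?_⟩
      rw [det_bm_neg]; linarith
    · exact ⟨(fun _ => (1 : ℝ)), fun i => hem.elim i,
        fun h => by simpa using congrFun h (Sum.inr ()), fun i => hem.elim i,
        fun i => hem.elim i, fun i => hem.elim i, h⟩
  | succ n ih =>
    intro V hn hne hVK
    by_cases hbig : ∃ i, 1 < (V i).card
    · obtain ⟨i₀, hi₀⟩ := hbig
      obtain ⟨v, hv⟩ := hne i₀
      have key : ∀ S : Finset (ι ⊕ Unit → ℝ), S ⊆ V i₀ → S.Nonempty → S.card < (V i₀).card →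
          ∃ (w : ι ⊕ Unit → ℝ) (x : ι → (ι ⊕ Unit → ℝ)), w ≠ 0 ∧ (∀ i, x i ∈ V i) ∧
            x i₀ ∈ S ∧ (∀ i, w ⬝ᵥ x i = 0) ∧ (∀ i, i ≠ i₀ → ∀ v ∈ V i, 0 ≤ w ⬝ᵥ v) ∧
            (∀ v ∈ S, 0 ≤ w ⬝ᵥ v) ∧ 0 < ε * (bm x w).det := by
        intro S hS hSne hcard
        have hsub : ∀ i, Function.update V i₀ S i ⊆ V i := by
          intro i
          by_cases h : i = i₀
          · subst h; simpa using hS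
          · simp [h]
        have hlt : ∑ i, (Function.update V i₀ S i).card < ∑ i, (V i).card := by
          refine Finset.sum_lt_sum (fun i _ => Finset.card_le_card (hsub i))
            ⟨i₀, Finset.mem_univ _, by simpa using hcard⟩
        obtain ⟨w, x, h1, h2, h3, h4, h5⟩ := ih (Function.update V i₀ S) (by omega)
          (by
            intro i
            by_cases h : i = i₀
            · subst h; simpa using hSne
            · simpa [h] using hne i)
          (fun i v hv => hVK i v (hsub i hv))
        refine ⟨w, x, h1, fun i => hsub i (h2 i), by simpa using h2 i₀, h3, ?_, ?_, h5⟩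
        · intro i hi v hv
          exact h4 i v (by simpa [hi] using hv)
        · intro v hv
          exact h4 i₀ v (by simpa using hv)
      obtain ⟨w, x, hw, hxV, -, hwx, hwV, hwS, hdet⟩ := key ((V i₀).erase v)
        (Finset.erase_subset _ _)
        (by rw [← Finset.card_pos, Finset.card_erase_of_mem hv]; omega)
        (Finset.card_erase_lt_of_mem hv)
      obtain ⟨w', x', hw', hxV', hxv', hwx', hwV', -, hdet'⟩ := key {v} (by simpa using hv)
        (by simp) (by simpa using hi₀)
      rw [Finset.mem_singleton] at hxv'
      by_cases c1 : 0 ≤ w ⬝ᵥ v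
      · refine ⟨w, x, hw, hxV, hwx, ?_, hdet⟩
        intro i z hz
        by_cases hi : i = i₀
        · subst hi
          by_cases hzv : z = v
          · rwa [hzv]
          · exact hwS z (Finset.mem_erase.2 ⟨hzv, hz⟩)
        · exact hwV i hi z hz
      by_cases c2 : ∀ a ∈ V i₀, 0 ≤ w' ⬝ᵥ a
      · refine ⟨w', x', hw', hxV', hwx', ?_, hdet'⟩
        intro i z hz
        by_cases hi : i = i₀
        · subst hi; exact c2 z hz
        · exact hwV' i hi z hz
      exfalso
      push Not at c1 c2
      obtain ⟨a, ha, hwa⟩ := c2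
      have hv0 : w' ⬝ᵥ v = 0 := by rw [← hxv']; exact hwx' i₀
      have hav : a ≠ v := by rintro rfl; linarith
      have hwa0 : 0 ≤ w ⬝ᵥ a := hwS a (Finset.mem_erase.2 ⟨hav, ha⟩)
      set b := (w ⬝ᵥ a) • v + (-(w ⬝ᵥ v)) • a with hb
      have hbK : b ∈ K i₀ := hK i₀ _ (hVK _ _ hv) _ (hVK _ _ ha) _ _ hwa0 (by linarith)
        (by linarith)
      have hwb : w ⬝ᵥ b = 0 := by
        simp only [hb, dotProduct_add, dotProduct_smul, smul_eq_mul]; ring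
      have hwb' : w' ⬝ᵥ b < 0 := by
        simp only [hb, dotProduct_add, dotProduct_smul, smul_eq_mul, hv0]
        nlinarith
      have hxK : ∀ i, x i ∈ K i := fun i => hVK i _ (hxV i)
      have hXK : ∀ i, Function.update x i₀ b i ∈ K i := by
        intro i
        by_cases h : i = i₀
        · subst h; simpa using hbK
        · simpa [h] using hxK i
      have hwX : ∀ i, w ⬝ᵥ Function.update x i₀ b i = 0 := by
        intro i
        by_cases h : i = i₀
        · subst h; simpa using hwb
        · simpa [h] using hwx i
      refine contra K hK hind w w' (Function.update x i₀ b) x' hXK (fun i => hVK i _ (hxV' i))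
        hwX hwx' i₀ ?_ ?_ (by simpa using hwb') (by rw [hxv']; exact c1) ε
        (same_sign K hK hind w hw x _ hxK hXK hwx hwX ε hdet) hdet'
      · intro j hj
        simpa [hj] using hwV' j hj _ (hxV j)
      · intro j hj
        exact hwV j hj _ (hxV' j)
    · push Not at hbig
      choose x hx using hne
      have hsing : ∀ i, ∀ v ∈ V i, v = x i := fun i v hv =>
        Finset.card_le_one.1 (hbig i) v hv _ (hx i)
      have hz : (bm x 0).det = 0 :=
        Matrix.det_eq_zero_of_row_eq_zero (Sum.inr ()) (fun j => by simp [bm])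
      obtain ⟨w, hw, hw0⟩ := Matrix.exists_mulVec_eq_zero_iff.2 hz
      have horth : ∀ i, w ⬝ᵥ x i = 0 := by
        intro i
        have := congrFun hw0 (Sum.inl i)
        rw [dotProduct_comm]
        simpa [Matrix.mulVec, bm] using this
      have hd := det_bm_ne x w hw horth (hind x (fun i => hVK i _ (hx i)))
      rcases lt_or_gt_of_ne (mul_ne_zero hε hd) with h | h
      · refine ⟨-w, x, neg_ne_zero.2 hw, hx, by simp [horth], ?_, ?_⟩
        · intro i v hv
          rw [hsing i v hv]; simp [horth]
        · rw [det_bm_neg]; linarith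
      · refine ⟨w, x, hw, hx, horth, ?_, h⟩
        intro i v hv
        rw [hsing i v hv, horth]

end

/-- Homogenization of a point. -/
noncomputable def hom {d : ℕ} (p : EuclideanSpace ℝ (Fin d)) : Fin d ⊕ Unit → ℝ :=
  Sum.elim (fun k => p k) (fun _ => 1)

/-- Homogeneous coordinates of a hyperplane. -/
noncomputable def lin {d : ℕ} (u : EuclideanSpace ℝ (Fin d)) (α : ℝ) : Fin d ⊕ Unit → ℝ :=
  Sum.elim (fun k => u k) (fun _ => -α)

lemma lin_hom {d : ℕ} (u p : EuclideanSpace ℝ (Fin d)) (α : ℝ) :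
    lin u α ⬝ᵥ hom p = ⟪u, p⟫_ℝ - α := by
  simp [lin, hom, dotProduct, PiLp.inner_apply, mul_comm, sub_eq_add_neg]

lemma exists_lin {d : ℕ} (w : Fin d ⊕ Unit → ℝ) : ∃ u α, w = lin (d := d) u α := by
  refine ⟨WithLp.toLp 2 (fun k => w (Sum.inl k)), -w (Sum.inr ()), ?_⟩
  ext k
  rcases k with k | ⟨⟩ <;> simp [lin]

end TwoTangents

/-- For a strongly separated, affinely spanning family of `d` polytopes in `ℝ^d`, there
exist two distinct affine hyperplanes, each tangent to every polytope and containing every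
polytope in its closed nonnegative side. -/
theorem two_sandwiching_tangents_polytopes {d : ℕ}
    (P : Fin d → Set (EuclideanSpace ℝ (Fin d)))
    (hpoly : ∀ i, ∃ V : Finset (EuclideanSpace ℝ (Fin d)),
      V.Nonempty ∧ P i = convexHull ℝ (V : Set _))
    (hspan : affineSpan ℝ (⋃ i, P i) = ⊤)
    (hsep : StronglySeparated P) :
    ∃ (u₁ u₂ : EuclideanSpace ℝ (Fin d)) (α₁ α₂ : ℝ), u₁ ≠ 0 ∧ u₂ ≠ 0 ∧
      {x : EuclideanSpace ℝ (Fin d) | ⟪u₁, x⟫_ℝ = α₁} ≠ {x | ⟪u₂, x⟫_ℝ = α₂} ∧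
      (∀ i : Fin d, ({x | ⟪u₁, x⟫_ℝ = α₁} ∩ P i).Nonempty ∧
        P i ⊆ {x | α₁ ≤ ⟪u₁, x⟫_ℝ}) ∧
      (∀ i : Fin d, ({x | ⟪u₂, x⟫_ℝ = α₂} ∩ P i).Nonempty ∧
        P i ⊆ {x | α₂ ≤ ⟪u₂, x⟫_ℝ}) := by
  classical
  have hne : Nonempty (Fin d) := by
    by_contra h
    rw [not_nonempty_iff] at h
    rw [Set.iUnion_of_empty, AffineSubspace.span_empty] at hspan
    exact bot_ne_top hspan
  choose V hV hPV using hpoly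
  have hVP : ∀ i, ∀ v ∈ V i, v ∈ P i := by
    intro i v hv
    rw [hPV]
    exact subset_convexHull ℝ _ hv
  choose U A hU0 hU1 hU2 using hsep
  let K : Fin d → Set (Fin d ⊕ Unit → ℝ) := fun i =>
    {z | ∀ I : Finset (Fin d), (i ∈ I → TwoTangents.lin (U I) (A I) ⬝ᵥ z < 0) ∧
      (i ∉ I → 0 < TwoTangents.lin (U I) (A I) ⬝ᵥ z)}
  have hK : ∀ i, ∀ x ∈ K i, ∀ y ∈ K i, ∀ a b : ℝ, 0 ≤ a → 0 ≤ b → 0 < a + b →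
      a • x + b • y ∈ K i := by
    intro i x hx y hy a b ha hb hab I
    simp only [dotProduct_add, dotProduct_smul, smul_eq_mul]
    refine ⟨fun hi => ?_, fun hi => ?_⟩
    · have h1 := (hx I).1 hi
      have h2 := (hy I).1 hi
      rcases ha.eq_or_lt with h | h
      · subst h
        have : 0 < b := by linarith
        nlinarith
      · nlinarith
    · have h1 := (hx I).2 hi
      have h2 := (hy I).2 hi
      rcases ha.eq_or_lt with h | h
      · subst h
        have : 0 < b := by linarith
        nlinarith
      · nlinarith
  have hind : ∀ y : Fin d → (Fin d ⊕ Unit → ℝ), (∀ i, y i ∈ K i) →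
      ∀ c : Fin d → ℝ, ∑ i, c i • y i = 0 → c = 0 := by
    intro y hy c hc
    let I : Finset (Fin d) := Finset.univ.filter (fun i => 0 < c i)
    have h := congrArg (fun z => TwoTangents.lin (U I) (A I) ⬝ᵥ z) hc
    simp only [dotProduct_sum, dotProduct_smul, smul_eq_mul, dotProduct_zero] at h
    have hle : ∀ i ∈ Finset.univ, c i * (TwoTangents.lin (U I) (A I) ⬝ᵥ y i) ≤ 0 := by
      intro i _
      by_cases hi : 0 < c i
      · have := (hy i I).1 (by simp [I, hi])
        nlinarith
      · have := (hy i I).2 (by simpa [I] using hi)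
        nlinarith
    have hz := (Finset.sum_eq_zero_iff_of_nonpos hle).1 h
    ext i
    have hzi := hz i (Finset.mem_univ i)
    have hne0 : TwoTangents.lin (U I) (A I) ⬝ᵥ y i ≠ 0 := by
      by_cases hi : i ∈ I
      · exact ((hy i I).1 hi).ne
      · exact ((hy i I).2 hi).ne'
    exact (mul_eq_zero.1 hzi).resolve_right hne0
  let Vh : Fin d → Finset (Fin d ⊕ Unit → ℝ) := fun i => (V i).image TwoTangents.hom
  have hVhK : ∀ i, ∀ v ∈ Vh i, v ∈ K i := by
    intro i v hv I
    obtain ⟨p, hp, rfl⟩ := Finset.mem_image.1 hv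
    rw [TwoTangents.lin_hom]
    refine ⟨fun hi => ?_, fun hi => ?_⟩
    · have := hU1 I i hi p (hVP i p hp)
      linarith
    · have := hU2 I i hi p (hVP i p hp)
      linarith
  have hVhne : ∀ i, (Vh i).Nonempty := fun i => (hV i).image _
  obtain ⟨w₁, x₁, hw₁, hx₁, hwx₁, hwV₁, hdet₁⟩ := TwoTangents.exists_sink K hK hind 1 one_ne_zero
    _ Vh le_rfl hVhne hVhK
  obtain ⟨w₂, x₂, hw₂, hx₂, hwx₂, hwV₂, hdet₂⟩ := TwoTangents.exists_sink K hK hind (-1)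
    (by norm_num) _ Vh le_rfl hVhne hVhK
  have main : ∀ (w : Fin d ⊕ Unit → ℝ) (u : EuclideanSpace ℝ (Fin d)) (α : ℝ),
      w = TwoTangents.lin u α → ∀ x : Fin d → (Fin d ⊕ Unit → ℝ), w ≠ 0 → (∀ i, x i ∈ Vh i) →
      (∀ i, w ⬝ᵥ x i = 0) → (∀ i, ∀ v ∈ Vh i, 0 ≤ w ⬝ᵥ v) →
      u ≠ 0 ∧ (∀ i : Fin d, ({x | ⟪u, x⟫_ℝ = α} ∩ P i).Nonempty ∧
        P i ⊆ {x | α ≤ ⟪u, x⟫_ℝ}) := by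
    intro w u α hwu x hw hx hwx hwV
    refine ⟨?_, ?_⟩
    · rintro rfl
      obtain ⟨i⟩ := hne
      obtain ⟨p, hp, hpx⟩ := Finset.mem_image.1 (hx i)
      have h := hwx i
      rw [← hpx, hwu, TwoTangents.lin_hom, inner_zero_left] at h
      have hα : α = 0 := by linarith
      apply hw
      rw [hwu, hα]
      ext k
      rcases k with k | ⟨⟩ <;> simp [TwoTangents.lin]
    · intro i
      refine ⟨?_, ?_⟩
      · obtain ⟨p, hp, hpx⟩ := Finset.mem_image.1 (hx i)
        have h := hwx i
        rw [← hpx, hwu, TwoTangents.lin_hom] at h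
        exact ⟨p, by simpa using sub_eq_zero.1 h, hVP i p hp⟩
      · rw [hPV]
        refine convexHull_min ?_ ?_
        · intro p hp
          have h := hwV i _ (Finset.mem_image_of_mem _ hp)
          rw [hwu, TwoTangents.lin_hom] at h
          simp only [Set.mem_ofPred_eq]
          linarith
        · exact convex_halfSpace_ge (innerSL ℝ u).toLinearMap.isLinear α
  obtain ⟨u₁, α₁, e₁⟩ := TwoTangents.exists_lin w₁
  obtain ⟨u₂, α₂, e₂⟩ := TwoTangents.exists_lin w₂
  obtain ⟨hu₁, ht₁⟩ := main w₁ u₁ α₁ e₁ x₁ hw₁ hx₁ hwx₁ hwV₁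
  obtain ⟨hu₂, ht₂⟩ := main w₂ u₂ α₂ e₂ x₂ hw₂ hx₂ hwx₂ hwV₂
  refine ⟨u₁, u₂, α₁, α₂, hu₁, hu₂, ?_, ht₁, ht₂⟩
  intro heq
  have hx₁K : ∀ i, x₁ i ∈ K i := fun i => hVhK i _ (hx₁ i)
  have hx₂K : ∀ i, x₂ i ∈ K i := fun i => hVhK i _ (hx₂ i)
  have hwx₂₁ : ∀ i, w₂ ⬝ᵥ x₁ i = 0 := by
    intro i
    obtain ⟨p, hp, hpx⟩ := Finset.mem_image.1 (hx₁ i)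
    have h := hwx₁ i
    rw [← hpx, e₁, TwoTangents.lin_hom] at h
    have hm : p ∈ {x : EuclideanSpace ℝ (Fin d) | ⟪u₁, x⟫_ℝ = α₁} := sub_eq_zero.1 h
    rw [heq] at hm
    rw [← hpx, e₂, TwoTangents.lin_hom]
    exact sub_eq_zero.2 hm
  have hs₂ := TwoTangents.same_sign K hK hind w₂ hw₂ x₂ x₁ hx₂K hx₁K hwx₂ hwx₂₁ _ hdet₂
  by_cases hD : ∀ t : ℝ, 0 ≤ t → t ≤ 1 → (1 - t) • w₁ + t • w₂ ≠ 0
  · have := TwoTangents.path_sign K hind (fun t => (1 - t) • w₁ + t • w₂) (fun _ => x₁)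
      (by fun_prop) continuous_const hD (fun _ _ _ => hx₁K)
      (fun t _ _ i => by simp [add_dotProduct, hwx₁, hwx₂₁]) 1 (by simpa using hdet₁)
    simp only [sub_self, zero_smul, one_smul, zero_add] at this
    linarith
  · push Not at hD
    obtain ⟨t, ht0, ht1, ht⟩ := hD
    have ht1' : t < 1 := by
      refine lt_of_le_of_ne ht1 ?_
      rintro rfl
      simp at ht
      exact hw₂ ht
    have hV0 : ∀ i, ∀ p ∈ V i, ⟪u₁, p⟫_ℝ = α₁ := by
      intro i p hp
      have h1 := hwV₁ i _ (Finset.mem_image_of_mem _ hp)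
      have h2 := hwV₂ i _ (Finset.mem_image_of_mem _ hp)
      have h3 := congrArg (fun z => z ⬝ᵥ TwoTangents.hom p) ht
      simp only [add_dotProduct, smul_dotProduct, smul_eq_mul, zero_dotProduct] at h3
      have h4 : w₁ ⬝ᵥ TwoTangents.hom p = 0 := by
        have := mul_nonneg ht0 h2
        by_contra hcon
        have := mul_pos (sub_pos.2 ht1') (lt_of_le_of_ne h1 (Ne.symm hcon))
        linarith
      rw [e₁, TwoTangents.lin_hom] at h4
      linarith
    let Q : AffineSubspace ℝ (EuclideanSpace ℝ (Fin d)) :=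
      { carrier := {x | ⟪u₁, x⟫_ℝ = α₁}
        smul_vsub_vadd_mem' := by
          intro c p q r hp hq hr
          simp only [Set.mem_ofPred_eq] at hp hq hr ⊢
          simp [inner_add_right, inner_smul_right, inner_sub_right, hp, hq, hr] }
    have hQ : affineSpan ℝ (⋃ i, P i) ≤ Q := by
      rw [affineSpan_le]
      refine Set.iUnion_subset fun i => ?_
      rw [hPV]
      exact convexHull_min (fun p hp => hV0 i p hp) Q.convex
    rw [hspan] at hQ
    have m0 : ⟪u₁, (0 : EuclideanSpace ℝ (Fin d))⟫_ℝ = α₁ :=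
      hQ (AffineSubspace.mem_top ℝ _ (0 : EuclideanSpace ℝ (Fin d)))
    have m1 : ⟪u₁, u₁⟫_ℝ = α₁ := hQ (AffineSubspace.mem_top ℝ _ u₁)
    rw [inner_zero_right] at m0
    rw [← m0] at m1
    exact hu₁ (inner_self_eq_zero.1 m1)
end
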